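/- arXiv:1208.1037 — 2 statements merged into one kernel-verified Lean document; each statement's English description precedes it below -/
import Mathlib

section
/- Let K be a Hopf subalgebra of H and let C = kg for a grouplike element g ∈ G(H). Then the conjugate Hopf subalgebra {}^C K equals gKg^{-1}. -/
open TensorProduct

namespace MackeyPaper

noncomputable section

universe v

variable (k : Type) [Field k] [CharZero k] [IsAlgClosed k]
variable (H : Type) [Ring H] [HopfAlgebra k H]

/-- A subcoalgebra of `H`: a `k`-subspace `C` with `Δ(C) ⊆ C ⊗ C`. -/
def IsSubcoalgebra (C : Submodule k H) : Prop :=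
  ∀ c ∈ C, Coalgebra.comul (R := k) c ∈
    LinearMap.range (TensorProduct.map C.subtype C.subtype)

/-- A simple (nonzero, minimal) subcoalgebra of `H`. -/
def IsSimpleSubcoalgebra (C : Submodule k H) : Prop :=
  IsSubcoalgebra k H C ∧ C ≠ ⊥ ∧
    ∀ D : Submodule k H, D ≤ C → IsSubcoalgebra k H D → D ≠ ⊥ → D = C

/-- A Hopf subalgebra of `H`: a subalgebra which is a subcoalgebra and is
stable under the antipode. -/
def IsHopfSubalgebra (K : Subalgebra k H) : Prop :=
  IsSubcoalgebra k H K.toSubmodule ∧ ∀ x ∈ K, HopfAlgebra.antipode (R := k) x ∈ K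

/-- `Λ` is the (two-sided) idempotent integral of the Hopf subalgebra `K`,
i.e. the integral normalized by `ε(Λ) = 1`. -/
def IsIdempotentIntegral (K : Subalgebra k H) (Λ : H) : Prop :=
  Λ ∈ K ∧ Coalgebra.counit (R := k) Λ = 1 ∧
    ∀ x ∈ K, x * Λ = Coalgebra.counit (R := k) x • Λ ∧
      Λ * x = Coalgebra.counit (R := k) x • Λ

/-- A cocommutative element of `H`; the cocommutative elements of `H` form
the character ring `C(H^*)`. -/
def IsCocomm (x : H) : Prop :=
  (TensorProduct.comm k H H) (Coalgebra.comul (R := k) x) = Coalgebra.comul (R := k) x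

/-- The character ring `C(H^*)`, i.e. the space of cocommutative elements of `H`,
as a `k`-subspace of `H`. -/
def charRing : Submodule k H :=
  LinearMap.ker ((TensorProduct.comm k H H).toLinearMap ∘ₗ Coalgebra.comul (R := k)
      - Coalgebra.comul (R := k))

/-- `d` is the irreducible character (of `H^*`) associated to the simple
subcoalgebra `C`: the unique cocommutative element of `C` whose counit is the
positive square root of `dim_k C`. -/
def IsCharacterOf (d : H) (C : Submodule k H) : Prop :=
  d ∈ C ∧ IsCocomm k H d ∧
    Coalgebra.counit (R := k) d = ((Nat.sqrt (Module.finrank k ↥C) : ℕ) : k)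

/-- The right coset `CK` of a subcoalgebra `C`, i.e. the subspace `C·K`. -/
def CKsub (K : Subalgebra k H) (C : Submodule k H) : Submodule k H :=
  C * K.toSubmodule

/-- The conjugate Hopf subalgebra `ᶜK` of `K` by a simple subcoalgebra `C`
(with associated irreducible character `c`): the span of all simple
subcoalgebras of `H` whose irreducible character `d` satisfies
`d·c·Λ_K = ε(d)·c·Λ_K`.  (The condition is stated for all cocommutative
elements of `C` resp. `D`; this is equivalent, since the cocommutative
elements of a simple subcoalgebra are exactly the scalar multiples of its
irreducible character.) -/
def conjK (K : Subalgebra k H) (Λ : H) (C : Submodule k H) : Submodule k H :=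
  sSup {D : Submodule k H | IsSimpleSubcoalgebra k H D ∧
    ∀ d ∈ D, IsCocomm k H d → ∀ c ∈ C, IsCocomm k H c →
      d * (c * Λ) = Coalgebra.counit (R := k) d • (c * Λ)}

/-- A complete irredundant system of representatives (by simple subcoalgebras)
of the double cosets `L\H/K`.  (Taking `L = ⊥` gives a system of
representatives of the right cosets `H/K`.) -/
def IsDoubleCosetReps (L K : Subalgebra k H) {ι : Type} (rep : ι → Submodule k H) : Prop :=
  (∀ i, IsSimpleSubcoalgebra k H (rep i)) ∧
  (∀ i j, L.toSubmodule * rep i * K.toSubmodule = L.toSubmodule * rep j * K.toSubmodule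
      → i = j) ∧
  (∀ C : Submodule k H, IsSimpleSubcoalgebra k H C →
      ∃ i, C ≤ L.toSubmodule * rep i * K.toSubmodule)

section Ind

variable (K : Subalgebra k H) (M : Type v) [AddCommGroup M] [Module k M]
  [Module ↥K M] [IsScalarTower k ↥K M]

/-- The relations defining the induced module `H ⊗_K M` as a quotient of
`H ⊗_k M`: the `H`-submodule generated by the elements `a ⊗ m - 1 ⊗ a·m`
for `a ∈ K` (equivalently, spanned by all `h·a ⊗ m - h ⊗ a·m`). -/
def indRel : Submodule H (H ⊗[k] M) :=
  Submodule.span H {z | ∃ (a : ↥K) (m : M),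
    z = (a : H) ⊗ₜ[k] m - (1 : H) ⊗ₜ[k] (a • m)}

/-- The induced module `M↑_K^H = H ⊗_K M`, a left `H`-module. -/
abbrev Ind := (H ⊗[k] M) ⧸ indRel k H K M

variable (C : Submodule k H)

/-- The underlying space `CK ⊗_k M` of which the conjugate module `ᶜM` is a
quotient. -/
def CKM : Type _ := ↥(CKsub k H K C) ⊗[k] M

instance : AddCommGroup (CKM k H K M C) :=
  inferInstanceAs (AddCommGroup (↥(CKsub k H K C) ⊗[k] M))

instance : Module k (CKM k H K M C) :=
  inferInstanceAs (Module k (↥(CKsub k H K C) ⊗[k] M))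

/-- The pure tensor `x ⊗ m` as an element of `CK ⊗_k M`. -/
def ckmk (x : ↥(CKsub k H K C)) (m : M) : CKM k H K M C := x ⊗ₜ[k] m

/-- The relations defining the conjugate module `ᶜM = CK ⊗_K M` as a quotient
of `CK ⊗_k M`: `x·a ⊗ m - x ⊗ a·m` for `a ∈ K`. -/
def conjRel : Submodule k (CKM k H K M C) :=
  Submodule.span k {z | ∃ (x : ↥(CKsub k H K C)) (a : ↥K) (m : M)
    (hxa : (x : H) * (a : H) ∈ CKsub k H K C),
    z = ckmk k H K M C ⟨(x : H) * (a : H), hxa⟩ m - ckmk k H K M C x (a • m)}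

/-- The conjugate module `ᶜM := CK ⊗_K M`. -/
abbrev ConjM := CKM k H K M C ⧸ conjRel k H K M C

/-- The canonical copy of the conjugate module `ᶜM = CK ⊗_K M` inside
`H ⊗_K M` (the image of `CK ⊗_K M` under multiplication; this is indeed a
copy of `ᶜM` since `H` is a free right `K`-module and `CK` is one of the
coset summands). -/
def conjMsub : Submodule k (Ind k H K M) :=
  Submodule.span k {z | ∃ (x : H) (_ : x ∈ CKsub k H K C) (m : M),
    z = Submodule.Quotient.mk (x ⊗ₜ[k] m)}

end Ind

section Comp

variable (L K : Subalgebra k H) (Λ : H) (C : Submodule k H)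
variable (M : Type v) [AddCommGroup M] [Module k M] [Module ↥K M] [IsScalarTower k ↥K M]

/-- The underlying space `L ⊗_k (CK ⊗_k M)`. -/
def LCM : Type _ := ↥L ⊗[k] CKM k H K M C

instance : AddCommGroup (LCM k H L K C M) :=
  inferInstanceAs (AddCommGroup (↥L ⊗[k] CKM k H K M C))

instance : Module k (LCM k H L K C M) :=
  inferInstanceAs (Module k (↥L ⊗[k] CKM k H K M C))

/-- The pure tensor `l ⊗ w` as an element of `L ⊗_k (CK ⊗_k M)`. -/
def lcmk (l : ↥L) (w : CKM k H K M C) : LCM k H L K C M := l ⊗ₜ[k] w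

/-- The relations defining `L ⊗_{L ∩ ᶜK} ᶜM` as a quotient of
`L ⊗_k (CK ⊗_k M)`: the balancedness relations over `L ∩ ᶜK` (first set),
together with (the image of) the relations defining `ᶜM = CK ⊗_K M`
(second set). -/
def compRel : Submodule k (LCM k H L K C M) :=
  Submodule.span k
    ({z | ∃ (l : ↥L) (a : H) (haL : a ∈ L) (_ : a ∈ conjK k H K Λ C)
        (x : ↥(CKsub k H K C)) (m : M) (hax : a * (x : H) ∈ CKsub k H K C),
        z = lcmk k H L K C M ⟨(l : H) * a, mul_mem l.2 haL⟩ (ckmk k H K M C x m)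
          - lcmk k H L K C M l (ckmk k H K M C ⟨a * (x : H), hax⟩ m)} ∪
     {z | ∃ (l : ↥L) (x : ↥(CKsub k H K C)) (a : ↥K) (m : M)
        (hxa : (x : H) * (a : H) ∈ CKsub k H K C),
        z = lcmk k H L K C M l (ckmk k H K M C ⟨(x : H) * (a : H), hxa⟩ m)
          - lcmk k H L K C M l (ckmk k H K M C x (a • m))})

/-- The module `L ⊗_{L ∩ ᶜK} ᶜM` (a left `L`-module via multiplication on the
first tensor factor). -/
abbrev Comp := LCM k H L K C M ⧸ compRel k H L K Λ C M

end Comp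

open DirectSum

section Mackey

variable (L K : Subalgebra k H) (Λ : H)

/-- The Mackey isomorphism property for the pair `(L, K)` at the `K`-module
`M`: for any system of double coset representatives, the left-multiplication
map `⊕_C L ⊗_{L ∩ ᶜK} ᶜM → M↑_K^H↓_L^H`, `l ⊗ v ↦ l·v`, is an isomorphism of
`L`-modules.  (A `k`-linear map satisfying the displayed formula on the
spanning elements is automatically `L`-equivariant for the evident
`L`-actions, so this property is stated for `k`-linear maps.) -/
def MackeyAt (M : Type v) [AddCommGroup M] [Module k M] [Module ↥K M]
    [IsScalarTower k ↥K M] [Module.Finite k M] : Prop :=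
  ∀ (ι : Type) [DecidableEq ι] (rep : ι → Submodule k H),
    IsDoubleCosetReps k H L K rep →
    ∃ π : (⨁ i : ι, Comp k H L K Λ (rep i) M) →ₗ[k] Ind k H K M,
      Function.Bijective π ∧
      ∀ (i : ι) (l : ↥L) (x : ↥(CKsub k H K (rep i))) (m : M),
        π (DirectSum.of (fun i => Comp k H L K Λ (rep i) M) i
            (Submodule.Quotient.mk (lcmk k H L K (rep i) M l (ckmk k H K M (rep i) x m)))) =
          Submodule.Quotient.mk (((l : H) * (x : H)) ⊗ₜ[k] m)

/-- `(L, K)` is a Mackey pair of Hopf subalgebras of `H` (here `Λ` is the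
idempotent integral of `K`): for every finite-dimensional `K`-module `M` the
left-multiplication homomorphism `π_M` is an isomorphism. -/
def IsMackeyPair : Prop :=
  ∀ (M : Type v) [AddCommGroup M] [Module k M] [Module ↥K M]
    [IsScalarTower k ↥K M] [Module.Finite k M], MackeyAt k H L K Λ M

end Mackey

end

noncomputable section

section Sweedler

open Coalgebra HopfAlgebra LinearMap WithConv

variable {k : Type} [Field k] {H : Type} [Ring H] [HopfAlgebra k H]

/-- The contraction `x ↦ φ(x₁) x₂`. -/
def contractLeft : (H →ₗ[k] k) →ₗ[k] H →ₗ[k] H where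
  toFun φ := TensorProduct.lid k H ∘ₗ φ.rTensor H ∘ₗ comul
  map_add' φ ψ := by ext x; simp [LinearMap.rTensor_add]
  map_smul' c φ := by ext x; simp [LinearMap.rTensor_smul]

/-- The contraction `x ↦ φ(x₂) x₁`. -/
def contractRight : (H →ₗ[k] k) →ₗ[k] H →ₗ[k] H where
  toFun φ := TensorProduct.rid k H ∘ₗ φ.lTensor H ∘ₗ comul
  map_add' φ ψ := by ext x; simp [LinearMap.lTensor_add]
  map_smul' c φ := by ext x; simp [LinearMap.lTensor_smul]

lemma contractLeft_eq_sum {ι : Type*} {x : H} (r : Repr k x ι) (φ : H →ₗ[k] k) :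
    contractLeft φ x = ∑ i ∈ r.index, φ (r.left i) • r.right i := by
  simp [contractLeft, ← r.eq]

lemma contractRight_eq_sum {ι : Type*} {x : H} (r : Repr k x ι) (φ : H →ₗ[k] k) :
    contractRight φ x = ∑ i ∈ r.index, φ (r.right i) • r.left i := by
  simp [contractRight, ← r.eq]

lemma contractLeft_counit (x : H) : contractLeft (counit (R := k)) x = x := by
  simp [contractLeft]

lemma contractRight_counit (x : H) : contractRight (counit (R := k)) x = x := by
  simp [contractRight]

lemma apply_contractRight (φ ψ : H →ₗ[k] k) (x : H) :
    φ (contractRight ψ x) = ψ (contractLeft φ x) := by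
  simp [contractLeft_eq_sum (ℛ k x), contractRight_eq_sum (ℛ k x), mul_comm]

lemma comul_antipode (x : H) :
    comul (R := k) (antipode k x) =
      TensorProduct.map (antipode k) (antipode k) (TensorProduct.comm k H H (comul (R := k) x)) := by
  let i₁ : H →ₐ[k] H ⊗[k] H := Algebra.TensorProduct.includeLeft
  let i₂ : H →ₐ[k] H ⊗[k] H := Algebra.TensorProduct.includeRight
  let G : H →ₗ[k] H ⊗[k] H := TensorProduct.map (antipode k) (antipode k) ∘ₗ
    (TensorProduct.comm k H H).toLinearMap ∘ₗ comul
  have hδ : toConv (comul (R := k) (A := H)) = toConv i₁.toLinearMap * toConv i₂.toLinearMap := by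
    ext x
    rw [(ℛ k x).convMul_apply]
    simp [i₁, i₂, (ℛ k x).eq]
  have hG : toConv G = toConv (i₂.toLinearMap ∘ₗ antipode k) *
      toConv (i₁.toLinearMap ∘ₗ antipode k) := by
    ext x
    rw [(ℛ k x).convMul_apply]
    simp [i₁, i₂, G, ← (ℛ k x).eq]
  have inv (i : H →ₐ[k] H ⊗[k] H) :
      toConv (i.toLinearMap ∘ₗ antipode k) * toConv i.toLinearMap = 1 := by
    ext x
    rw [(ℛ k x).convMul_apply]
    simp only [LinearMap.comp_apply, AlgHom.toLinearMap_apply, ← map_mul, ← map_sum,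
      sum_antipode_mul_eq_algebraMap_counit, AlgHom.commutes, convOne_apply]
  have hinv : toConv G * toConv (comul (R := k) (A := H)) = 1 := by
    rw [hδ, hG, mul_assoc, ← mul_assoc (toConv (i₁.toLinearMap ∘ₗ _)), inv, one_mul, inv]
  have := left_inv_eq_right_inv hinv LinearMap.comul_right_inv
  exact (congrArg (fun F : WithConv (H →ₗ[k] H ⊗[k] H) => F x) this).symm

/-- `x₁ S(x₂) ⊗ x₃ = 1 ⊗ x`. -/
lemma sum_mul_antipode_tmul (x : H) :
    ∑ i ∈ (ℛ k x).index, ∑ j ∈ (ℛ k ((ℛ k x).right i)).index,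
      ((ℛ k x).left i * antipode k ((ℛ k ((ℛ k x).right i)).left j)) ⊗ₜ[k]
        (ℛ k ((ℛ k x).right i)).right j = (1 : H) ⊗ₜ[k] x := by
  have h := sum_tmul_tmul_eq (ℛ k x) (fun i => ℛ k ((ℛ k x).left i))
    (fun i => ℛ k ((ℛ k x).right i))
  have h2 := congrArg (((LinearMap.mul' k H ∘ₗ (antipode k).lTensor H).rTensor H) ∘ₗ
    (TensorProduct.assoc k H H H).symm.toLinearMap) h
  simp only [map_sum, LinearMap.comp_apply, LinearEquiv.coe_coe, TensorProduct.assoc_symm_tmul,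
    LinearMap.rTensor_tmul, LinearMap.lTensor_tmul, LinearMap.mul'_apply] at h2
  rw [← h2]
  simp only [← TensorProduct.sum_tmul, sum_mul_antipode_eq_algebraMap_counit,
    Algebra.algebraMap_eq_smul_one, TensorProduct.smul_tmul, ← TensorProduct.tmul_sum,
    sum_counit_smul]

lemma contractLeft_antipode (φ : H →ₗ[k] k) (x : H) :
    contractLeft φ (antipode k x) = antipode k (contractRight (φ ∘ₗ antipode k) x) := by
  simp [contractLeft, contractRight_eq_sum (ℛ k x), comul_antipode, ← (ℛ k x).eq]

lemma contractRight_antipode (φ : H →ₗ[k] k) (x : H) :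
    contractRight φ (antipode k x) = antipode k (contractLeft (φ ∘ₗ antipode k) x) := by
  simp [contractRight, contractLeft_eq_sum (ℛ k x), comul_antipode, ← (ℛ k x).eq]

lemma contractLeft_mul (φ : H →ₗ[k] k) (x y : H) :
    contractLeft φ (x * y) = ∑ i ∈ (ℛ k x).index,
      (ℛ k x).right i * contractLeft (φ ∘ₗ mulLeft k ((ℛ k x).left i)) y := by
  simp only [contractLeft_eq_sum (ℛ k y), Finset.mul_sum]
  simp [contractLeft, Bialgebra.comul_mul, ← (ℛ k x).eq, ← (ℛ k y).eq, Finset.sum_mul_sum]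

lemma contractRight_mul (φ : H →ₗ[k] k) (x y : H) :
    contractRight φ (x * y) = ∑ i ∈ (ℛ k x).index,
      (ℛ k x).left i * contractRight (φ ∘ₗ mulLeft k ((ℛ k x).right i)) y := by
  simp only [contractRight_eq_sum (ℛ k y), Finset.mul_sum]
  simp [contractRight, Bialgebra.comul_mul, ← (ℛ k x).eq, ← (ℛ k y).eq, Finset.sum_mul_sum]

lemma contractLeft_mul' (φ : H →ₗ[k] k) (x y : H) :
    contractLeft φ (x * y) = ∑ i ∈ (ℛ k y).index,
      contractLeft (φ ∘ₗ mulRight k ((ℛ k y).left i)) x * (ℛ k y).right i := by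
  simp only [contractLeft_eq_sum (ℛ k x), Finset.sum_mul]
  rw [Finset.sum_comm]
  simp [contractLeft, Bialgebra.comul_mul, ← (ℛ k x).eq, ← (ℛ k y).eq, Finset.sum_mul_sum]

end Sweedler

section Integrals

open Coalgebra HopfAlgebra LinearMap WithConv

variable {k : Type} [Field k] {H : Type} [Ring H] [HopfAlgebra k H]

/-- `lam` is a left integral of `H^*`: `h₁ lam(h₂) = lam(h) 1`. -/
def IsLeftIntegral (lam : H →ₗ[k] k) : Prop :=
  ∀ h, contractRight lam h = lam h • 1

/-- The functional `h ↦ Tr(x ↦ h S²(x))`. -/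
def antipodeTrace : H →ₗ[k] k :=
  LinearMap.trace k H ∘ₗ LinearMap.lcomp k H (antipode k ∘ₗ antipode k) ∘ₗ LinearMap.mul k H

lemma antipodeTrace_apply (h : H) :
    antipodeTrace (k := k) h = LinearMap.trace k H (mulLeft k h ∘ₗ antipode k ∘ₗ antipode k) := rfl

lemma contractLeft_antipode_antipode (φ : H →ₗ[k] k) (x : H) :
    contractLeft φ (antipode k (antipode k x)) =
      antipode k (antipode k (contractLeft (φ ∘ₗ antipode k ∘ₗ antipode k) x)) := by
  rw [contractLeft_antipode, contractRight_antipode]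
  rfl

lemma sum_coord_smul {ι : Type*} [Fintype ι] (b : Module.Basis ι k H) {N : Type*} [AddCommGroup N]
    [Module k N] (Φ : H → N) (hΦ : IsLinearMap k Φ) (u : H) :
    ∑ p, b.coord p u • Φ (b p) = Φ u := by
  conv_rhs => rw [← hΦ.mk'_apply u, ← b.sum_repr u, map_sum]
  simp only [map_smul, IsLinearMap.mk'_apply, Module.Basis.coord_apply]

variable [FiniteDimensional k H]

theorem isLeftIntegral_antipodeTrace : IsLeftIntegral (antipodeTrace (k := k) (H := H)) := by
  intro h
  rw [← sub_eq_zero, ← Module.forall_dual_apply_eq_zero_iff k]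
  intro f
  rw [map_sub, sub_eq_zero, apply_contractRight]
  let b := Module.finBasis k H
  let M : H →ₗ[k] H := mulLeft k h ∘ₗ antipode k ∘ₗ antipode k
  let C₁ : H →ₗ[k] H := ∑ q, ∑ p, f (b p * b q) •
    (contractLeft (b.coord p) ∘ₗ (M ∘ₗ contractLeft (b.coord q ∘ₗ antipode k)))
  let C₂ : H →ₗ[k] H := ∑ p, ∑ q, f (b p * b q) •
    ((M ∘ₗ contractLeft (b.coord q ∘ₗ antipode k)) ∘ₗ contractLeft (b.coord p))
  have htr : LinearMap.trace k H C₁ = LinearMap.trace k H C₂ := by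
    simp only [C₁, C₂, map_sum, map_smul]
    rw [Finset.sum_comm]
    refine Finset.sum_congr rfl fun p _ => Finset.sum_congr rfl fun q _ => ?_
    rw [LinearMap.trace_comp_comm']
  have hC₂ : C₂ = f 1 • M := by
    ext x
    have hJ := congrArg ((TensorProduct.lid k H).toLinearMap ∘ₗ TensorProduct.map f M)
      (sum_mul_antipode_tmul (k := k) x)
    simp only [map_sum, LinearMap.comp_apply, TensorProduct.map_tmul, LinearEquiv.coe_coe,
      TensorProduct.lid_tmul] at hJ
    have hq (p) : ∑ q, f (b p * b q) • (b.coord q ∘ₗ antipode k) =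
        f ∘ₗ mulLeft k (b p) ∘ₗ antipode k := by
      ext v
      rw [LinearMap.comp_apply, LinearMap.comp_apply,
        ← sum_coord_smul b (fun w => f (mulLeft k (b p) w))
          ⟨by simp [mul_add], by simp⟩]
      simp [mul_comm]
    have hp : C₂ x = ∑ p, M (contractLeft (f ∘ₗ mulLeft k (b p) ∘ₗ antipode k)
        (contractLeft (b.coord p) x)) := by
      simp only [C₂, ← hq, map_sum, map_smul, LinearMap.sum_apply, LinearMap.smul_apply,
        LinearMap.comp_apply]
    rw [LinearMap.smul_apply, ← hJ, hp]
    simp only [contractLeft_eq_sum (ℛ k x), map_sum, map_smul]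
    rw [Finset.sum_comm]
    refine Finset.sum_congr rfl fun i _ => ?_
    rw [sum_coord_smul b
      (fun u => M (contractLeft (f ∘ₗ mulLeft k u ∘ₗ antipode k) ((ℛ k x).right i)))]
    · simp [contractLeft_eq_sum (ℛ k ((ℛ k x).right i))]
    · constructor <;> intros <;>
        simp [contractLeft_eq_sum (ℛ k ((ℛ k x).right i)), add_mul, add_smul, mul_smul,
          Finset.sum_add_distrib, Finset.smul_sum]
  have hC₁ : C₁ = mulLeft k (contractLeft f h) ∘ₗ antipode k ∘ₗ antipode k := by
    ext x
    have hp (q) : ∑ p, f (b p * b q) • b.coord p = f ∘ₗ mulRight k (b q) := by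
      ext v
      rw [LinearMap.comp_apply,
        ← sum_coord_smul b (fun w => f (mulRight k (b q) w))
          ⟨by simp [add_mul], by simp⟩]
      simp [mul_comm]
    have hq : C₁ x = ∑ q, contractLeft (f ∘ₗ mulRight k (b q))
        (M (contractLeft (b.coord q ∘ₗ antipode k) x)) := by
      simp only [C₁, ← hp, map_sum, map_smul, LinearMap.sum_apply, LinearMap.smul_apply,
        LinearMap.comp_apply]
    have hi : C₁ x = ∑ i ∈ (ℛ k x).index,
        contractLeft (f ∘ₗ mulRight k (antipode k ((ℛ k x).left i))) (M ((ℛ k x).right i)) := by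
      rw [hq]
      simp only [contractLeft_eq_sum (ℛ k x), map_sum, map_smul]
      rw [Finset.sum_comm]
      refine Finset.sum_congr rfl fun i _ => ?_
      exact sum_coord_smul b
        (fun u => contractLeft (f ∘ₗ mulRight k u) (M ((ℛ k x).right i)))
        (by constructor <;> intros <;>
          simp [contractLeft_eq_sum (ℛ k (M ((ℛ k x).right i))), mul_add, add_smul, mul_smul,
            Finset.sum_add_distrib, Finset.smul_sum]) _
    have hJ (a : H) : ∑ i ∈ (ℛ k x).index,
        contractLeft ((f ∘ₗ mulRight k (antipode k ((ℛ k x).left i))) ∘ₗ mulLeft k a)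
          (antipode k (antipode k ((ℛ k x).right i))) = f a • antipode k (antipode k x) := by
      have hJ := congrArg ((TensorProduct.lid k H).toLinearMap ∘ₗ TensorProduct.map
        (f ∘ₗ mulLeft k a ∘ₗ antipode k) (antipode k ∘ₗ antipode k))
        (sum_mul_antipode_tmul (k := k) x)
      simp only [map_sum, LinearMap.comp_apply, TensorProduct.map_tmul, LinearEquiv.coe_coe,
        TensorProduct.lid_tmul, antipode_one, mulLeft_apply, mul_one] at hJ
      rw [← hJ]
      refine Finset.sum_congr rfl fun i _ => ?_
      rw [contractLeft_antipode_antipode, contractLeft_eq_sum (ℛ k ((ℛ k x).right i))]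
      simp [antipode_mul_antidistrib, mul_assoc]
    rw [hi]
    simp only [M, LinearMap.comp_apply, mulLeft_apply, contractLeft_mul]
    rw [Finset.sum_comm]
    simp only [← Finset.mul_sum, hJ, contractLeft_eq_sum (ℛ k h), Finset.sum_mul, mul_smul_comm,
      smul_mul_assoc]
  rw [antipodeTrace_apply, ← hC₁, htr, hC₂]
  simp [M, antipodeTrace_apply, mul_comm]

end Integrals

section Integrals

open Coalgebra HopfAlgebra LinearMap WithConv

variable {k : Type} [Field k] {H : Type} [Ring H] [HopfAlgebra k H]

lemma IsLeftIntegral.contractRight_mulLeft {lam : H →ₗ[k] k} (hl : IsLeftIntegral lam) (x y : H) :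
    contractRight (lam ∘ₗ mulLeft k x) y =
      antipode k (contractRight (lam ∘ₗ mulRight k y) x) := by
  let P : H →ₗ[k] H := contractRight.flip y ∘ₗ LinearMap.compr₂ (LinearMap.mul k H) lam
  let Q : H →ₗ[k] H := LinearMap.toSpanSingleton k H 1 ∘ₗ lam ∘ₗ mulRight k y
  have hPQ : toConv LinearMap.id * toConv P = toConv Q := by
    ext x
    rw [(ℛ k x).convMul_apply]
    exact (contractRight_mul lam x y).symm.trans (hl _)
  have hP : toConv P = toConv (antipode k) * toConv Q := by
    rw [← hPQ, ← mul_assoc, LinearMap.antipode_mul_id, one_mul]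
  have := congrArg (fun F : WithConv (H →ₗ[k] H) => F x) hP
  dsimp only at this
  rw [(ℛ k x).convMul_apply] at this
  refine Eq.trans this ?_
  simp [contractRight_eq_sum (ℛ k x), Q]

lemma contractLeft_mulRight {lam : H →ₗ[k] k} (hr : ∀ h, contractLeft lam h = lam h • 1) (x y : H) :
    contractLeft (lam ∘ₗ mulRight k y) x =
      antipode k (contractLeft (lam ∘ₗ mulLeft k x) y) := by
  let P : H →ₗ[k] H := contractLeft.flip x ∘ₗ LinearMap.compr₂ (LinearMap.mul k H).flip lam
  let Q : H →ₗ[k] H := LinearMap.toSpanSingleton k H 1 ∘ₗ lam ∘ₗ mulLeft k x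
  have hPQ : toConv P * toConv LinearMap.id = toConv Q := by
    ext y
    rw [(ℛ k y).convMul_apply]
    exact (contractLeft_mul' lam x y).symm.trans (hr _)
  have hP : toConv P = toConv Q * toConv (antipode k) := by
    rw [← hPQ, mul_assoc, LinearMap.id_mul_antipode, mul_one]
  have := congrArg (fun F : WithConv (H →ₗ[k] H) => F y) hP
  dsimp only at this
  rw [(ℛ k y).convMul_apply] at this
  refine Eq.trans this ?_
  simp [contractLeft_eq_sum (ℛ k y), Q]

lemma contractRight_comp (f φ : H →ₗ[k] k) (x : H) :
    contractRight (f ∘ₗ contractLeft φ) x = contractRight φ (contractRight f x) := by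
  have h := congrArg ((TensorProduct.rid k H).toLinearMap ∘ₗ
    ((TensorProduct.lid k k).toLinearMap ∘ₗ TensorProduct.map φ f).lTensor H)
    (sum_tmul_tmul_eq (ℛ k x) (fun i => ℛ k ((ℛ k x).left i)) (fun i => ℛ k ((ℛ k x).right i)))
  simp only [map_sum, LinearMap.comp_apply, LinearEquiv.coe_coe, TensorProduct.map_tmul,
    LinearMap.lTensor_tmul, TensorProduct.lid_tmul, TensorProduct.rid_tmul] at h
  simp only [contractRight_eq_sum (ℛ k x), map_sum, map_smul, LinearMap.comp_apply,
    contractRight_eq_sum (ℛ k ((ℛ k x).left _)), contractLeft_eq_sum (ℛ k ((ℛ k x).right _)),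
    Finset.smul_sum, Finset.sum_smul, smul_smul]
  simp only [smul_eq_mul] at h ⊢
  rw [← h]
  simp only [mul_comm]

lemma contractLeft_comp (f φ : H →ₗ[k] k) (x : H) :
    contractLeft (f ∘ₗ contractLeft φ) x = contractLeft f (contractLeft φ x) := by
  rw [← sub_eq_zero, ← Module.forall_dual_apply_eq_zero_iff k]
  intro g
  rw [map_sub, sub_eq_zero]
  calc g (contractLeft (f ∘ₗ contractLeft φ) x)
      = f (contractLeft φ (contractRight g x)) := (apply_contractRight _ _ _).symm
    _ = φ (contractRight f (contractRight g x)) := (apply_contractRight φ f _).symm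
    _ = φ (contractRight (g ∘ₗ contractLeft f) x) := by rw [contractRight_comp]
    _ = g (contractLeft f (contractLeft φ x)) := apply_contractRight φ (g ∘ₗ contractLeft f) x

lemma eq_of_forall_rTensor [FiniteDimensional k H] {s t : H ⊗[k] H}
    (h : ∀ φ : H →ₗ[k] k, TensorProduct.lid k H (φ.rTensor H s) =
      TensorProduct.lid k H (φ.rTensor H t)) : s = t := by
  let b := Module.finBasis k H
  have key (u : H ⊗[k] H) :
      u = ∑ i, b i ⊗ₜ[k] TensorProduct.lid k H ((b.coord i).rTensor H u) := by
    induction u with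
    | zero => simp
    | add u v hu hv =>
      conv_lhs => rw [hu, hv]
      simp [TensorProduct.tmul_add, Finset.sum_add_distrib]
    | tmul x y =>
      simp only [LinearMap.rTensor_tmul, TensorProduct.lid_tmul, ← TensorProduct.smul_tmul,
        ← TensorProduct.sum_tmul, Module.Basis.coord_apply, b.sum_repr]
  rw [key s, key t]
  simp only [h]

section NormalizedIntegral

variable [FiniteDimensional k H] {L : H}

lemma antipodeTrace_integral (hL : ∀ x, L * x = counit (R := k) x • L)
    (hε : counit (R := k) L = 1) : antipodeTrace (k := k) L = 1 := by
  have : mulLeft k L ∘ₗ antipode k ∘ₗ antipode k = (counit (R := k)).smulRight L := by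
    ext x
    simp [hL]
  rw [antipodeTrace_apply, this]
  simp [hε]

lemma antipodeTrace_mul (a b : H) :
    antipodeTrace (k := k) (a * b) = antipodeTrace (k := k) (b * antipode k (antipode k a)) := by
  rw [antipodeTrace_apply, mulLeft_mul, LinearMap.comp_assoc, LinearMap.trace_comp_comm',
    antipodeTrace_apply]
  congr 1
  ext x
  simp [antipode_mul_antidistrib]

lemma antipode_contractRight (hL : ∀ x, L * x = counit (R := k) x • L)
    (hε : counit (R := k) L = 1) (y : H) :
    antipode k (contractRight (antipodeTrace (k := k) ∘ₗ mulRight k y) L) = y := by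
  rw [← isLeftIntegral_antipodeTrace.contractRight_mulLeft]
  have : antipodeTrace (k := k) ∘ₗ mulLeft k L = counit := by
    ext x
    simp [hL, antipodeTrace_integral hL hε]
  rw [this, contractRight_counit]

lemma antipode_bijective (hL : ∀ x, L * x = counit (R := k) x • L)
    (hε : counit (R := k) L = 1) : Function.Bijective (antipode k (A := H)) := by
  have : Function.Surjective (antipode k (A := H)) :=
    fun y => ⟨_, antipode_contractRight hL hε y⟩
  exact ⟨LinearMap.injective_iff_surjective.mpr this, this⟩

lemma eq_zero_of_antipodeTrace_mul (hL : ∀ x, L * x = counit (R := k) x • L)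
    (hε : counit (R := k) L = 1) {y : H} (hy : ∀ x, antipodeTrace (k := k) (x * y) = 0) :
    y = 0 := by
  rw [← antipode_contractRight hL hε y]
  have : antipodeTrace (k := k) ∘ₗ mulRight k y = 0 := by
    ext x
    simp [hy]
  simp [this]

lemma contractLeft_surjective (hL : ∀ x, L * x = counit (R := k) x • L)
    (hε : counit (R := k) L = 1) :
    Function.Surjective (fun φ : H →ₗ[k] k => contractLeft φ L) := by
  have hfr : Module.finrank k (H →ₗ[k] k) = Module.finrank k H := Subspace.dual_finrank_eq
  refine (LinearMap.injective_iff_surjective_of_finrank_eq_finrank hfr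
    (f := contractLeft.flip L)).mp ?_
  rw [injective_iff_map_eq_zero]
  intro φ hφ
  replace hφ : contractLeft φ L = 0 := hφ
  ext z
  have hz : contractRight (antipodeTrace (k := k) ∘ₗ mulRight k (antipode k z)) L = z :=
    (antipode_bijective hL hε).1 (antipode_contractRight hL hε _)
  rw [← hz, apply_contractRight, hφ]
  simp

lemma IsLeftIntegral.eq_smul (hL : ∀ x, L * x = counit (R := k) x • L)
    (hε : counit (R := k) L = 1) {μ : H →ₗ[k] k} (hμ : IsLeftIntegral μ) :
    μ = μ L • antipodeTrace (k := k) := by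
  ext y
  obtain ⟨φ, rfl⟩ := contractLeft_surjective hL hε y
  have h := isLeftIntegral_antipodeTrace (k := k) L
  rw [antipodeTrace_integral hL hε] at h
  simp only [LinearMap.smul_apply]
  rw [← apply_contractRight, ← apply_contractRight, hμ, h]
  simp

lemma contractLeft_antipodeTrace (hL : ∀ x, L * x = counit (R := k) x • L)
    (hε : counit (R := k) L = 1) (h : H) :
    contractLeft (antipodeTrace (k := k)) h =
      antipodeTrace (k := k) h • contractLeft (antipodeTrace (k := k)) L := by
  rw [← sub_eq_zero, ← Module.forall_dual_apply_eq_zero_iff k]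
  intro f
  have hμ : IsLeftIntegral (f ∘ₗ contractLeft (antipodeTrace (k := k))) := by
    intro x
    rw [contractRight_comp, isLeftIntegral_antipodeTrace, LinearMap.comp_apply, apply_contractRight]
  have := LinearMap.congr_fun (hμ.eq_smul hL hε) h
  simp only [LinearMap.comp_apply, LinearMap.smul_apply, smul_eq_mul] at this
  rw [map_sub, this, map_smul, smul_eq_mul, mul_comm, sub_self]

lemma isGroupLikeElem_contractLeft (hL : ∀ x, L * x = counit (R := k) x • L)
    (hε : counit (R := k) L = 1) :
    IsGroupLikeElem k (contractLeft (antipodeTrace (k := k)) L) where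
  counit_eq_one := by
    rw [← apply_contractRight, contractRight_counit, antipodeTrace_integral hL hε]
  comul_eq_tmul_self := by
    refine eq_of_forall_rTensor fun φ => ?_
    change contractLeft φ (contractLeft _ L) = _
    rw [← contractLeft_comp]
    have : φ ∘ₗ contractLeft (antipodeTrace (k := k)) =
        φ (contractLeft (antipodeTrace (k := k)) L) • antipodeTrace (k := k) := by
      ext h
      rw [LinearMap.comp_apply, contractLeft_antipodeTrace hL hε]
      simp [mul_comm]
    simp [this]

theorem exists_isGroupLikeElem_antipode_pow_four (hL : ∀ x, L * x = counit (R := k) x • L)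
    (hε : counit (R := k) L = 1) :
    ∃ γ : H, IsGroupLikeElem k γ ∧
      ∀ b, b * γ = γ * antipode k (antipode k (antipode k (antipode k b))) := by
  set γ := contractLeft (antipodeTrace (k := k)) L with hγ
  have hg : IsGroupLikeElem k γ := isGroupLikeElem_contractLeft hL hε
  refine ⟨γ, hg, fun b => ?_⟩
  set lam := antipodeTrace (k := k) (H := H) with hlam
  let ρ : H →ₗ[k] k := lam ∘ₗ antipode k
  have hinj := (antipode_bijective (k := k) hL hε).1
  have hρ (h : H) : contractRight ρ h = ρ h • antipode k γ := by
    apply hinj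
    rw [← contractLeft_antipode, contractLeft_antipodeTrace hL hε, map_smul, hg.antipode_antipode]
    rfl
  have hμ : IsLeftIntegral (ρ ∘ₗ mulRight k (antipode k γ)) := by
    intro h
    have h1 : contractRight ρ (h * antipode k γ) =
        contractRight (ρ ∘ₗ mulRight k (antipode k γ)) h * antipode k γ := by
      rw [contractRight_eq_sum (ℛ k h), Finset.sum_mul]
      simp [contractRight, Bialgebra.comul_mul, ← (ℛ k h).eq, hg.antipode.comul_eq_tmul_self,
        Finset.sum_mul]
    have h2 := congrArg (· * γ) (h1.symm.trans (hρ _))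
    simpa [mul_assoc, hg.antipode_mul_cancel] using h2
  obtain ⟨c, hc⟩ : ∃ c : k, ∀ h, ρ h = c * lam (h * γ) := by
    refine ⟨(ρ ∘ₗ mulRight k (antipode k γ)) L, fun h => ?_⟩
    have := LinearMap.congr_fun (hμ.eq_smul hL hε) (h * γ)
    simpa [mul_assoc, hg.mul_antipode_cancel] using this
  have hc0 : c ≠ 0 := by
    rintro rfl
    obtain ⟨z, hz⟩ := (antipode_bijective (k := k) hL hε).2 L
    have := hc z
    simp [ρ, hz, hlam, antipodeTrace_integral hL hε] at this
  have hρmul (a b : H) : ρ (a * b) = ρ (antipode k (antipode k b) * a) := by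
    simp only [ρ, LinearMap.comp_apply, antipode_mul_antidistrib]
    rw [hlam, antipodeTrace_mul]
  rw [← sub_eq_zero]
  refine eq_zero_of_antipodeTrace_mul (k := k) hL hε fun a => ?_
  have h1 := hρmul a b
  rw [hc, hc, mul_assoc _ a γ] at h1
  have h2 := mul_left_cancel₀ hc0 h1
  rw [hlam, antipodeTrace_mul (antipode k (antipode k b))] at h2
  rw [mul_sub, map_sub, sub_eq_zero, ← mul_assoc, h2, mul_assoc]

end NormalizedIntegral

end Integrals

section TraceInverse

variable {F : Type*} [Field F] [CharZero F] [IsAlgClosed F]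

lemma exists_trace_eq_sum_of_pow_eq_one {V : Type*} [AddCommGroup V] [Module F V]
    [FiniteDimensional F V] {f g : Module.End F V} {m : ℕ} (hm : m ≠ 0) (hf : f ^ m = 1)
    (hfg : g * f = 1) :
    ∃ (s : Finset F) (d : F → ℕ), (∀ μ ∈ s, μ ^ m = 1) ∧
      LinearMap.trace F V f = ∑ μ ∈ s, d μ * μ ∧ LinearMap.trace F V g = ∑ μ ∈ s, d μ * μ⁻¹ := by
  classical
  have hss : f.IsSemisimple := by
    refine Module.End.isSemisimple_of_squarefree_aeval_eq_zero (p := Polynomial.X ^ m - 1) ?_ ?_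
    · exact (Polynomial.X_pow_sub_one_separable_iff.mpr (by exact_mod_cast hm)).squarefree
    · simp [hf]
  have hinternal := DirectSum.isInternal_submodule_of_iSupIndep_of_iSup_eq_top
    f.eigenspaces_iSupIndep hss.iSup_eigenspace_eq_top
  have hfin : {μ | f.eigenspace μ ≠ ⊥}.Finite :=
    WellFoundedGT.finite_ne_bot_of_iSupIndep f.eigenspaces_iSupIndep
  have hpow (μ : F) (hμ : f.eigenspace μ ≠ ⊥) : μ ^ m = 1 := by
    obtain ⟨x, hx, hx0⟩ := (Submodule.ne_bot_iff _).mp hμ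
    have h := (Module.End.hasEigenvector_iff.mpr ⟨hx, hx0⟩).pow_apply m
    rw [hf, Module.End.one_apply] at h
    exact smul_left_injective F hx0 (by simpa using h.symm)
  have hfx (μ : F) (x : V) (hx : x ∈ f.eigenspace μ) : f x = μ • x :=
    Module.End.mem_eigenspace_iff.mp hx
  have hgx (μ : F) (x : V) (hx : x ∈ f.eigenspace μ) : g x = μ⁻¹ • x := by
    by_cases hμ : f.eigenspace μ = ⊥
    · rw [hμ, Submodule.mem_bot] at hx
      simp [hx]
    · have hμ0 : μ ≠ 0 := by
        rintro rfl
        simpa [hm] using hpow 0 hμ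
      have h : g (f x) = x := LinearMap.congr_fun hfg x
      rw [hfx μ x hx, map_smul] at h
      rw [eq_inv_smul_iff₀ hμ0, h]
  have htrace (T : Module.End F V) (t : F → F) (hT : ∀ μ, ∀ x ∈ f.eigenspace μ, T x = t μ • x) :
      LinearMap.trace F V T =
        ∑ μ ∈ hfin.toFinset, (Module.finrank F (f.eigenspace μ) : F) * t μ := by
    have hmaps (μ : F) : Set.MapsTo T (f.eigenspace μ) (f.eigenspace μ) := fun x hx => by
      rw [hT μ x hx]
      exact Submodule.smul_mem _ _ hx
    rw [LinearMap.trace_eq_sum_trace_restrict' hinternal hfin hmaps]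
    refine Finset.sum_congr rfl fun μ _ => ?_
    have : T.restrict (hmaps μ) = t μ • LinearMap.id := by
      ext x
      exact hT μ x x.2
    rw [this, map_smul, LinearMap.trace_id, smul_eq_mul, mul_comm]
  exact ⟨hfin.toFinset, fun μ => Module.finrank F (f.eigenspace μ),
    fun μ hμ => hpow μ (by simpa using hμ), htrace f _ hfx, htrace g _ hgx⟩

/-- The product of the traces of an operator of finite order and of its inverse is a sum of roots
of unity whose image in `ℂ` is nonnegative. -/
lemma exists_trace_mul_trace_eq {V : Type*} [AddCommGroup V] [Module F V]
    [FiniteDimensional F V] {f g : Module.End F V} {m : ℕ} (hm : m ≠ 0) (hf : f ^ m = 1)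
    (hfg : g * f = 1) (σ : algebraicClosure ℚ F →+* ℂ) :
    ∃ (z : algebraicClosure ℚ F) (w : ℂ), (z : F) = LinearMap.trace F V f * LinearMap.trace F V g ∧
      σ z = (Complex.normSq w : ℂ) ∧ (LinearMap.trace F V g ≠ 0 → w ≠ 0) := by
  classical
  obtain ⟨s, d, hs, htf, htg⟩ := exists_trace_eq_sum_of_pow_eq_one hm hf hfg
  have hmem (μ : s) : (μ : F) ∈ algebraicClosure ℚ F := by
    refine mem_algebraicClosure_iff.mpr (isAlgebraic_iff_isIntegral.mpr ?_)
    refine IsIntegral.of_pow (Nat.pos_of_ne_zero hm) ?_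
    rw [hs μ μ.2]
    exact isIntegral_one
  let r (μ : s) : algebraicClosure ℚ F := ⟨μ, hmem μ⟩
  let a : algebraicClosure ℚ F := ∑ μ : s, d μ * r μ
  let b : algebraicClosure ℚ F := ∑ μ : s, d μ * (r μ)⁻¹
  have ha : (a : F) = LinearMap.trace F V f := by
    rw [htf, ← Finset.sum_coe_sort]
    simp [a, r]
  have hb : (b : F) = LinearMap.trace F V g := by
    rw [htg, ← Finset.sum_coe_sort]
    simp [b, r]
  have hconj : σ b = (starRingEnd ℂ) (σ a) := by
    simp only [a, b, map_sum, map_mul, map_natCast, map_inv₀]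
    refine Finset.sum_congr rfl fun μ _ => ?_
    rw [Complex.inv_eq_conj]
    refine Complex.norm_eq_one_of_pow_eq_one (n := m) ?_ hm
    rw [← map_pow, ← map_one σ]
    congr 1
    exact Subtype.ext (by simpa [r] using hs μ μ.2)
  refine ⟨a * b, σ a, by rw [← ha, ← hb]; rfl, by rw [map_mul, hconj, Complex.mul_conj], ?_⟩
  intro hg h0
  rw [h0, map_zero, map_eq_zero] at hconj
  exact hg (by rw [← hb, hconj]; rfl)

lemma exists_matrix_trace_mul_trace_eq {ι : Type*} [Fintype ι] [DecidableEq ι]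
    {v u : Matrix ι ι F} {c : F} {m : ℕ} (hm : m ≠ 0) (hv : v ^ m = c • 1) (hc : c ≠ 0)
    (huv : u * v = 1) (σ : algebraicClosure ℚ F →+* ℂ) :
    ∃ (z : algebraicClosure ℚ F) (w : ℂ), (z : F) = v.trace * u.trace ∧
      σ z = (Complex.normSq w : ℂ) ∧ (u.trace ≠ 0 → w ≠ 0) := by
  obtain ⟨d, hd⟩ := IsAlgClosed.exists_pow_nat_eq c (Nat.pos_of_ne_zero hm)
  have hd0 : d ≠ 0 := by
    rintro rfl
    exact hc (by rw [← hd, zero_pow hm])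
  have hf : (Matrix.toLinAlgEquiv' (d⁻¹ • v)) ^ m = 1 := by
    rw [← map_pow, smul_pow, hv, ← hd, inv_pow, smul_smul, inv_mul_cancel₀ (pow_ne_zero _ hd0),
      one_smul, map_one]
  have hgf : Matrix.toLinAlgEquiv' (d • u) * Matrix.toLinAlgEquiv' (d⁻¹ • v) = 1 := by
    rw [← map_mul, smul_mul_smul_comm, mul_inv_cancel₀ hd0, one_smul, huv, map_one]
  have htr (A : Matrix ι ι F) : LinearMap.trace F _ (Matrix.toLinAlgEquiv' A) = A.trace :=
    Matrix.trace_toLin'_eq A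
  obtain ⟨z, w, hz, hw, hw0⟩ := exists_trace_mul_trace_eq hm hf hgf σ
  rw [htr, htr, Matrix.trace_smul, Matrix.trace_smul, smul_eq_mul, smul_eq_mul] at hz
  rw [htr, Matrix.trace_smul, smul_eq_mul] at hw0
  refine ⟨z, w, ?_, hw, fun h => hw0 (mul_ne_zero hd0 h)⟩
  rw [hz]
  field_simp

end TraceInverse

section PiMatrix

variable {F : Type*} [Field F] {ι : Type*} [Fintype ι] [DecidableEq ι] {d : ι → ℕ}

lemma trace_mulLeft_comp_mulRight (a b : Π i, Matrix (Fin (d i)) (Fin (d i)) F) :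
    LinearMap.trace F _ (LinearMap.mulLeft F a ∘ₗ LinearMap.mulRight F b) =
      ∑ i, (a i).trace * (b i).trace := by
  let B := Pi.basis (fun i => Matrix.stdBasis F (Fin (d i)) (Fin (d i)))
  rw [LinearMap.trace_eq_matrix_trace F B, Matrix.trace, Fintype.sum_sigma]
  refine Finset.sum_congr rfl fun i _ => ?_
  rw [Fintype.sum_prod_type, Matrix.trace, Matrix.trace, Finset.sum_mul_sum]
  refine Finset.sum_congr rfl fun p _ => Finset.sum_congr rfl fun q _ => ?_
  have hB : B ⟨i, (p, q)⟩ = Pi.single i (Matrix.single p q 1) := by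
    simp [B, Matrix.stdBasis_eq_single]
  have hrepr (x : Π i, Matrix (Fin (d i)) (Fin (d i)) F) : B.repr x ⟨i, (p, q)⟩ = x i p q := by
    simp [B, Pi.basis_repr, Matrix.stdBasis]
  rw [Matrix.diag_apply, LinearMap.toMatrix_apply, hB, hrepr]
  simp [Matrix.mul_apply, Matrix.single_apply, ite_and]

lemma exists_eq_sum_trace_mul (l : (Π i, Matrix (Fin (d i)) (Fin (d i)) F) →ₗ[F] F) :
    ∃ v : Π i, Matrix (Fin (d i)) (Fin (d i)) F, ∀ a, l a = ∑ i, (v i * a i).trace := by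
  refine ⟨fun i => .of fun p q => l (Pi.single i (Matrix.single q p 1)), fun a => ?_⟩
  conv_lhs => rw [← Finset.univ_sum_single a, map_sum]
  refine Finset.sum_congr rfl fun i _ => ?_
  conv_lhs => rw [Matrix.matrix_eq_sum_single (a i)]
  have (p q : Fin (d i)) : Pi.single (M := fun i => Matrix (Fin (d i)) (Fin (d i)) F) i
      (Matrix.single p q (a i p q)) = a i p q • Pi.single i (Matrix.single p q 1) := by
    rw [← Pi.single_smul, Matrix.smul_single, smul_eq_mul, mul_one]
  have hs (t : Matrix (Fin (d i)) (Fin (d i)) F) : l (Pi.single i t) =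
    (l ∘ₗ LinearMap.single F (fun i => Matrix (Fin (d i)) (Fin (d i)) F) i) t := rfl
  rw [hs]
  simp only [map_sum, LinearMap.comp_apply, LinearMap.coe_single, this, map_smul, Matrix.trace,
    Matrix.diag_apply, Matrix.mul_apply, Matrix.of_apply, smul_eq_mul]
  rw [Finset.sum_comm]
  simp only [mul_comm]

lemma eq_of_sum_trace_mul_eq {x y : Π i, Matrix (Fin (d i)) (Fin (d i)) F}
    (h : ∀ b : Π i, Matrix (Fin (d i)) (Fin (d i)) F, ∑ i, (x i * b i).trace = ∑ i, (y i * b i).trace) : x = y := by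
  ext i p q
  have := h (Pi.single i (Matrix.single q p 1))
  rw [Finset.sum_eq_single i (fun j _ hj => by simp [Pi.single_eq_of_ne hj]) (by simp),
    Finset.sum_eq_single i (fun j _ hj => by simp [Pi.single_eq_of_ne hj]) (by simp)] at this
  simpa [Matrix.trace_mul_single] using this

/-- A trace form `a ↦ Tr(x ↦ a θ(x))` on a product of matrix algebras which is nondegenerate and
has a Nakayama automorphism `θ` of finite order does not vanish at `1`. -/
theorem trace_ne_zero_of_pow_eq_one [CharZero F] [IsAlgClosed F]
    {θ : Module.End F (Π i, Matrix (Fin (d i)) (Fin (d i)) F)}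
    {l : (Π i, Matrix (Fin (d i)) (Fin (d i)) F) →ₗ[F] F}
    (hlθ : ∀ a, l a = LinearMap.trace F _ (LinearMap.mulLeft F a ∘ₗ θ))
    (hmul : ∀ a b, l (a * b) = l (b * θ a))
    (hnd : ∀ y, (∀ x, l (x * y) = 0) → y = 0) {N : ℕ} (hN : N ≠ 0) (hθN : θ ^ N = 1)
    (hl : l ≠ 0) : l 1 ≠ 0 := by
  obtain ⟨v, hv⟩ := exists_eq_sum_trace_mul l
  have hθv (a) : v * a = θ a * v := by
    refine eq_of_sum_trace_mul_eq fun b => ?_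
    have := hmul a b
    rw [hv, hv] at this
    simp only [Pi.mul_apply] at this ⊢
    simp only [← mul_assoc] at this
    rw [this]
    refine Finset.sum_congr rfl fun i _ => ?_
    rw [Matrix.trace_mul_cycle]
  obtain ⟨u, huv⟩ : ∃ u, u * v = 1 := by
    have hinj : Function.Injective (LinearMap.mulRight F v) := by
      rw [injective_iff_map_eq_zero]
      intro y hy
      refine hnd y fun x => ?_
      rw [hv]
      refine Finset.sum_eq_zero fun i _ => ?_
      have hyi : y i * v i = 0 := congrFun hy i
      rw [Pi.mul_apply, ← mul_assoc, Matrix.trace_mul_cycle, hyi, zero_mul, Matrix.trace_zero]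
    exact LinearMap.injective_iff_surjective.mp hinj 1
  have huv' (i) : u i * v i = 1 := congrFun huv i
  have hvu : v * u = 1 := funext fun i => mul_eq_one_comm.mp (huv' i)
  have hθ : θ = LinearMap.mulLeft F v ∘ₗ LinearMap.mulRight F u := by
    refine LinearMap.ext fun a => ?_
    change θ a = v * (a * u)
    rw [← mul_assoc, hθv, mul_assoc, hvu, mul_one]
  have hform (a) : l a = ∑ i, (a i * v i).trace * (u i).trace := by
    rw [hlθ, hθ, ← LinearMap.comp_assoc, ← LinearMap.mulLeft_mul, trace_mulLeft_comp_mulRight]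
    rfl
  have hpow (j : ℕ) (a) : v ^ j * a = (θ ^ j) a * v ^ j := by
    induction j generalizing a with
    | zero => simp
    | succ j ih =>
      rw [pow_succ, mul_assoc, hθv, ← mul_assoc, ih, pow_succ θ, Module.End.mul_apply, mul_assoc]
  have hscalar (i) : ∃ c : F, v i ^ N = c • 1 := by
    obtain ⟨c, hc⟩ := Matrix.mem_range_scalar_of_commute_single (M := v i ^ N) fun p q _ => by
      have := congrFun (hpow N (Pi.single i (Matrix.single p q 1))) i
      rw [hθN] at this
      simpa [Commute, SemiconjBy] using this.symm
    exact ⟨c, by rw [← hc, Matrix.scalar_apply, Matrix.smul_one_eq_diagonal]⟩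
  choose c hc using hscalar
  have : Algebra.IsAlgebraic ℚ (algebraicClosure ℚ F) := by
    convert algebraicClosure.isAlgebraic ℚ F using 1
    · rfl
    · exact Subsingleton.elim (α := Algebra ℚ (algebraicClosure ℚ F)) _ _
  let σ : algebraicClosure ℚ F →+* ℂ := (IsAlgClosed.lift : algebraicClosure ℚ F →ₐ[ℚ] ℂ)
  have hterm (i) : ∃ (z : algebraicClosure ℚ F) (w : ℂ), (z : F) = (v i).trace * (u i).trace ∧
      σ z = (Complex.normSq w : ℂ) ∧ ((u i).trace ≠ 0 → w ≠ 0) := by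
    rcases Nat.eq_zero_or_pos (d i) with hd | hd
    · have : IsEmpty (Fin (d i)) := by rw [hd]; infer_instance
      exact ⟨0, 0, by simp [Matrix.trace], by simp, fun h => (h (by simp [Matrix.trace])).elim⟩
    · have : NeZero (d i) := ⟨hd.ne'⟩
      refine exists_matrix_trace_mul_trace_eq hN (hc i) ?_ (huv' i) σ
      intro h0
      have h1 := hc i
      rw [h0, zero_smul] at h1
      have h2 : u i ^ N * v i ^ N = 1 := by
        have : Commute (u i) (v i) := (huv' i).trans (mul_eq_one_comm.mp (huv' i)).symm
        rw [← this.mul_pow, huv' i, one_pow]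
      rw [h1, mul_zero] at h2
      exact zero_ne_one h2
  choose z w hz hw hw0 using hterm
  have h1 : l 1 = ((∑ i, z i : algebraicClosure ℚ F) : F) := by
    rw [hform]
    simp [hz]
  intro h0
  rw [h1] at h0
  have hz0 : ∑ i, z i = 0 := Subtype.ext h0
  have hsum : ∑ i, Complex.normSq (w i) = 0 := by
    have := congrArg σ hz0
    rw [map_sum, map_zero] at this
    simp only [hw] at this
    exact_mod_cast this
  have hall := (Finset.sum_eq_zero_iff_of_nonneg fun i _ => Complex.normSq_nonneg _).mp hsum
  refine hl (LinearMap.ext fun a => ?_)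
  rw [hform, LinearMap.zero_apply]
  refine Finset.sum_eq_zero fun i hi => ?_
  have : (u i).trace = 0 := by
    by_contra h
    exact hw0 i h (Complex.normSq_eq_zero.mp (hall i hi))
  rw [this, mul_zero]

end PiMatrix

section LarsonRadford

open Coalgebra HopfAlgebra LinearMap WithConv

variable {k : Type} [Field k] {H : Type} [Ring H] [HopfAlgebra k H]

lemma exists_right_integral [IsSemisimpleRing H] :
    ∃ L : H, (∀ x, L * x = counit (R := k) x • L) ∧ counit (R := k) L = 1 := by
  let e : Hᵐᵒᵖ →+* k := (Bialgebra.counitAlgHom k H).toRingHom.fromOpposite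
    fun x y => Commute.all _ _
  have he (x : H) : e (MulOpposite.op x) = counit (R := k) x := rfl
  obtain ⟨J, hJ⟩ := exists_isCompl (RingHom.ker e)
  obtain ⟨a, ha, l, hl, hal⟩ := Submodule.mem_sup.mp
    (hJ.sup_eq_top ▸ Submodule.mem_top : (1 : Hᵐᵒᵖ) ∈ RingHom.ker e ⊔ J)
  have hel : e l = 1 := by
    rw [← map_one e, ← hal, map_add, (RingHom.mem_ker).mp ha, zero_add]
  refine ⟨l.unop, fun x => ?_, hel⟩
  have hx : MulOpposite.op x * l - MulOpposite.op (algebraMap k H (counit x)) * l = 0 := by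
    rw [← Submodule.mem_bot Hᵐᵒᵖ, ← hJ.inf_eq_bot]
    refine ⟨?_, J.sub_mem (J.smul_mem _ hl) (J.smul_mem _ hl)⟩
    simp [RingHom.mem_ker, he]
  have := congrArg MulOpposite.unop (sub_eq_zero.mp hx)
  simpa [Algebra.smul_def, Algebra.commutes] using this

variable [FiniteDimensional k H]

lemma IsGroupLikeElem.exists_pow_eq_one {γ : H} (hγ : IsGroupLikeElem k γ) :
    ∃ n, n ≠ 0 ∧ γ ^ n = 1 := by
  have : Finite (GroupLike k H) := (linearIndep_groupLikeVal (R := k) (A := H)).finite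
  obtain ⟨n, hn, h⟩ := isOfFinOrder_iff_pow_eq_one.mp (isOfFinOrder_of_finite (⟨γ, hγ⟩ : GroupLike k H))
  exact ⟨n, hn.ne', congrArg GroupLike.val h⟩

variable [IsSemisimpleRing H]

lemma exists_antipode_sq_pow_eq_one :
    ∃ N, N ≠ 0 ∧ (antipode k ∘ₗ antipode k : Module.End k H) ^ N = 1 := by
  obtain ⟨L, hL, hε⟩ := exists_right_integral (k := k) (H := H)
  obtain ⟨γ, hγ, h⟩ := exists_isGroupLikeElem_antipode_pow_four hL hε
  obtain ⟨n, hn, hγn⟩ := IsGroupLikeElem.exists_pow_eq_one hγ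
  refine ⟨2 * n, by simpa using hn, ?_⟩
  rw [pow_mul]
  set T : Module.End k H := (antipode k ∘ₗ antipode k) ^ 2 with hT
  have hTb (b : H) : b * γ = γ * T b := by
    rw [h, hT, pow_two]
    rfl
  have hpow (j : ℕ) (b : H) : b * γ ^ j = γ ^ j * (T ^ j) b := by
    induction j generalizing b with
    | zero => simp
    | succ j ih =>
      rw [pow_succ', ← mul_assoc, hTb, mul_assoc, ih, pow_succ T, Module.End.mul_apply, mul_assoc]
  ext b
  simpa [hγn] using (hpow n b).symm

variable [CharZero k] [IsAlgClosed k]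

/-- Larson–Radford: the square of the antipode of a finite-dimensional semisimple Hopf algebra in
characteristic zero has nonzero trace. -/
theorem antipodeTrace_one_ne_zero : antipodeTrace (k := k) (1 : H) ≠ 0 := by
  obtain ⟨L, hL, hε⟩ := exists_right_integral (k := k) (H := H)
  obtain ⟨N, hN, hSN⟩ := exists_antipode_sq_pow_eq_one (k := k) (H := H)
  obtain ⟨n, d, -, ⟨e⟩⟩ := IsSemisimpleRing.exists_algEquiv_pi_matrix_of_isAlgClosed k H
  let S₂ : Module.End k H := antipode k ∘ₗ antipode k
  let l := antipodeTrace (k := k) ∘ₗ e.symm.toLinearMap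
  have hl1 : l 1 = antipodeTrace (k := k) (1 : H) := by simp [l]
  rw [← hl1]
  refine trace_ne_zero_of_pow_eq_one (θ := e.toLinearEquiv.conj S₂) (l := l) ?_ ?_ ?_ hN ?_ ?_
  · intro a
    have : LinearMap.mulLeft k a ∘ₗ e.toLinearEquiv.conj S₂ =
        e.toLinearEquiv.conj (LinearMap.mulLeft k (e.symm a) ∘ₗ S₂) := by
      refine LinearMap.ext fun x => ?_
      simp [LinearEquiv.conj_apply]
    rw [this, LinearMap.trace_conj']
    rfl
  · intro a b
    simp [l, LinearEquiv.conj_apply, S₂, antipodeTrace_mul (e.symm a)]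
  · intro y hy
    have : e.symm y = 0 := eq_zero_of_antipodeTrace_mul (k := k) hL hε fun x => by
      simpa [l] using hy (e x)
    simpa using this
  · change (e.toLinearEquiv.conjAlgEquiv k S₂) ^ N = 1
    rw [← map_pow, hSN, map_one]
  · intro h
    have := LinearMap.congr_fun h (e L)
    simp [l, antipodeTrace_integral hL hε] at this

lemma contractLeft_antipodeTrace_eq (h : H) :
    contractLeft (antipodeTrace (k := k)) h = antipodeTrace (k := k) h • 1 := by
  obtain ⟨L, hL, hε⟩ := exists_right_integral (k := k) (H := H)
  have h1 := contractLeft_antipodeTrace hL hε (1 : H)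
  have h2 : contractLeft (antipodeTrace (k := k)) (1 : H) = antipodeTrace (k := k) (1 : H) • 1 := by
    simp [contractLeft, Algebra.TensorProduct.one_def]
  rw [h2] at h1
  rw [contractLeft_antipodeTrace hL hε, ← smul_right_injective H antipodeTrace_one_ne_zero h1]

end LarsonRadford

section Subcoalgebras

open HopfAlgebra LinearMap
open Coalgebra (comul counit)

variable {k : Type} [Field k] {H : Type} [Ring H] [HopfAlgebra k H]

lemma IsSubcoalgebra.contractLeft_mem {C : Submodule k H} (hC : IsSubcoalgebra k H C)
    (φ : H →ₗ[k] k) {x : H} (hx : x ∈ C) : contractLeft φ x ∈ C := by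
  obtain ⟨t, ht⟩ := hC x hx
  have h (t : C ⊗[k] C) : TensorProduct.lid k H
      (φ.rTensor H (TensorProduct.map C.subtype C.subtype t)) ∈ C := by
    induction t with
    | zero => simp
    | add u v hu hv => simpa only [map_add] using C.add_mem hu hv
    | tmul a b => simpa using C.smul_mem _ b.2
  have := h t
  rw [ht] at this
  exact this

lemma IsSubcoalgebra.contractRight_mem {C : Submodule k H} (hC : IsSubcoalgebra k H C)
    (φ : H →ₗ[k] k) {x : H} (hx : x ∈ C) : contractRight φ x ∈ C := by
  obtain ⟨t, ht⟩ := hC x hx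
  have h (t : C ⊗[k] C) : TensorProduct.rid k H
      (φ.lTensor H (TensorProduct.map C.subtype C.subtype t)) ∈ C := by
    induction t with
    | zero => simp
    | add u v hu hv => simpa only [map_add] using C.add_mem hu hv
    | tmul a b => simpa using C.smul_mem _ a.2
  have := h t
  rw [ht] at this
  exact this

/-- A bilinear form vanishing on a subcoalgebra `C` kills `Δ(x)` for `x ∈ C`. -/
lemma IsSubcoalgebra.apply_comul_eq_zero {C : Submodule k H} (hC : IsSubcoalgebra k H C)
    {N : Type*} [AddCommGroup N] [Module k N] (B : H ⊗[k] H →ₗ[k] N)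
    (hB : ∀ a ∈ C, ∀ b ∈ C, B (a ⊗ₜ b) = 0) {x : H} (hx : x ∈ C) : B (comul x) = 0 := by
  obtain ⟨t, ht⟩ := hC x hx
  have h (t : C ⊗[k] C) : B (TensorProduct.map C.subtype C.subtype t) = 0 := by
    induction t with
    | zero => simp
    | add u v hu hv => rw [map_add, map_add, hu, hv, add_zero]
    | tmul a b => simpa using hB a a.2 b b.2
  rw [← ht]
  exact h t

/-- The orthogonal complement of `F` on the left for the form `(x, y) ↦ lam(x y)`. -/
def leftOrthogonal (lam : H →ₗ[k] k) (F : Submodule k H) : Submodule k H where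
  carrier := {x | ∀ y ∈ F, lam (x * y) = 0}
  add_mem' ha hb y hy := by rw [add_mul, map_add, ha y hy, hb y hy, add_zero]
  zero_mem' y _ := by simp
  smul_mem' c x hx y hy := by rw [smul_mul_assoc, map_smul, hx y hy, smul_zero]

/-- A two-sided integral, nonzero at `1`, on a Hopf algebra with injective antipode. -/
structure IsHaarFunctional (lam : H →ₗ[k] k) : Prop where
  left : IsLeftIntegral lam
  right : ∀ h, contractLeft lam h = lam h • 1
  one_ne_zero : lam 1 ≠ 0
  antipode_injective : Function.Injective (antipode k (A := H))

/-- Disjoint subcoalgebras `D`, `K`, with `K` stable under the antipode, are orthogonal. -/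
lemma IsSubcoalgebra.le_leftOrthogonal {lam : H →ₗ[k] k} (h : IsHaarFunctional lam)
    {D K : Submodule k H} (hD : IsSubcoalgebra k H D) (hK : IsSubcoalgebra k H K)
    (hKS : ∀ x ∈ K, antipode k x ∈ K) (hDK : D ⊓ K = ⊥) :
    D ≤ MackeyPaper.leftOrthogonal lam K := by
  intro x hx y hy
  have hmem : contractLeft (lam ∘ₗ mulRight k y) x ∈ D ⊓ K := by
    refine ⟨hD.contractLeft_mem _ hx, ?_⟩
    rw [contractLeft_mulRight h.right]
    exact hKS _ (hK.contractLeft_mem _ hy)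
  rw [hDK, Submodule.mem_bot] at hmem
  have := apply_contractRight (lam ∘ₗ mulRight k y) (counit (R := k)) x
  rw [hmem, map_zero, contractRight_counit] at this
  exact this

variable [FiniteDimensional k H]

lemma IsSubcoalgebra.of_contract_mem {C : Submodule k H}
    (hl : ∀ φ : H →ₗ[k] k, ∀ x ∈ C, contractLeft φ x ∈ C)
    (hr : ∀ φ : H →ₗ[k] k, ∀ x ∈ C, contractRight φ x ∈ C) : IsSubcoalgebra k H C := by
  intro x hx
  obtain ⟨p, hp⟩ := C.subtype.exists_leftInverse_of_injective C.ker_subtype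
  have hpC (y : H) (hy : y ∈ C) : C.subtype (p y) = y :=
    congrArg Subtype.val (LinearMap.congr_fun hp ⟨y, hy⟩)
  refine ⟨TensorProduct.map p p (comul x), ?_⟩
  rw [← LinearMap.comp_apply, ← TensorProduct.map_comp]
  refine eq_of_forall_rTensor fun φ => ?_
  have h1 : TensorProduct.lid k H (φ.rTensor H
      (TensorProduct.map (C.subtype ∘ₗ p) (C.subtype ∘ₗ p) (comul x))) =
      C.subtype (p (contractLeft (φ ∘ₗ C.subtype ∘ₗ p) x)) := by
    simp [contractLeft, ← (Coalgebra.Repr.arbitrary k x).eq]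
  rw [h1, hpC _ (hl _ x hx)]
  change _ = contractLeft φ x
  rw [← sub_eq_zero, ← Module.forall_dual_apply_eq_zero_iff k]
  intro f
  rw [map_sub, sub_eq_zero, ← apply_contractRight, ← apply_contractRight]
  exact congrArg φ (hpC _ (hr _ x hx))

lemma IsSubcoalgebra.inf {C D : Submodule k H} (hC : IsSubcoalgebra k H C)
    (hD : IsSubcoalgebra k H D) : IsSubcoalgebra k H (C ⊓ D) :=
  .of_contract_mem
    (fun φ _ hx => ⟨hC.contractLeft_mem φ hx.1, hD.contractLeft_mem φ hx.2⟩)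
    (fun φ _ hx => ⟨hC.contractRight_mem φ hx.1, hD.contractRight_mem φ hx.2⟩)

lemma IsSubcoalgebra.sSup {s : Set (Submodule k H)} (hs : ∀ C ∈ s, IsSubcoalgebra k H C) :
    IsSubcoalgebra k H (sSup s) := by
  have key (T : H →ₗ[k] H) (hT : ∀ C ∈ s, ∀ x ∈ C, T x ∈ C) (x : H) (hx : x ∈ SupSet.sSup s) :
      T x ∈ SupSet.sSup s := by
    have : SupSet.sSup s ≤ (SupSet.sSup s).comap T :=
      sSup_le fun C hC y hy => le_sSup (a := C) hC (hT C hC y hy)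
    exact this hx
  exact .of_contract_mem (fun φ => key _ fun C hC _ hx => (hs C hC).contractLeft_mem φ hx)
    (fun φ => key _ fun C hC _ hx => (hs C hC).contractRight_mem φ hx)

lemma IsSubcoalgebra.leftOrthogonal {lam : H →ₗ[k] k} (h : IsHaarFunctional lam)
    {F : Submodule k H} (hF : IsSubcoalgebra k H F) :
    IsSubcoalgebra k H (leftOrthogonal lam F) := by
  refine .of_contract_mem (fun φ x hx y hy => ?_) (fun φ x hx y hy => ?_)
  · have h0 : contractRight (lam ∘ₗ mulLeft k x) y = 0 := by
      rw [← Module.forall_dual_apply_eq_zero_iff k]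
      intro f
      rw [apply_contractRight]
      exact hx _ (hF.contractLeft_mem f hy)
    rw [h.left.contractRight_mulLeft, ← map_zero (antipode k)] at h0
    change (lam ∘ₗ mulRight k y) _ = 0
    rw [← apply_contractRight, h.antipode_injective h0, map_zero]
  · have h0 : contractLeft (lam ∘ₗ mulLeft k x) y = 0 := by
      rw [← Module.forall_dual_apply_eq_zero_iff k]
      intro f
      rw [← apply_contractRight]
      exact hx _ (hF.contractRight_mem f hy)
    change (lam ∘ₗ mulRight k y) _ = 0
    rw [apply_contractRight, contractLeft_mulRight h.right, h0, map_zero, map_zero]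

lemma IsSubcoalgebra.map_antipode {E : Submodule k H} (hE : IsSubcoalgebra k H E) :
    IsSubcoalgebra k H (E.map (antipode k)) := by
  refine .of_contract_mem ?_ ?_
  · rintro φ _ ⟨x, hx, rfl⟩
    rw [contractLeft_antipode]
    exact ⟨_, hE.contractRight_mem _ hx, rfl⟩
  · rintro φ _ ⟨x, hx, rfl⟩
    rw [contractRight_antipode]
    exact ⟨_, hE.contractLeft_mem _ hx, rfl⟩

lemma IsSubcoalgebra.inf_leftOrthogonal {lam : H →ₗ[k] k} (h : IsHaarFunctional lam)
    {E : Submodule k H} (hE : IsSubcoalgebra k H E) :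
    E ⊓ MackeyPaper.leftOrthogonal lam (E.map (antipode k)) = ⊥ := by
  have hR := hE.inf (hE.map_antipode.leftOrthogonal h)
  set R := E ⊓ MackeyPaper.leftOrthogonal lam (E.map (antipode k)) with hRdef
  have hε (x : H) (hx : x ∈ R) : counit (R := k) x = 0 := by
    have h0 := hR.apply_comul_eq_zero (lam ∘ₗ LinearMap.mul' k H ∘ₗ (antipode k).lTensor H)
      (fun a ha b hb => by simpa using ha.2 _ ⟨b, hb.1, rfl⟩) hx
    simp only [LinearMap.comp_apply, mul_antipode_lTensor_comul_apply,
      Algebra.algebraMap_eq_smul_one, map_smul, smul_eq_mul] at h0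
    exact (mul_eq_zero.mp h0).resolve_right h.one_ne_zero
  rw [eq_bot_iff]
  intro x hx
  rw [Submodule.mem_bot, ← contractLeft_counit (k := k) x]
  exact hR.apply_comul_eq_zero ((TensorProduct.lid k H).toLinearMap ∘ₗ (counit (R := k)).rTensor H)
    (fun a ha b _ => by simp [hε a ha]) hx

lemma IsSubcoalgebra.exists_sub_mem_leftOrthogonal {lam : H →ₗ[k] k} (h : IsHaarFunctional lam)
    {E : Submodule k H} (hE : IsSubcoalgebra k H E) (x : H) :
    ∃ e ∈ E, x - e ∈ MackeyPaper.leftOrthogonal lam (E.map (antipode k)) := by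
  let T : H →ₗ[k] Module.Dual k E :=
    LinearMap.lcomp k k (antipode k ∘ₗ E.subtype) ∘ₗ LinearMap.compr₂ (LinearMap.mul k H) lam
  have hT (x : H) (y : E) : T x y = lam (x * antipode k (y : H)) := rfl
  have hinj : Function.Injective (T ∘ₗ E.subtype) := by
    rw [injective_iff_map_eq_zero]
    intro e he
    have : (e : H) ∈ E ⊓ MackeyPaper.leftOrthogonal lam (E.map (antipode k)) := by
      refine ⟨e.2, ?_⟩
      rintro _ ⟨y, hy, rfl⟩
      exact LinearMap.congr_fun he ⟨y, hy⟩
    rw [hE.inf_leftOrthogonal h] at this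
    simpa using this
  have hsurj := (LinearMap.injective_iff_surjective_of_finrank_eq_finrank
    (Subspace.dual_finrank_eq (K := k) (V := E)).symm).mp hinj
  obtain ⟨e, he⟩ := hsurj (T x)
  refine ⟨e, e.2, ?_⟩
  rintro _ ⟨y, hy, rfl⟩
  have := LinearMap.congr_fun he ⟨y, hy⟩
  rw [LinearMap.comp_apply, hT, hT] at this
  rw [sub_mul, map_sub, sub_eq_zero]
  exact this.symm

lemma IsSubcoalgebra.exists_isSimpleSubcoalgebra_le {R : Submodule k H}
    (hR : IsSubcoalgebra k H R) (h0 : R ≠ ⊥) : ∃ C ≤ R, IsSimpleSubcoalgebra k H C := by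
  obtain ⟨C, ⟨hCR, hC, hC0⟩, hmin⟩ := wellFounded_lt.has_min
    {C : Submodule k H | C ≤ R ∧ IsSubcoalgebra k H C ∧ C ≠ ⊥} ⟨R, le_rfl, hR, h0⟩
  exact ⟨C, hCR, hC, hC0, fun D hDC hD hD0 =>
    eq_of_le_of_not_lt hDC (hmin D ⟨hDC.trans hCR, hD, hD0⟩)⟩

/-- Cosemisimplicity: a subcoalgebra is the sum of its simple subcoalgebras. -/
theorem IsSubcoalgebra.le_sSup_isSimpleSubcoalgebra {lam : H →ₗ[k] k} (h : IsHaarFunctional lam)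
    {D : Submodule k H} (hD : IsSubcoalgebra k H D) :
    D ≤ SupSet.sSup {C | IsSimpleSubcoalgebra k H C ∧ C ≤ D} := by
  set E := SupSet.sSup {C | IsSimpleSubcoalgebra k H C ∧ C ≤ D} with hEdef
  have hE : IsSubcoalgebra k H E := IsSubcoalgebra.sSup fun C hC => hC.1.1
  have hED : E ≤ D := sSup_le fun C hC => hC.2
  have hR := hD.inf (hE.map_antipode.leftOrthogonal h)
  have hR0 : D ⊓ MackeyPaper.leftOrthogonal lam (E.map (antipode k)) = ⊥ := by
    by_contra hne
    obtain ⟨C, hCR, hC⟩ := hR.exists_isSimpleSubcoalgebra_le hne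
    have hCE : C ≤ E := le_sSup ⟨hC, hCR.trans inf_le_left⟩
    have := le_inf hCE (hCR.trans inf_le_right)
    rw [hE.inf_leftOrthogonal h, le_bot_iff] at this
    exact hC.2.1 this
  intro x hx
  obtain ⟨e, he, hxe⟩ := hE.exists_sub_mem_leftOrthogonal h x
  have : x - e ∈ D ⊓ MackeyPaper.leftOrthogonal lam (E.map (antipode k)) :=
    ⟨D.sub_mem hx (hED he), hxe⟩
  rw [hR0, Submodule.mem_bot, sub_eq_zero] at this
  exact this ▸ he

/-- A subcoalgebra contains its character as a comodule: a cocommutative element whose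
counit is the dimension. -/
lemma IsSubcoalgebra.exists_isCocomm {D : Submodule k H} (hD : IsSubcoalgebra k H D) :
    ∃ d ∈ D, IsCocomm k H d ∧ counit (R := k) d = Module.finrank k D := by
  let R (f : H →ₗ[k] k) : Module.End k D :=
    (contractLeft f).restrict fun x hx => hD.contractLeft_mem f hx
  let χ : Module.Dual k (Module.Dual k H) :=
    { toFun f := LinearMap.trace k D (R f)
      map_add' f g := by
        rw [← map_add]
        congr 1
        ext x
        simp [R]
      map_smul' c f := by
        rw [RingHom.id_apply, ← map_smul]
        congr 1
        ext x
        simp [R] }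
  obtain ⟨d, hd⟩ := (Module.evalEquiv k H).surjective χ
  have hdf (f : H →ₗ[k] k) : f d = LinearMap.trace k D (R f) := LinearMap.congr_fun hd f
  have hmul (f g : H →ₗ[k] k) : g (contractLeft f d) = LinearMap.trace k D (R g * R f) := by
    rw [← LinearMap.comp_apply, hdf]
    congr 1
    ext x
    exact contractLeft_comp g f x
  refine ⟨d, ?_, ?_, ?_⟩
  · by_contra hdD
    obtain ⟨f, hfd, hf⟩ := Submodule.exists_le_ker_of_notMem hdD
    refine hfd ?_
    have : R f = 0 := by
      ext x
      exact hD.apply_comul_eq_zero ((TensorProduct.lid k H).toLinearMap ∘ₗ f.rTensor H)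
        (fun a ha b _ => by simp [LinearMap.mem_ker.mp (hf ha)]) x.2
    rw [hdf, this, map_zero]
  · refine eq_of_forall_rTensor fun φ => ?_
    have h1 : TensorProduct.lid k H (φ.rTensor H (TensorProduct.comm k H H (comul d))) =
        contractRight φ d := by
      simp [contractRight, ← (Coalgebra.Repr.arbitrary k d).eq]
    rw [h1]
    change _ = contractLeft φ d
    rw [← sub_eq_zero, ← Module.forall_dual_apply_eq_zero_iff k]
    intro f
    rw [map_sub, sub_eq_zero, apply_contractRight, hmul, hmul, LinearMap.trace_mul_comm]
  · have : R counit = 1 := by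
      ext x
      exact contractLeft_counit _
    rw [hdf, this, LinearMap.trace_one]

lemma IsSubcoalgebra.map {T : H →ₗ[k] H}
    (hT : ∀ x, comul (R := k) (T x) = TensorProduct.map T T (comul x))
    {C : Submodule k H} (hC : IsSubcoalgebra k H C) : IsSubcoalgebra k H (C.map T) := by
  refine .of_contract_mem ?_ ?_
  · rintro φ _ ⟨x, hx, rfl⟩
    refine ⟨_, hC.contractLeft_mem (φ ∘ₗ T) hx, ?_⟩
    simp [contractLeft, hT, ← (Coalgebra.Repr.arbitrary k x).eq]
  · rintro φ _ ⟨x, hx, rfl⟩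
    refine ⟨_, hC.contractRight_mem (φ ∘ₗ T) hx, ?_⟩
    simp [contractRight, hT, ← (Coalgebra.Repr.arbitrary k x).eq]

variable [CharZero k]

/-- The simple subcoalgebras on which the character acts trivially on the integral of an
antipode-stable subcoalgebra `K` lie in `K`. -/
lemma IsSimpleSubcoalgebra.le_of_mul_eq {lam : H →ₗ[k] k} (h : IsHaarFunctional lam)
    {D K : Submodule k H} (hD : IsSimpleSubcoalgebra k H D) (hK : IsSubcoalgebra k H K)
    (hKS : ∀ x ∈ K, antipode k x ∈ K) {Λ : H} (hΛ : Λ ∈ K) (hΛ0 : Λ ≠ 0)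
    (hΛK : ∀ x ∈ K, Λ * x = counit (R := k) x • Λ)
    (hDΛ : ∀ d ∈ D, IsCocomm k H d → d * Λ = counit (R := k) d • Λ) : D ≤ K := by
  by_cases hDK : D ⊓ K = ⊥
  · exfalso
    obtain ⟨d, hdD, hd, hεd⟩ := hD.1.exists_isCocomm
    have h0 := hD.1.le_leftOrthogonal h hK hKS hDK hdD Λ hΛ
    have hfr : (Module.finrank k D : k) ≠ 0 := by
      exact_mod_cast fun h0 => hD.2.1 (Submodule.finrank_eq_zero.mp h0)
    rw [hDΛ d hdD hd, map_smul, smul_eq_mul, hεd] at h0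
    have hlam := (mul_eq_zero.mp h0).resolve_left hfr
    have : Λ ∈ K ⊓ MackeyPaper.leftOrthogonal lam (K.map (antipode k)) := by
      refine ⟨hΛ, ?_⟩
      rintro _ ⟨y, hy, rfl⟩
      rw [hΛK _ (hKS y hy), map_smul, hlam, smul_zero]
    rw [hK.inf_leftOrthogonal h, Submodule.mem_bot] at this
    exact hΛ0 this
  · exact inf_eq_left.mp (hD.2.2 _ inf_le_left (hD.1.inf hK) hDK)

lemma isHaarFunctional_antipodeTrace [IsAlgClosed k] [IsSemisimpleRing H] :
    IsHaarFunctional (antipodeTrace (k := k) (H := H)) := by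
  obtain ⟨L, hL, hε⟩ := exists_right_integral (k := k) (H := H)
  exact ⟨isLeftIntegral_antipodeTrace, contractLeft_antipodeTrace_eq, antipodeTrace_one_ne_zero,
    (antipode_bijective hL hε).1⟩

end Subcoalgebras

end

noncomputable section

variable (k : Type) [Field k] [CharZero k] [IsAlgClosed k]
variable (H : Type) [Ring H] [HopfAlgebra k H]

section Statements

variable [FiniteDimensional k H] [IsSemisimpleRing H]

/-- Proposition 28: if `C = k·g` for a grouplike element
`g ∈ G(H)` (with inverse `g'`), then the conjugate Hopf subalgebra `ᶜK`
equals `g·K·g⁻¹`. -/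
theorem statement_9 (K : Subalgebra k H) (hK : IsHopfSubalgebra k H K)
    (Λ : H) (hΛ : IsIdempotentIntegral k H K Λ)
    (g g' : H) (hg0 : g ≠ 0)
    (hg : Coalgebra.comul (R := k) g = g ⊗ₜ[k] g)
    (hgg' : g * g' = 1) (hg'g : g' * g = 1) :
    conjK k H K Λ (Submodule.span k {g}) =
      Submodule.map ((LinearMap.mulLeft k g).comp (LinearMap.mulRight k g'))
        K.toSubmodule := by
  have hεg : Coalgebra.counit (R := k) g = 1 := by
    have h : Coalgebra.counit (R := k) g • g = g := by
      simpa [contractLeft, hg] using contractLeft_counit (k := k) g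
    exact smul_left_injective k hg0 (by simpa using h)
  have hgl : IsGroupLikeElem k g := ⟨hεg, hg⟩
  have hgl' : IsGroupLikeElem k g' := .of_mul_eq_one hgg' hg'g hgl
  have hSg : HopfAlgebra.antipode k g = g' :=
    left_inv_eq_right_inv hgl.antipode_mul_cancel hgg'
  have hSg' : HopfAlgebra.antipode k g' = g :=
    left_inv_eq_right_inv hgl'.antipode_mul_cancel hg'g
  have hcancel (a b : H) : (g * (a * g')) * (g * b) = g * (a * b) := by
    simp only [mul_assoc]
    rw [← mul_assoc g' g, hg'g, one_mul]
  set T : H →ₗ[k] H := (LinearMap.mulLeft k g).comp (LinearMap.mulRight k g')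
  have hT (x : H) : T x = g * (x * g') := rfl
  have hεT (x : H) : Coalgebra.counit (R := k) (T x) = Coalgebra.counit (R := k) x := by
    rw [hT, Bialgebra.counit_mul, Bialgebra.counit_mul, hgl.counit_eq_one, hgl'.counit_eq_one,
      one_mul, mul_one]
  have hTmul (a b : H) : T a * T b = T (a * b) := by
    simp only [hT, hcancel, mul_assoc]
  have hcoalg : IsSubcoalgebra k H (K.toSubmodule.map T) := by
    refine hK.1.map fun x => ?_
    simp [hT, Bialgebra.comul_mul, hg, hgl'.comul_eq_tmul_self,
      ← (Coalgebra.Repr.arbitrary k x).eq, Finset.mul_sum, Finset.sum_mul]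
  have hhaar := isHaarFunctional_antipodeTrace (k := k) (H := H)
  obtain ⟨hΛK, hεΛ, hΛint⟩ := hΛ
  apply le_antisymm
  · refine sSup_le fun D hD => hD.1.le_of_mul_eq hhaar hcoalg ?_ (Λ := T Λ) ⟨Λ, hΛK, rfl⟩ ?_ ?_ ?_
    · rintro _ ⟨x, hx, rfl⟩
      refine ⟨HopfAlgebra.antipode k x, hK.2 x hx, ?_⟩
      simp only [hT, HopfAlgebra.antipode_mul_antidistrib, hSg, hSg', mul_assoc]
    · intro h0
      have := hεT Λ
      rw [h0, map_zero, hεΛ] at this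
      exact zero_ne_one this
    · rintro _ ⟨x, hx, rfl⟩
      rw [hTmul, (hΛint x hx).2, map_smul, hεT]
    · intro d hd hdc
      have := hD.2 d hd hdc g (Submodule.mem_span_singleton_self g) (by simp [IsCocomm, hg])
      rw [hT, ← mul_assoc g, ← mul_assoc d, this, smul_mul_assoc]
  · refine (hcoalg.le_sSup_isSimpleSubcoalgebra hhaar).trans (sSup_le_sSup ?_)
    rintro D ⟨hD, hDK⟩
    refine ⟨hD, fun d hd _ c hc _ => ?_⟩
    obtain ⟨x, hx, rfl⟩ := hDK hd
    obtain ⟨a, rfl⟩ := Submodule.mem_span_singleton.mp hc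
    rw [smul_mul_assoc, mul_smul_comm, hT, hcancel, (hΛint x hx).1, ← hT, hεT, mul_smul_comm,
      smul_comm]

end Statements

end

end MackeyPaper
end

section
/- Let K be a Hopf subalgebra of H and C a simple subcoalgebra of H. Then {}^C K·C·K = CK, and {}^C K is the maximal Hopf subalgebra of H with this property: any Hopf subalgebra L of H satisfying L·C·K = CK is contained in {}^C K. -/
open TensorProduct

namespace HopfSemisimple

open TensorProduct Coalgebra HopfAlgebra

noncomputable section

section Basic
variable {k H : Type*} [Field k] [Ring H] [HopfAlgebra k H]

/-- The operator `h ↦ ∑ f(h₁) h₂`. -/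
def sl (f : H →ₗ[k] k) : H →ₗ[k] H :=
  (TensorProduct.lid k H).toLinearMap ∘ₗ f.rTensor H ∘ₗ comul

/-- The operator `h ↦ ∑ f(h₂) h₁`. -/
def sr (f : H →ₗ[k] k) : H →ₗ[k] H :=
  (TensorProduct.rid k H).toLinearMap ∘ₗ f.lTensor H ∘ₗ comul

lemma comul_eq (h : H) :
    comul (R := k) h = ∑ i ∈ (ℛ k h).index, (ℛ k h).left i ⊗ₜ[k] (ℛ k h).right i :=
  ((ℛ k h).eq).symm

lemma sl_eq_sum (f : H →ₗ[k] k) (h : H) :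
    sl f h = ∑ i ∈ (ℛ k h).index, f ((ℛ k h).left i) • (ℛ k h).right i := by
  simp only [sl, LinearMap.comp_apply, comul_eq h, map_sum]
  simp

lemma sr_eq_sum (f : H →ₗ[k] k) (h : H) :
    sr f h = ∑ i ∈ (ℛ k h).index, f ((ℛ k h).right i) • (ℛ k h).left i := by
  simp only [sr, LinearMap.comp_apply, comul_eq h, map_sum]
  simp

lemma coassoc_sum {M : Type*} [AddCommGroup M] [Module k M]
    (T : H ⊗[k] (H ⊗[k] H) →ₗ[k] M) (h : H) :
    ∑ i ∈ (ℛ k h).index, ∑ j ∈ (ℛ k ((ℛ k h).left i)).index,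
      T ((ℛ k ((ℛ k h).left i)).left j ⊗ₜ
        ((ℛ k ((ℛ k h).left i)).right j ⊗ₜ (ℛ k h).right i)) =
    ∑ i ∈ (ℛ k h).index, ∑ j ∈ (ℛ k ((ℛ k h).right i)).index,
      T ((ℛ k h).left i ⊗ₜ
        ((ℛ k ((ℛ k h).right i)).left j ⊗ₜ (ℛ k ((ℛ k h).right i)).right j)) := by
  have := congrArg T (sum_tmul_tmul_eq (ℛ k h) (fun i => ℛ k ((ℛ k h).left i))
    (fun i => ℛ k ((ℛ k h).right i)))
  simpa only [map_sum] using this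

lemma coassoc_map {M : Type*} [AddCommGroup M] [Module k M]
    (T : H ⊗[k] (H ⊗[k] H) →ₗ[k] M) (h : H) :
    ∑ i ∈ (ℛ k h).index, T (TensorProduct.assoc k H H H
        (comul (R := k) ((ℛ k h).left i) ⊗ₜ (ℛ k h).right i)) =
    ∑ i ∈ (ℛ k h).index, T ((ℛ k h).left i ⊗ₜ comul (R := k) ((ℛ k h).right i)) := by
  have := congrArg T (coassoc_apply (R := k) h)
  rw [comul_eq h] at this
  simpa only [map_sum, LinearMap.rTensor_tmul, LinearMap.lTensor_tmul] using this

lemma comul_sl (f : H →ₗ[k] k) (h : H) :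
    comul (R := k) (sl f h) = (sl f).rTensor H (comul (R := k) h) := by
  have := coassoc_sum ((TensorProduct.lid k (H ⊗[k] H)).toLinearMap ∘ₗ f.rTensor (H ⊗[k] H)) h
  conv_lhs => rw [sl_eq_sum]
  conv_rhs => rw [comul_eq h]
  simp only [map_sum, map_smul, LinearMap.rTensor_tmul, sl_eq_sum, sum_tmul]
  rw [Finset.sum_congr rfl (fun i _ => by rw [comul_eq ((ℛ k h).right i)])]
  simp only [Finset.smul_sum]
  simpa [smul_tmul'] using this.symm

lemma comul_sr (f : H →ₗ[k] k) (h : H) :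
    comul (R := k) (sr f h) = (sr f).lTensor H (comul (R := k) h) := by
  have := coassoc_sum (((TensorProduct.rid k H).toLinearMap ∘ₗ f.lTensor H).lTensor H) h
  conv_lhs => rw [sr_eq_sum]
  conv_rhs => rw [comul_eq h]
  simp only [map_sum, map_smul, LinearMap.lTensor_tmul, sr_eq_sum, tmul_sum]
  rw [Finset.sum_congr rfl (fun i _ => by rw [comul_eq ((ℛ k h).left i)])]
  simp only [Finset.smul_sum]
  simpa using this

lemma sl_apply (f : H →ₗ[k] k) (h : H) :
    sl f h = TensorProduct.lid k H (f.rTensor H (comul (R := k) h)) := rfl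

lemma sr_apply (f : H →ₗ[k] k) (h : H) :
    sr f h = TensorProduct.rid k H (f.lTensor H (comul (R := k) h)) := rfl

lemma sl_sr_comm (f g : H →ₗ[k] k) (h : H) : sl f (sr g h) = sr g (sl f h) := by
  rw [sl_apply, comul_sr, comul_eq h, sl_eq_sum]
  simp

lemma sl_counit (h : H) : sl (counit (R := k)) h = h := by
  rw [sl_apply, rTensor_counit_comul]; simp

lemma sr_counit (h : H) : sr (counit (R := k)) h = h := by
  rw [sr_apply, lTensor_counit_comul]; simp

lemma apply_sr (f g : H →ₗ[k] k) (h : H) : f (sr g h) = g (sl f h) := by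
  rw [sr_eq_sum, sl_eq_sum]; simp [mul_comm]

lemma counit_sl (f : H →ₗ[k] k) (h : H) : counit (R := k) (sl f h) = f h := by
  rw [← apply_sr, sr_counit]

lemma counit_sr (f : H →ₗ[k] k) (h : H) : counit (R := k) (sr f h) = f h := by
  rw [apply_sr, sl_counit]

lemma sl_sl (f g : H →ₗ[k] k) (h : H) : sl f (sl g h) = sl (f ∘ₗ sl g) h := by
  rw [sl_apply, comul_sl, comul_eq h, sl_eq_sum]
  simp

lemma sr_sr (f g : H →ₗ[k] k) (h : H) : sr f (sr g h) = sr (f ∘ₗ sr g) h := by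
  rw [sr_apply, comul_sr, comul_eq h, sr_eq_sum]
  simp

lemma comul_mul_one_tmul_antipode (a : H) :
    ∑ i ∈ (ℛ k a).index, comul (R := k) ((ℛ k a).left i) *
      (1 ⊗ₜ[k] antipode k ((ℛ k a).right i)) = a ⊗ₜ 1 := by
  have := coassoc_map ((LinearMap.mul' k H ∘ₗ (antipode k).lTensor H).lTensor H) a
  have h1 (t : H ⊗[k] H) (y : H) :
      ((LinearMap.mul' k H ∘ₗ (antipode k).lTensor H).lTensor H)
        (TensorProduct.assoc k H H H (t ⊗ₜ y)) = t * (1 ⊗ₜ antipode k y) := by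
    induction t with
    | zero => simp
    | tmul p q => simp
    | add p q hp hq => rw [add_tmul, map_add, map_add, hp, hq, add_mul]
  simp only [h1] at this
  rw [this]
  simp only [LinearMap.lTensor_tmul, LinearMap.comp_apply, mul_antipode_lTensor_comul_apply,
    Algebra.algebraMap_eq_smul_one, tmul_smul, smul_tmul']
  rw [← sum_tmul]
  congr 1
  exact (sr_eq_sum _ a).symm.trans (sr_counit a)

lemma antipode_tmul_one_mul_comul (a : H) :
    ∑ i ∈ (ℛ k a).index, (antipode k ((ℛ k a).left i) ⊗ₜ[k] 1) *
      comul (R := k) ((ℛ k a).right i) = 1 ⊗ₜ a := by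
  have := coassoc_map ((LinearMap.mul' k H ∘ₗ (antipode k).rTensor H).rTensor H ∘ₗ
    (TensorProduct.assoc k H H H).symm.toLinearMap) a
  have h1 (t : H ⊗[k] H) (y : H) :
      ((LinearMap.mul' k H ∘ₗ (antipode k).rTensor H).rTensor H)
        ((TensorProduct.assoc k H H H).symm (y ⊗ₜ t)) = (antipode k y ⊗ₜ 1) * t := by
    induction t with
    | zero => simp
    | tmul p q => simp
    | add p q hp hq => rw [tmul_add, map_add, map_add, hp, hq, mul_add]
  simp only [LinearMap.comp_apply, LinearEquiv.coe_coe, LinearEquiv.symm_apply_apply] at this h1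
  simp only [h1] at this
  rw [← this]
  simp only [LinearMap.rTensor_tmul, LinearMap.comp_apply, mul_antipode_rTensor_comul_apply,
    Algebra.algebraMap_eq_smul_one, ← smul_tmul']
  simp only [← tmul_smul]
  rw [← tmul_sum]
  congr 1
  exact (sl_eq_sum _ a).symm.trans (sl_counit a)

/-- The functional `x ↦ f (x a)`. -/
def fmulR (f : H →ₗ[k] k) (a : H) : H →ₗ[k] k := f ∘ₗ LinearMap.mulRight k a
/-- The functional `x ↦ f (a x)`. -/
def fmulL (a : H) (f : H →ₗ[k] k) : H →ₗ[k] k := f ∘ₗ LinearMap.mulLeft k a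

@[simp] lemma fmulR_apply (f : H →ₗ[k] k) (a x : H) : fmulR f a x = f (x * a) := rfl
@[simp] lemma fmulL_apply (f : H →ₗ[k] k) (a x : H) : fmulL a f x = f (a * x) := rfl

/-- Two-sided integral. -/
structure IsIntegral (t : H) : Prop where
  mul_left : ∀ a : H, a * t = counit (R := k) a • t
  mul_right : ∀ a : H, t * a = counit (R := k) a • t

end Basic

section Integral
variable {k H : Type*} [Field k] [Ring H] [HopfAlgebra k H] {t : H}

lemma comul_mul_tmul_one (ht : IsIntegral (k := k) t) (a : H) :
    comul (R := k) t * (a ⊗ₜ 1) = comul t * (1 ⊗ₜ antipode k a) := by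
  rw [← comul_mul_one_tmul_antipode, Finset.mul_sum]
  simp only [← mul_assoc, ← Bialgebra.comul_mul, ht.mul_right, map_smul, smul_mul_assoc]
  simp only [← mul_smul_comm, ← Finset.mul_sum, ← tmul_smul, ← map_smul]
  rw [← tmul_sum, ← map_sum, ← sl_eq_sum, sl_counit]

lemma tmul_one_mul_comul (ht : IsIntegral (k := k) t) (a : H) :
    (antipode k a ⊗ₜ 1) * comul (R := k) t = (1 ⊗ₜ a) * comul t := by
  rw [← antipode_tmul_one_mul_comul a, Finset.sum_mul]
  simp only [mul_assoc, ← Bialgebra.comul_mul, ht.mul_left, map_smul, mul_smul_comm]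
  simp only [← smul_mul_assoc, ← Finset.sum_mul, smul_tmul', ← map_smul]
  rw [← sum_tmul, ← map_sum, ← sr_eq_sum, sr_counit]

lemma sl_fmulR (ht : IsIntegral (k := k) t) (f : H →ₗ[k] k) (a : H) :
    sl (fmulR f a) t = sl f t * antipode k a := by
  have := congrArg (fun z => TensorProduct.lid k H (f.rTensor H z)) (comul_mul_tmul_one ht a)
  simp only [comul_eq t, Finset.sum_mul, map_sum] at this
  rw [sl_eq_sum, sl_eq_sum, Finset.sum_mul]
  simpa using this

lemma mul_sl (ht : IsIntegral (k := k) t) (f : H →ₗ[k] k) (a : H) :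
    a * sl f t = sl (fmulL (antipode k a) f) t := by
  have := congrArg (fun z => TensorProduct.lid k H (f.rTensor H z)) (tmul_one_mul_comul ht a)
  simp only [comul_eq t, Finset.mul_sum, map_sum] at this
  rw [sl_eq_sum, sl_eq_sum, Finset.mul_sum]
  simpa using this.symm

end Integral

section Antipode
variable {k H : Type*} [Field k] [Ring H] [HopfAlgebra k H]

lemma comul_antipode (h : H) : comul (R := k) (antipode k h) =
    TensorProduct.map (antipode k) (antipode k) (TensorProduct.comm k H H (comul (R := k) h)) := by
  set Q : H →ₗ[k] H ⊗[k] H := TensorProduct.map (antipode k) (antipode k) ∘ₗ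
    (TensorProduct.comm k H H).toLinearMap ∘ₗ comul with hQ
  have hleft : WithConv.toConv Q * WithConv.toConv (comul (R := k) (A := H)) = 1 := by
    ext h
    rw [(ℛ k h).convMul_apply]
    have hc := coassoc_sum (LinearMap.mul' k (H ⊗[k] H) ∘ₗ
      TensorProduct.map (TensorProduct.map (antipode k) (antipode k) ∘ₗ
      (TensorProduct.comm k H H).toLinearMap) comul ∘ₗ
      (TensorProduct.assoc k H H H).symm.toLinearMap) h
    simp only [LinearMap.comp_apply, LinearEquiv.coe_coe, TensorProduct.assoc_symm_tmul,
      TensorProduct.map_tmul, LinearMap.mul'_apply, TensorProduct.comm_tmul] at hc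
    have h1 (x : H) : Q x = ∑ j ∈ (ℛ k x).index,
        antipode k ((ℛ k x).right j) ⊗ₜ[k] antipode k ((ℛ k x).left j) := by
      simp only [hQ, LinearMap.comp_apply, comul_eq x, map_sum]
      simp
    have h2 (x y : H) : antipode k x ⊗ₜ[k] antipode k y =
        (1 ⊗ₜ antipode k y) * (antipode k x ⊗ₜ 1) := by simp
    simp only [h1, Finset.sum_mul]
    refine hc.trans ?_
    simp only [h2, mul_assoc, ← Finset.mul_sum, antipode_tmul_one_mul_comul]
    simp only [Algebra.TensorProduct.tmul_mul_tmul, mul_one, ← tmul_sum,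
      sum_antipode_mul_eq_smul]
    simp [Algebra.TensorProduct.one_def, Algebra.algebraMap_eq_smul_one]
  have := left_inv_eq_right_inv hleft LinearMap.comul_right_inv
  have := congrArg (fun f : WithConv (H →ₗ[k] H ⊗[k] H) => WithConv.ofConv f h) this
  exact this.symm

end Antipode

section Exists
variable {k H : Type*} [Field k] [Ring H] [HopfAlgebra k H]

lemma exists_left_integral [IsSemisimpleRing H] :
    ∃ t : H, counit (R := k) t = 1 ∧ ∀ a : H, a * t = counit (R := k) a • t := by
  obtain ⟨N, hN⟩ := exists_isCompl (RingHom.ker (Bialgebra.counitAlgHom k H) : Submodule H H)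
  obtain ⟨u, hu, v, hv, huv⟩ : ∃ u ∈ (RingHom.ker (Bialgebra.counitAlgHom k H) : Submodule H H),
      ∃ v ∈ N, u + v = 1 := Submodule.mem_sup.1 (hN.sup_eq_top ▸ Submodule.mem_top)
  have hε : counit (R := k) v = 1 := by
    have := congrArg (counit (R := k)) huv
    have hu' : counit (R := k) u = 0 := hu
    simpa [hu'] using this
  refine ⟨v, hε, fun a => ?_⟩
  have hmem : a * v - counit (R := k) a • v ∈ N := by
    refine N.sub_mem (N.smul_mem a hv) ?_
    rw [← one_mul v, ← smul_mul_assoc]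
    exact N.smul_mem _ hv
  have hker : a * v - counit (R := k) a • v ∈
      (RingHom.ker (Bialgebra.counitAlgHom k H) : Submodule H H) := by
    change Bialgebra.counitAlgHom k H _ = 0
    simp [hε]
  have := Submodule.disjoint_def.1 hN.disjoint _ hker hmem
  exact sub_eq_zero.1 this

lemma exists_right_integral [IsSemisimpleRing H] :
    ∃ t : H, counit (R := k) t = 1 ∧ ∀ a : H, t * a = counit (R := k) a • t := by
  let φ : Hᵐᵒᵖ →+* kᵐᵒᵖ := (Bialgebra.counitAlgHom k H).toRingHom.op
  obtain ⟨N, hN⟩ := exists_isCompl (RingHom.ker φ : Submodule Hᵐᵒᵖ Hᵐᵒᵖ)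
  obtain ⟨u, hu, v, hv, huv⟩ : ∃ u ∈ (RingHom.ker φ : Submodule Hᵐᵒᵖ Hᵐᵒᵖ),
      ∃ v ∈ N, u + v = 1 := Submodule.mem_sup.1 (hN.sup_eq_top ▸ Submodule.mem_top)
  have hφ : ∀ x, φ x = MulOpposite.op (counit (R := k) x.unop) := fun x => rfl
  have hε : counit (R := k) v.unop = 1 := by
    have := congrArg (fun x => counit (R := k) x.unop) huv
    have hu' : counit (R := k) u.unop = 0 := congrArg MulOpposite.unop (RingHom.mem_ker.1 hu)
    simpa [hu'] using this
  refine ⟨v.unop, hε, fun a => ?_⟩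
  have hmem : MulOpposite.op a * v - counit (R := k) a • v ∈ N := by
    refine N.sub_mem (N.smul_mem _ hv) ?_
    rw [← one_mul v, ← smul_mul_assoc]
    exact N.smul_mem _ hv
  have hker : MulOpposite.op a * v - counit (R := k) a • v ∈
      (RingHom.ker φ : Submodule Hᵐᵒᵖ Hᵐᵒᵖ) := by
    change φ _ = 0
    simp [hφ, hε]
  have := Submodule.disjoint_def.1 hN.disjoint _ hker hmem
  exact congrArg MulOpposite.unop (sub_eq_zero.1 this)

lemma exists_integral (k : Type*) {H : Type*} [Field k] [Ring H] [HopfAlgebra k H]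
    [IsSemisimpleRing H] :
    ∃ t : H, IsIntegral (k := k) t ∧ counit (R := k) t = 1 := by
  obtain ⟨t, ht, htl⟩ := exists_left_integral (k := k) (H := H)
  obtain ⟨t', ht', htr⟩ := exists_right_integral (k := k) (H := H)
  have : t = t' := by
    have h1 := htl t'
    rw [htr t, ht, ht', one_smul, one_smul] at h1
    exact h1.symm
  subst this
  exact ⟨t, ⟨htl, htr⟩, ht⟩

end Exists

section Frobenius
variable {k H : Type*} [Field k] [Ring H] [HopfAlgebra k H] {t : H}

lemma sl_add (f g : H →ₗ[k] k) (h : H) : sl (f + g) h = sl f h + sl g h := by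
  simp [sl_eq_sum, add_smul, Finset.sum_add_distrib]

lemma sl_smul (c : k) (f : H →ₗ[k] k) (h : H) : sl (c • f) h = c • sl f h := by
  simp [sl_eq_sum, Finset.smul_sum, smul_smul]

lemma sum_mul_antipode (h : H) :
    ∑ i ∈ (ℛ k h).index, (ℛ k h).left i * antipode k ((ℛ k h).right i) =
      counit (R := k) h • (1 : H) := sum_mul_antipode_eq_smul (ℛ k h)

variable [FiniteDimensional k H]

lemma eq_zero_of_sl_eq_zero (ht : IsIntegral (k := k) t) (h1 : counit (R := k) t = 1)
    {f : H →ₗ[k] k} (hf : sl f t = 0) : f = 0 := by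
  have h2 (a : H) : ∑ i ∈ (ℛ k t).index, f ((ℛ k t).left i * a) • (ℛ k t).right i = 0 := by
    have := sl_fmulR ht f a
    rwa [hf, zero_mul, sl_eq_sum] at this
  ext b
  have h3 : b = ∑ i ∈ (ℛ k t).index, (ℛ k t).left i * (antipode k ((ℛ k t).right i) * b) := by
    simp_rw [← mul_assoc]
    rw [← Finset.sum_mul, sum_mul_antipode, h1, one_smul, one_mul]
  let e := Module.finBasis k H
  have h4 (x y : H) : f (x * y) = ∑ j, e.repr y j * f (x * e j) := by
    conv_lhs => rw [← e.sum_repr y]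
    simp only [Finset.mul_sum, map_sum, mul_smul_comm, map_smul, smul_eq_mul]
  rw [h3, map_sum, Finset.sum_congr rfl fun i _ => h4 _ _, Finset.sum_comm]
  refine Finset.sum_eq_zero fun j _ => ?_
  have := congrArg (fun z => e.repr (antipode k z * b) j) (h2 (e j))
  simpa [Finset.sum_mul, Finsupp.finsetSum_apply, mul_comm] using this

lemma exists_sl_eq (ht : IsIntegral (k := k) t) (h1 : counit (R := k) t = 1) (x : H) :
    ∃ f : H →ₗ[k] k, sl f t = x := by
  let F : (H →ₗ[k] k) →ₗ[k] H :=
    { toFun := fun f => sl f t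
      map_add' := fun f g => sl_add f g t
      map_smul' := fun c f => sl_smul c f t }
  have hinj : Function.Injective F :=
    (injective_iff_map_eq_zero F).2 fun f hf => eq_zero_of_sl_eq_zero ht h1 hf
  have := (LinearMap.injective_iff_surjective_of_finrank_eq_finrank
    (Subspace.dual_finrank_eq (K := k) (V := H))).1 hinj
  exact this x

lemma sl_injective (ht : IsIntegral (k := k) t) (h1 : counit (R := k) t = 1)
    {f g : H →ₗ[k] k} (hfg : sl f t = sl g t) : f = g := by
  rw [← sub_eq_zero]
  apply eq_zero_of_sl_eq_zero ht h1
  rw [sub_eq_add_neg, ← neg_one_smul k g, sl_add, sl_smul, hfg]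
  simp

lemma eq_of_forall_dual {V : Type*} [AddCommGroup V] [Module k V] {a b : V}
    (h : ∀ f : V →ₗ[k] k, f a = f b) : a = b := by
  rw [← sub_eq_zero, ← Module.forall_dual_apply_eq_zero_iff k]
  intro f
  rw [map_sub, h f, sub_self]

lemma antipode_injective (ht : IsIntegral (k := k) t) (h1 : counit (R := k) t = 1) :
    Function.Injective (antipode k (A := H)) := by
  rw [injective_iff_map_eq_zero]
  intro a ha
  refine eq_of_forall_dual (k := k) fun f => ?_
  have : fmulR f a = 0 := eq_zero_of_sl_eq_zero ht h1 (by rw [sl_fmulR ht, ha, mul_zero])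
  simpa using congrArg (fun g => g 1) this

lemma antipode_surjective (ht : IsIntegral (k := k) t) (h1 : counit (R := k) t = 1) :
    Function.Surjective (antipode k (A := H)) :=
  LinearMap.injective_iff_surjective.1 (antipode_injective ht h1)

/-- A dual integral `l` matched with the normalized integral `t`. -/
structure IsDualPair (t : H) (l : H →ₗ[k] k) : Prop where
  int : IsIntegral (k := k) t
  counit_eq : counit (R := k) t = 1
  sl_eq : sl l t = 1

lemma exists_dualPair (k : Type*) {H : Type*} [Field k] [Ring H] [HopfAlgebra k H]
    [FiniteDimensional k H] [IsSemisimpleRing H] :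
    ∃ (t : H) (l : H →ₗ[k] k), IsDualPair t l := by
  obtain ⟨t, ht, h1⟩ := exists_integral k (H := H)
  obtain ⟨l, hl⟩ := exists_sl_eq ht h1 1
  exact ⟨t, l, ht, h1, hl⟩

namespace IsDualPair
variable {l : H →ₗ[k] k} (P : IsDualPair t l)
include P

omit [FiniteDimensional k H] in
lemma apply_self : l t = 1 := by
  rw [← counit_sl, P.sl_eq, Bialgebra.counit_one]

omit P [FiniteDimensional k H] in
lemma sl_one (g : H →ₗ[k] k) : sl g (1 : H) = g 1 • 1 := by
  rw [sl_apply, Bialgebra.comul_one, Algebra.TensorProduct.one_def]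
  simp

lemma sl (h : H) : HopfSemisimple.sl l h = l h • 1 := by
  refine eq_of_forall_dual (k := k) fun g => ?_
  have : g ∘ₗ HopfSemisimple.sl l = g 1 • l := by
    apply sl_injective P.int P.counit_eq
    rw [← sl_sl, sl_smul, P.sl_eq, sl_one]
  have := congrArg (fun f => f h) this
  simpa [mul_comm] using this

lemma eq_smul {m : H →ₗ[k] k} (hm : ∀ h, HopfSemisimple.sl m h = m h • 1) : m = m t • l := by
  apply sl_injective P.int P.counit_eq
  rw [sl_smul, P.sl_eq, hm]

omit [FiniteDimensional k H] in
lemma sl_fmulR (b : H) : HopfSemisimple.sl (fmulR l b) t = antipode k b := by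
  rw [HopfSemisimple.sl_fmulR P.int, P.sl_eq, one_mul]

omit [FiniteDimensional k H] in
lemma sl_fmulL (a : H) : HopfSemisimple.sl (fmulL (antipode k a) l) t = a := by
  rw [← mul_sl P.int, P.sl_eq, mul_one]

lemma nakayama (b x : H) : l (antipode k (antipode k b) * x) = l (x * b) := by
  have : fmulL (antipode k (antipode k b)) l = fmulR l b := by
    apply sl_injective P.int P.counit_eq
    rw [P.sl_fmulL, P.sl_fmulR]
  exact congrArg (fun f => f x) this

lemma antipode_inj : Function.Injective (antipode k (A := H)) :=
  antipode_injective P.int P.counit_eq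

lemma antipode_surj : Function.Surjective (antipode k (A := H)) :=
  antipode_surjective P.int P.counit_eq

lemma eq_of_forall_apply_mul {a b : H} (h : ∀ x, l (x * a) = l (x * b)) : a = b := by
  apply P.antipode_inj
  rw [← P.sl_fmulR, ← P.sl_fmulR, show fmulR l a = fmulR l b from LinearMap.ext h]

lemma exists_eq_fmulR (f : H →ₗ[k] k) : ∃ a, f = fmulR l a := by
  obtain ⟨a, ha⟩ := P.antipode_surj (HopfSemisimple.sl f t)
  refine ⟨a, sl_injective P.int P.counit_eq ?_⟩
  rw [P.sl_fmulR, ha]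

lemma sr (h : H) : HopfSemisimple.sr l h = l h • HopfSemisimple.sr l t := by
  refine eq_of_forall_dual (k := k) fun f => ?_
  have h1 : f ∘ₗ HopfSemisimple.sr l = l ∘ₗ HopfSemisimple.sl f := by
    ext x; exact apply_sr f l x
  have := P.eq_smul (m := f ∘ₗ HopfSemisimple.sr l) fun h => by
    rw [h1, ← sl_sl, P.sl]; rfl
  have := congrArg (fun f => f h) this
  simpa [mul_comm] using this

lemma isGroupLike : IsGroupLikeElem k (HopfSemisimple.sr l t) where
  counit_eq_one := by rw [counit_sr, P.apply_self]
  comul_eq_tmul_self := by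
    have h1 : HopfSemisimple.sr l = l.smulRight (HopfSemisimple.sr l t) := by
      ext x; exact P.sr x
    rw [comul_sr]
    conv_lhs => rw [h1, comul_eq t]
    conv_rhs => arg 2; rw [sr_eq_sum]
    simp [sum_tmul, smul_tmul']

lemma antipode_self : antipode k t = t := by
  obtain ⟨s, hs⟩ := P.antipode_surj t
  have h3 : antipode k t * antipode k s = counit (R := k) s • antipode k t := by
    rw [← antipode_mul_antidistrib, P.int.mul_left, map_smul]
  rw [hs, P.int.mul_left, counit_antipode, P.counit_eq, one_smul, ← counit_antipode (R := k) s,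
    hs, P.counit_eq, one_smul] at h3
  exact h3.symm

lemma apply_antipode (x : H) : l (antipode k x) = l (x * HopfSemisimple.sr l t) := by
  obtain ⟨a, ha⟩ := P.exists_eq_fmulR (l ∘ₗ antipode k)
  have h1 : antipode k (antipode k a) = HopfSemisimple.sr l t := by
    rw [← P.sl_fmulR a, ← ha, HopfSemisimple.sr_apply]
    conv_rhs => rw [← P.antipode_self, comul_antipode, comul_eq]
    rw [sl_eq_sum]
    simp
  have h2 : a = HopfSemisimple.sr l t := by
    apply P.antipode_inj
    apply P.antipode_inj
    rw [h1, P.isGroupLike.antipode_antipode]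
  rw [← h2]
  exact congrArg (fun f => f x) ha

lemma antipode_four (y : H) : antipode k (antipode k (antipode k (antipode k y))) *
    HopfSemisimple.sr l t = HopfSemisimple.sr l t * y := by
  apply P.eq_of_forall_apply_mul
  intro x
  rw [← mul_assoc, ← mul_assoc, ← P.apply_antipode, antipode_mul_antidistrib, P.nakayama,
    ← antipode_mul_antidistrib, P.apply_antipode, mul_assoc, P.nakayama]

lemma exists_pow_eq_one : ∃ m : ℕ, 0 < m ∧ (HopfSemisimple.sr l t) ^ m = 1 := by
  have : Finite (GroupLike k H) := (linearIndep_groupLikeVal (R := k) (A := H)).finite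
  let g : GroupLike k H := ⟨HopfSemisimple.sr l t, P.isGroupLike⟩
  obtain ⟨m, hm, h⟩ := isOfFinOrder_iff_pow_eq_one.1 (isOfFinOrder_of_finite g)
  exact ⟨m, hm, by simpa [g] using congrArg GroupLike.val h⟩

lemma trace_eq (T : H →ₗ[k] H) : LinearMap.trace k H T =
    ∑ i ∈ (ℛ k t).index, l (antipode k (T ((ℛ k t).right i)) * (ℛ k t).left i) := by
  have : T = ∑ i ∈ (ℛ k t).index,
      (fmulR l ((ℛ k t).left i) ∘ₗ antipode k).smulRight (T ((ℛ k t).right i)) := by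
    ext h
    conv_lhs => rw [← P.sl_fmulL h, sl_eq_sum]
    simp
  conv_lhs => rw [this]
  simp [LinearMap.trace_smulRight]

lemma trace_antipode_sq : LinearMap.trace k H (antipode k ∘ₗ antipode k) = l 1 := by
  rw [P.trace_eq]
  simp only [LinearMap.comp_apply, P.nakayama]
  rw [← map_sum, sum_mul_antipode, P.counit_eq, one_smul]

end IsDualPair
end Frobenius

section Trace
variable {k : Type*} [Field k]

lemma exists_nat_trace_eq {V : Type*} [AddCommGroup V] [Module k V] [FiniteDimensional k V]
    {e : Module.End k V} (he : e * e = e) : ∃ n : ℕ, LinearMap.trace k V e = n :=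
  ⟨_, (LinearMap.IsIdempotentElem.isProj_range e he).trace⟩

variable [CharZero k]

lemma trace_pow_eq_sum {V : Type*} [AddCommGroup V] [Module k V] [FiniteDimensional k V]
    {N : ℕ} (hN : 0 < N) {z : k} (hz : IsPrimitiveRoot z N) {M : Module.End k V}
    (hM : M ^ N = 1) : ∃ m : ℕ → ℕ, ∀ r : ℕ, LinearMap.trace k V (M ^ r) =
      ∑ j ∈ Finset.range N, (m j : k) * (z ^ r) ^ j := by
  have hN0 : (N : k) ≠ 0 := Nat.cast_ne_zero.2 hN.ne'
  have hz0 : z ≠ 0 := hz.ne_zero hN.ne'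
  let E : ℕ → Module.End k V := fun j => (N : k)⁻¹ • ∑ i ∈ Finset.range N, (z⁻¹ ^ j) ^ i • M ^ i
  have hME (j : ℕ) : M * E j = z ^ j • E j := by
    have h1 : ∑ i ∈ Finset.range N, (z⁻¹ ^ j) ^ (i + 1) • M ^ (i + 1) =
        ∑ i ∈ Finset.range N, (z⁻¹ ^ j) ^ i • M ^ i := by
      have h2 := Finset.sum_range_succ (fun i => (z⁻¹ ^ j) ^ i • M ^ i) N
      rw [Finset.sum_range_succ'] at h2
      have h3 : (z⁻¹ ^ j) ^ N = 1 := by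
        rw [← pow_mul, mul_comm, pow_mul, inv_pow, hz.pow_eq_one, inv_one, one_pow]
      rw [h3, hM] at h2
      simpa using h2
    have h4 : M * E j = z ^ j • (N : k)⁻¹ •
        ∑ i ∈ Finset.range N, (z⁻¹ ^ j) ^ (i + 1) • M ^ (i + 1) := by
      simp only [E, mul_smul_comm, Finset.mul_sum, ← pow_succ']
      rw [smul_comm, Finset.smul_sum (r := z ^ j)]
      congr 1
      refine Finset.sum_congr rfl fun i _ => ?_
      rw [smul_smul]
      congr 1
      rw [pow_succ', ← mul_assoc, ← mul_pow, mul_inv_cancel₀ hz0, one_pow, one_mul]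
    rw [h4, h1]
  have hMrE (r j : ℕ) : M ^ r * E j = (z ^ j) ^ r • E j := by
    induction r with
    | zero => simp
    | succ r ih => rw [pow_succ', mul_assoc, ih, mul_smul_comm, hME, smul_smul, pow_succ]
  have hEE (j : ℕ) : E j * E j = E j := by
    conv_lhs => enter [1]; simp only [E]
    simp only [smul_mul_assoc, Finset.sum_mul, hMrE, smul_smul, ← mul_pow]
    rw [inv_mul_cancel₀ hz0]
    simp [← Nat.cast_smul_eq_nsmul k, smul_smul, inv_mul_cancel₀ hN0]
  have hsum : ∑ j ∈ Finset.range N, E j = 1 := by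
    simp only [E, ← Finset.smul_sum]
    rw [Finset.sum_comm]
    simp only [← Finset.sum_smul]
    rw [Finset.sum_eq_single 0]
    · simp [← Nat.cast_smul_eq_nsmul k, smul_smul, inv_mul_cancel₀ hN0]
    · intro i hi hi0
      have hi' := Finset.mem_range.1 hi
      have h1 : (z⁻¹) ^ i ≠ 1 := hz.inv.pow_ne_one_of_pos_of_lt hi0 hi'
      have h2 : ∑ j ∈ Finset.range N, (z⁻¹ ^ j) ^ i = 0 := by
        have := mul_geom_sum (z⁻¹ ^ i) N
        rw [← pow_mul z⁻¹ i N, mul_comm i N, pow_mul, inv_pow z N, hz.pow_eq_one, inv_one,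
          one_pow, sub_self] at this
        rw [← (mul_eq_zero.1 this).resolve_left (sub_ne_zero.2 h1)]
        exact Finset.sum_congr rfl fun j _ => by rw [← pow_mul, ← pow_mul, mul_comm]
      rw [h2, zero_smul]
    · intro h; exact absurd (Finset.mem_range.2 hN) h
  choose m hm using fun j => exists_nat_trace_eq (k := k) (hEE j)
  refine ⟨m, fun r => ?_⟩
  conv_lhs => rw [← mul_one (M ^ r), ← hsum, Finset.mul_sum, map_sum]
  refine Finset.sum_congr rfl fun j _ => ?_
  rw [hMrE, map_smul, hm, smul_eq_mul, mul_comm, ← pow_mul, ← pow_mul, mul_comm j]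

lemma aeval_primitiveRoot_eq_zero_iff {N : ℕ} (hN : 0 < N) {z : k} (hz : IsPrimitiveRoot z N)
    {w : ℂ} (hw : IsPrimitiveRoot w N) (p : Polynomial ℤ) :
    Polynomial.aeval z p = 0 ↔ Polynomial.aeval w p = 0 := by
  rw [minpoly.isIntegrallyClosed_dvd_iff (hz.isIntegral hN),
    minpoly.isIntegrallyClosed_dvd_iff (hw.isIntegral hN),
    ← Polynomial.cyclotomic_eq_minpoly hz hN, ← Polynomial.cyclotomic_eq_minpoly hw hN]

lemma sum_primitiveRoot_eq_zero {N : ℕ} (hN : 0 < N) {z : k} (hz : IsPrimitiveRoot z N)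
    {ι : Type*} [Fintype ι] (m : ι → ℕ → ℕ)
    (h : ∑ i, (∑ j ∈ Finset.range N, (m i j : k) * (z ^ 1) ^ j) *
      (∑ j ∈ Finset.range N, (m i j : k) * (z ^ (N - 1)) ^ j) = 0) (i : ι) :
    ∑ j ∈ Finset.range N, (m i j : k) * (z ^ 1) ^ j = 0 := by
  have hw := Complex.isPrimitiveRoot_exp N hN.ne'
  set w := Complex.exp (2 * Real.pi * Complex.I / N)
  let p : ι → ℕ → Polynomial ℤ := fun i r =>
    ∑ j ∈ Finset.range N, (m i j : Polynomial ℤ) * ((Polynomial.X ^ r) ^ j)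
  have hp : ∀ {R : Type _} [CommRing R] (x : R) (i r), Polynomial.aeval x (p i r) =
      ∑ j ∈ Finset.range N, (m i j : R) * (x ^ r) ^ j := by
    intro R _ x i r
    simp [p]
  have hconj (i : ι) : Polynomial.aeval w (p i (N - 1)) =
      starRingEnd ℂ (Polynomial.aeval w (p i 1)) := by
    have h1 : starRingEnd ℂ w = w ^ (N - 1) := by
      have h2 : starRingEnd ℂ w * w = 1 := by
        rw [mul_comm, Complex.mul_conj, Complex.normSq_eq_norm_sq, hw.norm'_eq_one hN.ne']
        simp
      have h3 : w ^ (N - 1) * w = 1 := by rw [← pow_succ, Nat.sub_add_cancel hN, hw.pow_eq_one]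
      exact mul_right_cancel₀ (hw.ne_zero hN.ne') (h2.trans h3.symm)
    rw [hp, hp]
    simp [h1]
  have h1 : Polynomial.aeval z (∑ i, p i 1 * p i (N - 1)) = 0 := by
    simp only [map_sum, map_mul]
    rw [← h]
    refine Finset.sum_congr rfl fun i _ => ?_
    simp [p]
  rw [aeval_primitiveRoot_eq_zero_iff hN hz hw] at h1
  simp only [map_sum, map_mul, hconj, Complex.mul_conj] at h1
  rw [← Complex.ofReal_sum, Complex.ofReal_eq_zero,
    Finset.sum_eq_zero_iff_of_nonneg fun i _ => Complex.normSq_nonneg _] at h1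
  have h2 := Complex.normSq_eq_zero.1 (h1 i (Finset.mem_univ i))
  rw [← aeval_primitiveRoot_eq_zero_iff hN hz hw] at h2
  simpa [p] using h2

lemma trace_eq_zero_of_sum [IsAlgClosed k] {ι : Type*} [Fintype ι] {d : ι → ℕ}
    (w w' : ∀ i, Matrix (Fin (d i)) (Fin (d i)) k) (hww : ∀ i, w i * w' i = 1)
    {N : ℕ} (hN : 0 < N) (c : ι → k) (hc : ∀ i, c i ≠ 0) (hw : ∀ i, w i ^ N = c i • 1)
    (h : ∑ i, (w i).trace * (w' i).trace = 0) (i : ι) : (w i).trace = 0 := by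
  have : NeZero N := ⟨hN.ne'⟩
  obtain ⟨z, hz⟩ := HasEnoughRootsOfUnity.exists_primitiveRoot k N
  choose s hs using fun i => IsAlgClosed.exists_pow_nat_eq (c i) hN
  have hs0 (i : ι) : s i ≠ 0 := fun h0 => hc i (by rw [← hs i, h0, zero_pow hN.ne'])
  let M : ∀ i, Matrix (Fin (d i)) (Fin (d i)) k := fun i => (s i)⁻¹ • w i
  have hM (i : ι) : M i ^ N = 1 := by
    simp only [M, smul_pow, hw i, smul_smul, inv_pow, hs i]
    rw [inv_mul_cancel₀ (hc i), one_smul]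
  have hw1 (i : ι) : w i = s i • M i := by simp [M, smul_smul, mul_inv_cancel₀ (hs0 i)]
  have hw2 (i : ι) : w' i = (s i)⁻¹ • M i ^ (N - 1) := by
    have h1 : (s i)⁻¹ • M i ^ (N - 1) * w i = 1 := by
      rw [hw1 i, smul_mul_smul_comm, inv_mul_cancel₀ (hs0 i), ← pow_succ, Nat.sub_add_cancel hN,
        hM, one_smul]
    exact (left_inv_eq_right_inv h1 (hww i)).symm
  have hlin (i : ι) : (Matrix.toLinAlgEquiv' (M i) : Module.End k (Fin (d i) → k)) ^ N = 1 := by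
    rw [← map_pow, hM, map_one]
  choose m hm using fun i => trace_pow_eq_sum hN hz (hlin i)
  have htr (i : ι) (r : ℕ) : (M i ^ r).trace =
      ∑ j ∈ Finset.range N, (m i j : k) * (z ^ r) ^ j := by
    rw [← hm, ← map_pow]
    exact (Matrix.trace_toLin'_eq _).symm
  have htw (i : ι) : (w i).trace = s i * (M i).trace :=
    (congrArg Matrix.trace (hw1 i)).trans (Matrix.trace_smul _ _)
  have htw' (i : ι) : (w' i).trace = (s i)⁻¹ * (M i ^ (N - 1)).trace :=
    (congrArg Matrix.trace (hw2 i)).trans (Matrix.trace_smul _ _)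
  have := sum_primitiveRoot_eq_zero hN hz m (by
    rw [← h]
    refine Finset.sum_congr rfl fun i _ => ?_
    rw [← htr, ← htr, htw, htw', pow_one, mul_mul_mul_comm, mul_inv_cancel₀ (hs0 i), one_mul]) i
  rw [← htr, pow_one] at this
  rw [htw, this, mul_zero]

lemma trace_pi_matrix {k : Type*} [Field k] {ι : Type*} [Fintype ι] [DecidableEq ι] {d : ι → ℕ}
    (w w' : ∀ i, Matrix (Fin (d i)) (Fin (d i)) k)
    (T : Module.End k (∀ i, Matrix (Fin (d i)) (Fin (d i)) k)) (hT : ∀ x, T x = w * x * w') :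
    LinearMap.trace k _ T = ∑ i, (w i).trace * (w' i).trace := by
  rw [LinearMap.trace_eq_matrix_trace k (Pi.basis fun i => Matrix.stdBasis k (Fin (d i)) (Fin (d i)))]
  rw [Matrix.trace, Fintype.sum_sigma]
  refine Finset.sum_congr rfl fun i _ => ?_
  rw [Fintype.sum_prod_type, Matrix.trace, Matrix.trace, Finset.sum_mul_sum]
  refine Finset.sum_congr rfl fun a _ => Finset.sum_congr rfl fun b _ => ?_
  rw [Matrix.diag_apply, LinearMap.toMatrix_apply, Pi.basis_apply, Matrix.stdBasis_eq_single, hT,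
    Pi.basis_repr]
  have : ∀ (A : Matrix (Fin (d i)) (Fin (d i)) k) p, (Matrix.stdBasis k _ _).repr A p = A p.1 p.2 :=
    fun A p => rfl
  simp [this, Matrix.mul_apply, Matrix.single_apply, ite_and]

end Trace

lemma eq_one_of_involution {k V : Type*} [Field k] [CharZero k] [AddCommGroup V] [Module k V]
    [FiniteDimensional k V] {s e : Module.End k V} {x : V} (hx : x ≠ 0) (hsx : s x = x)
    (hs : s * s = 1) (he : e * e = e) (hse : s * e = e * s)
    (htr : (Module.finrank k V : k) * LinearMap.trace k V (s * e) = LinearMap.trace k V s)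
    (h0 : LinearMap.trace k V s ≠ 0) : s = 1 := by
  have two : (2 : k) ≠ 0 := two_ne_zero
  have key : ∀ c : k, c * c = 1 → ((2 : k)⁻¹ • (1 + c • s)) * ((2 : k)⁻¹ • (1 + c • s)) =
      (2 : k)⁻¹ • (1 + c • s) := by
    intro c hc
    simp only [smul_mul_smul_comm, add_mul, mul_add, one_mul, mul_one, hs, hc, one_smul]
    rw [show 1 + c • s + (c • s + 1) = (2 : k) • (1 + c • s) by rw [two_smul]; abel, smul_smul]
    congr 1
    field_simp
  have comm : ∀ c : k, Commute ((2 : k)⁻¹ • (1 + c • s)) e := fun c =>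
    (Commute.add_left (Commute.one_left e) (Commute.smul_left hse c)).smul_left _
  have key' : ∀ c : k, c * c = 1 →
      (((2 : k)⁻¹ • (1 + c • s)) * e) * (((2 : k)⁻¹ • (1 + c • s)) * e) =
      ((2 : k)⁻¹ • (1 + c • s)) * e := by
    intro c hc
    rw [Commute.mul_mul_mul_comm (comm c).symm, key c hc, he]
  obtain ⟨p, hp⟩ := exists_nat_trace_eq (key 1 (by ring))
  obtain ⟨q, hq⟩ := exists_nat_trace_eq (key (-1) (by ring))
  obtain ⟨a, ha⟩ := exists_nat_trace_eq (key' 1 (by ring))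
  obtain ⟨b, hb⟩ := exists_nat_trace_eq (key' (-1) (by ring))
  have hp' := hp
  have hq' := hq
  simp only [smul_mul_assoc, add_mul, one_mul, map_smul, map_add, smul_eq_mul,
    LinearMap.trace_one] at hp hq ha hb
  set n := Module.finrank k V
  set T := LinearMap.trace k V s
  have h1 : (n : k) * ((a : k) - b) = p - q := by
    rw [← ha, ← hb, ← hp, ← hq]
    linear_combination htr
  have h2 : (p : k) + q = n := by
    rw [← hp, ← hq]
    field_simp
    ring
  have h3 : (p : k) - q ≠ 0 := by
    rw [← hp, ← hq]
    intro h; apply h0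
    linear_combination h
  have hp0 : p ≠ 0 := by
    rintro rfl
    have := LinearMap.IsIdempotentElem.eq_zero_of_trace_eq_zero (key 1 (by ring))
      (by rw [hp', Nat.cast_zero])
    have h4 := congrArg (fun f => f x) this
    simp only [LinearMap.smul_apply, LinearMap.add_apply, Module.End.one_apply, one_smul, hsx,
      LinearMap.zero_apply, ← two_smul k x, smul_smul, inv_mul_cancel₀ two] at h4
    exact hx h4
  have hq0 : q = 0 := by
    have h1' : (n : ℤ) * ((a : ℤ) - b) = p - q := by exact_mod_cast h1
    have h2' : (p : ℤ) + q = n := by exact_mod_cast h2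
    have h3' : (p : ℤ) - q ≠ 0 := by exact_mod_cast h3
    by_contra hq0
    have hlt : |(p : ℤ) - q| < n := by
      rw [abs_lt]; omega
    exact h3' (Int.eq_zero_of_abs_lt_dvd ⟨_, h1'.symm⟩ hlt)
  have := LinearMap.IsIdempotentElem.eq_zero_of_trace_eq_zero (key (-1) (by ring))
      (by rw [hq', hq0, Nat.cast_zero])
  rw [smul_eq_zero_iff_right (inv_ne_zero two), neg_one_smul, ← sub_eq_add_neg, sub_eq_zero] at this
  exact this.symm

section LarsonRadford
variable {k H : Type*} [Field k] [Ring H] [HopfAlgebra k H] [FiniteDimensional k H] {t : H}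
variable {l : H →ₗ[k] k}

omit [FiniteDimensional k H] in
lemma exists_smul_one_of_central {n : ℕ} {d : Fin n → ℕ}
    (φ : H ≃ₐ[k] ∀ i : Fin n, Matrix (Fin (d i)) (Fin (d i)) k) {x : H}
    (hx : ∀ y, x * y = y * x) (i : Fin n) : ∃ c : k, φ x i = c • 1 := by
  have : φ x i ∈ Set.range (Matrix.scalar (Fin (d i))) := by
    rw [Matrix.mem_range_scalar_iff_commute_single']
    intro a b
    have h1 := congrArg (fun z => φ z i) (hx (φ.symm (Pi.single i (Matrix.single a b 1))))
    simp only [map_mul, AlgEquiv.apply_symm_apply, Pi.mul_apply, Pi.single_eq_same] at h1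
    exact h1.symm
  obtain ⟨c, hc⟩ := this
  exact ⟨c, by rw [← hc, Matrix.scalar_apply, Matrix.smul_one_eq_diagonal]⟩

lemma IsDualPair.apply_one_ne_zero [CharZero k] [IsAlgClosed k] [IsSemisimpleRing H]
    (P : IsDualPair t l) : l 1 ≠ 0 := by
  intro hl1
  obtain ⟨n, d, hd, ⟨φ⟩⟩ := IsSemisimpleRing.exists_algEquiv_pi_matrix_of_isAlgClosed k H
  let τ : H →ₗ[k] k := ∑ i, Matrix.traceLinearMap (Fin (d i)) k k ∘ₗ LinearMap.proj i ∘ₗ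
    φ.toLinearMap
  have τ_apply (x : H) : τ x = ∑ i, (φ x i).trace := by simp [τ]
  have τ_comm (x y : H) : τ (x * y) = τ (y * x) := by
    simp only [τ_apply, map_mul, Pi.mul_apply]
    exact Finset.sum_congr rfl fun i _ => Matrix.trace_mul_comm _ _
  have τ_nondeg (z : H) (hz : ∀ x, τ (x * z) = 0) : z = 0 := by
    apply φ.injective
    rw [map_zero]
    funext i
    rw [Pi.zero_apply, Matrix.ext_iff_trace_mul_left]
    intro X
    have h1 := hz (φ.symm (Pi.single i X))
    rw [τ_apply, Finset.sum_eq_single i] at h1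
    · simpa using h1
    · intro j _ hj
      simp [Pi.single_eq_of_ne hj]
    · simp
  obtain ⟨u, hu⟩ := P.exists_eq_fmulR τ
  have hτ (x : H) : τ x = l (x * u) := by rw [hu]; rfl
  have hinj (z : H) (hz : z * u = 0) : z = 0 :=
    τ_nondeg z fun x => by rw [hτ, mul_assoc, hz, mul_zero, map_zero]
  obtain ⟨v, hv⟩ : ∃ v, v * u = 1 := by
    have : Function.Injective (LinearMap.mulRight k u) :=
      (injective_iff_map_eq_zero _).2 hinj
    exact LinearMap.injective_iff_surjective.1 this 1
  have hv' : u * v = 1 := by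
    rw [← sub_eq_zero]
    apply hinj
    rw [sub_mul, mul_assoc, hv, mul_one, one_mul, sub_self]
  have hS' (y : H) : antipode k (antipode k y) * u = u * y := by
    apply P.eq_of_forall_apply_mul
    intro x
    rw [← mul_assoc, ← hτ, τ_comm, hτ, mul_assoc, P.nakayama, mul_assoc]
  have hS (y : H) : antipode k (antipode k y) = u * y * v := by
    rw [← hS', mul_assoc, hv', mul_one]
  have htr : ∑ i, (φ v i).trace * (φ u i).trace = 0 := by
    rw [← hl1, ← P.trace_antipode_sq, ← LinearMap.trace_conj' _ φ.toLinearEquiv,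
      trace_pi_matrix (φ u) (φ v)]
    · exact Finset.sum_congr rfl fun i _ => mul_comm _ _
    · intro x
      simp [LinearEquiv.conj_apply, hS]
  obtain ⟨m, hm, hGm⟩ := P.exists_pow_eq_one
  set G := HopfSemisimple.sr l t
  have hGu : Commute v G := by
    have h1 := hS' G
    rw [P.isGroupLike.antipode_antipode] at h1
    change v * G = G * v
    calc v * G = v * (G * u) * v := by rw [mul_assoc, mul_assoc, hv', mul_one]
      _ = G * v := by rw [h1, ← mul_assoc, hv, one_mul]
  have hcentral (y : H) : v * v * G * y = y * (v * v * G) := by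
    have h1 := P.antipode_four y
    rw [hS, hS] at h1
    rw [mul_assoc (v * v), ← h1]
    calc v * v * (u * (u * y * v) * v * G) = v * (v * u) * u * y * v * v * G := by
          simp only [mul_assoc]
      _ = y * (v * v * G) := by rw [hv, mul_one, hv, one_mul]; simp only [mul_assoc]
  have hpow (y : H) : v ^ (2 * m) * y = y * v ^ (2 * m) := by
    have h1 : (v * v * G) ^ m = v ^ (2 * m) := by
      rw [(hGu.mul_left hGu).mul_pow, hGm, mul_one, ← pow_two, pow_mul]
    rw [← h1]
    exact (Commute.pow_left (hcentral y) m)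
  choose c hc using exists_smul_one_of_central φ hpow
  have hφ (i : Fin n) : φ v i * φ u i = 1 := by
    rw [← Pi.mul_apply, ← map_mul, hv, map_one, Pi.one_apply]
  have htr0 := trace_eq_zero_of_sum (φ v) (φ u) hφ (N := 2 * m) (by omega) c
    (fun i h0 => by
      have h1 := hc i
      rw [h0, zero_smul, map_pow, Pi.pow_apply] at h1
      have h2 : IsUnit (φ v i) := (Units.mkOfMulEqOne _ _ (hφ i)).isUnit
      have h3 := h2.pow (2 * m)
      rw [h1] at h3
      have := hd i
      exact not_isUnit_zero h3)
    (fun i => by rw [← hc i, map_pow, Pi.pow_apply]) htr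
  have h0 : l t = 0 := by
    rw [← mul_one t, ← hv, ← mul_assoc, ← hτ, τ_apply]
    refine Finset.sum_eq_zero fun i _ => ?_
    obtain ⟨c, hc⟩ := exists_smul_one_of_central φ
      (fun y => (P.int.mul_right y).trans (P.int.mul_left y).symm) i
    rw [map_mul, Pi.mul_apply, hc, smul_one_mul, Matrix.trace_smul, htr0, smul_zero]
  rw [P.apply_self] at h0
  exact one_ne_zero h0

/-- The character of the left regular representation. -/
def regChar (k H : Type*) [Field k] [Ring H] [Algebra k H] : H →ₗ[k] k :=
  LinearMap.trace k H ∘ₗ LinearMap.mul k H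

omit [FiniteDimensional k H] in
lemma regChar_apply (h : H) : regChar k H h = LinearMap.trace k H (LinearMap.mulLeft k h) := rfl

/-- The Galois map `a ⊗ b ↦ Δ(a) (1 ⊗ b)`. -/
def galoisMap (k H : Type*) [Field k] [Ring H] [HopfAlgebra k H] : H ⊗[k] H →ₗ[k] H ⊗[k] H :=
  LinearMap.mul' k (H ⊗[k] H) ∘ₗ TensorProduct.map comul (TensorProduct.mk k H H 1)

omit [FiniteDimensional k H] in
lemma galoisMap_tmul (a b : H) : galoisMap k H (a ⊗ₜ b) = comul (R := k) a * (1 ⊗ₜ b) := by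
  simp [galoisMap]

omit [FiniteDimensional k H] in
lemma galoisMap_surjective : Function.Surjective (galoisMap k H) := by
  rw [← LinearMap.range_eq_top, eq_top_iff, ← TensorProduct.span_tmul_eq_top, Submodule.span_le]
  rintro _ ⟨a, b, rfl⟩
  refine ⟨∑ i ∈ (ℛ k a).index, (ℛ k a).left i ⊗ₜ (antipode k ((ℛ k a).right i) * b), ?_⟩
  have h1 (y : H) : (1 : H) ⊗ₜ[k] (antipode k y * b) = (1 ⊗ₜ antipode k y) * (1 ⊗ₜ b) := by simp
  simp only [map_sum, galoisMap_tmul, h1, ← mul_assoc, ← Finset.sum_mul]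
  rw [comul_mul_one_tmul_antipode]
  simp

lemma regChar_sr (h : H) :
    regChar k H (sr (regChar k H) h) = (Module.finrank k H : k) * regChar k H h := by
  let e : (H ⊗[k] H) ≃ₗ[k] (H ⊗[k] H) := LinearEquiv.ofBijective (galoisMap k H)
    ⟨LinearMap.injective_iff_surjective.2 galoisMap_surjective, galoisMap_surjective⟩
  have h1 : e.conj (TensorProduct.map (LinearMap.mulLeft k h) LinearMap.id) =
      LinearMap.mulLeft k (comul (R := k) h) := by
    refine LinearMap.ext fun z => ?_
    obtain ⟨z, rfl⟩ := e.surjective z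
    rw [LinearEquiv.conj_apply_apply, LinearEquiv.symm_apply_apply]
    change galoisMap k H _ = comul (R := k) h * galoisMap k H z
    induction z with
    | zero => simp
    | tmul a b => simp [galoisMap_tmul, mul_assoc]
    | add a b ha hb => rw [map_add, map_add, ha, hb, map_add, mul_add]
  have h2 : LinearMap.trace k _ (LinearMap.mulLeft k (comul (R := k) h)) =
      regChar k H (sr (regChar k H) h) := by
    rw [sr_eq_sum, comul_eq h]
    have h3 (x y : H) : LinearMap.mulLeft k (x ⊗ₜ[k] y) =
        TensorProduct.map (LinearMap.mulLeft k x) (LinearMap.mulLeft k y) := by ext; simp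
    have h4 : LinearMap.mulLeft k (∑ i ∈ (ℛ k h).index, (ℛ k h).left i ⊗ₜ[k] (ℛ k h).right i) =
        ∑ i ∈ (ℛ k h).index, LinearMap.mulLeft k ((ℛ k h).left i ⊗ₜ[k] (ℛ k h).right i) :=
      map_sum (LinearMap.mul k (H ⊗[k] H)) _ _
    rw [h4]
    simp [h3, LinearMap.trace_tensorProduct', regChar_apply, mul_comm]
  rw [← h2, ← h1, LinearMap.trace_conj', LinearMap.trace_tensorProduct', LinearMap.trace_id,
    regChar_apply, mul_comm]

lemma IsDualPair.regChar_self (P : IsDualPair t l) : regChar k H t = 1 := by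
  have : LinearMap.mulLeft k t = (counit (R := k)).smulRight t := by
    ext x; simp [P.int.mul_right]
  rw [regChar_apply, this, LinearMap.trace_smulRight, P.counit_eq]

omit [FiniteDimensional k H] in
lemma comul_antipode_antipode (h : H) : comul (R := k) (antipode k (antipode k h)) =
    TensorProduct.map (antipode k ∘ₗ antipode k) (antipode k ∘ₗ antipode k)
      (comul (R := k) h) := by
  rw [comul_antipode, comul_antipode, comul_eq h]
  simp

lemma IsDualPair.regChar_antipode_antipode (P : IsDualPair t l) (h : H) :
    regChar k H (antipode k (antipode k h)) = regChar k H h := by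
  let e : H ≃ₗ[k] H := LinearEquiv.ofBijective (antipode k ∘ₗ antipode k)
    ⟨P.antipode_inj.comp P.antipode_inj, P.antipode_surj.comp P.antipode_surj⟩
  have h1 : e.conj (LinearMap.mulLeft k h) = LinearMap.mulLeft k (antipode k (antipode k h)) := by
    ext x
    obtain ⟨x, rfl⟩ := e.surjective x
    rw [LinearEquiv.conj_apply_apply, LinearEquiv.symm_apply_apply]
    change antipode k (antipode k (h * x)) = antipode k (antipode k h) * antipode k (antipode k x)
    rw [antipode_mul_antidistrib, antipode_mul_antidistrib]
  rw [regChar_apply, regChar_apply, ← h1, LinearMap.trace_conj']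

lemma IsDualPair.sr_regChar_antipode_antipode (P : IsDualPair t l) (h : H) :
    HopfSemisimple.sr (regChar k H) (antipode k (antipode k h)) =
      antipode k (antipode k (HopfSemisimple.sr (regChar k H) h)) := by
  rw [sr_apply, comul_antipode_antipode, sr_eq_sum, comul_eq h]
  simp [P.regChar_antipode_antipode]

lemma IsDualPair.trace_antipode_sq_comp_sr (P : IsDualPair t l) (f : H →ₗ[k] k) :
    LinearMap.trace k H ((antipode k ∘ₗ antipode k) ∘ₗ HopfSemisimple.sr f) = f t * l 1 := by
  rw [P.trace_eq]
  simp only [LinearMap.comp_apply, P.nakayama]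
  have h1 := mul_antipode_lTensor_comul_apply (R := k) (HopfSemisimple.sr f t)
  rw [comul_sr, comul_eq t] at h1
  simp only [map_sum, LinearMap.lTensor_tmul, LinearMap.mul'_apply, counit_sr] at h1
  rw [← map_sum, h1, Algebra.algebraMap_eq_smul_one, map_smul, smul_eq_mul]

omit [FiniteDimensional k H] in
lemma sr_one (f : H →ₗ[k] k) : sr f (1 : H) = f 1 • 1 := by
  rw [sr_apply, Bialgebra.comul_one, Algebra.TensorProduct.one_def]
  simp

omit [FiniteDimensional k H] in
lemma sr_smul (c : k) (f : H →ₗ[k] k) (h : H) : sr (c • f) h = c • sr f h := by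
  simp [sr_eq_sum, Finset.smul_sum, smul_smul]

variable [CharZero k] [IsAlgClosed k] [IsSemisimpleRing H]

lemma IsDualPair.sr_self (P : IsDualPair t l) : HopfSemisimple.sr l t = 1 := by
  have h1 := P.sr 1
  rw [sr_one] at h1
  exact (smul_right_injective H P.apply_one_ne_zero h1).symm

lemma IsDualPair.antipode_antipode_antipode_antipode (P : IsDualPair t l) (y : H) :
    antipode k (antipode k (antipode k (antipode k y))) = y := by
  have := P.antipode_four y
  rwa [P.sr_self, mul_one, one_mul] at this

lemma IsDualPair.antipode_antipode (P : IsDualPair t l) (y : H) :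
    antipode k (antipode k y) = y := by
  have hnt : Nontrivial H := ⟨⟨1, 0, fun h => by
    simpa using congrArg (counit (R := k)) h⟩⟩
  have hn : (Module.finrank k H : k) ≠ 0 := Nat.cast_ne_zero.2 Module.finrank_pos.ne'
  let s : Module.End k H := antipode k ∘ₗ antipode k
  let e : Module.End k H := (Module.finrank k H : k)⁻¹ • HopfSemisimple.sr (regChar k H)
  have hs : s = 1 := by
    refine eq_one_of_involution (s := s) (e := e) (x := 1) one_ne_zero ?_ ?_ ?_ ?_ ?_ ?_
    · simp [s]
    · ext x; exact P.antipode_antipode_antipode_antipode x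
    · ext x
      simp only [e, Module.End.mul_apply, LinearMap.smul_apply, map_smul, sr_sr]
      have : regChar k H ∘ₗ HopfSemisimple.sr (regChar k H) =
          (Module.finrank k H : k) • regChar k H := by
        ext h; exact regChar_sr h
      rw [this, sr_smul, smul_smul, smul_smul, inv_mul_cancel_right₀ hn]
    · ext x
      simp only [e, s, Module.End.mul_apply, LinearMap.smul_apply, map_smul, LinearMap.comp_apply,
        P.sr_regChar_antipode_antipode]
    · simp only [e, mul_smul_comm, map_smul, smul_eq_mul, s, Module.End.mul_eq_comp,
        P.trace_antipode_sq_comp_sr, P.regChar_self, P.trace_antipode_sq]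
      rw [one_mul, mul_inv_cancel_left₀ hn]
    · simp only [s, P.trace_antipode_sq]
      exact P.apply_one_ne_zero
  exact congrArg (fun f => f y) hs

end LarsonRadford

/-- A normalized two-sided Haar functional, together with the involutivity of the antipode. -/
structure IsHaar {k H : Type*} [Field k] [Ring H] [HopfAlgebra k H] (l : H →ₗ[k] k) : Prop where
  one : l 1 = 1
  sl : ∀ h, HopfSemisimple.sl l h = l h • 1
  sr : ∀ h, HopfSemisimple.sr l h = l h • 1
  antipode : ∀ h, l (antipode k h) = l h
  antipode_antipode : ∀ h : H, HopfAlgebra.antipode k (HopfAlgebra.antipode k h) = h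

lemma exists_isHaar (k H : Type*) [Field k] [Ring H] [HopfAlgebra k H] [FiniteDimensional k H]
    [CharZero k] [IsAlgClosed k] [IsSemisimpleRing H] : ∃ l : H →ₗ[k] k, IsHaar l := by
  obtain ⟨t, l, P⟩ := exists_dualPair k (H := H)
  refine ⟨(l 1)⁻¹ • l, ?_, fun h => ?_, fun h => ?_, fun h => ?_, P.antipode_antipode⟩
  · simp [P.apply_one_ne_zero]
  · rw [sl_smul, P.sl, LinearMap.smul_apply, smul_assoc]
  · rw [sr_smul, P.sr, P.sr_self, LinearMap.smul_apply, smul_assoc]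
  · rw [LinearMap.smul_apply, P.apply_antipode, P.sr_self, mul_one, LinearMap.smul_apply]

section Stable
variable {k H : Type*} [Field k] [Ring H] [HopfAlgebra k H]

/-- A subspace stable under both actions of `H*`. -/
structure IsStable (Y : Submodule k H) : Prop where
  sl : ∀ f : H →ₗ[k] k, ∀ y ∈ Y, sl f y ∈ Y
  sr : ∀ f : H →ₗ[k] k, ∀ y ∈ Y, sr f y ∈ Y

lemma IsStable.inf {X Y : Submodule k H} (hX : IsStable X) (hY : IsStable Y) :
    IsStable (X ⊓ Y) where
  sl f y hy := ⟨hX.sl f y hy.1, hY.sl f y hy.2⟩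
  sr f y hy := ⟨hX.sr f y hy.1, hY.sr f y hy.2⟩

lemma isStable_sSup {s : Set (Submodule k H)} (hs : ∀ Y ∈ s, IsStable Y) : IsStable (sSup s) where
  sl f y hy := by
    have : sSup s ≤ (sSup s).comap (HopfSemisimple.sl f) :=
      sSup_le fun Y hY z hz => le_sSup hY ((hs Y hY).sl f z hz)
    exact this hy
  sr f y hy := by
    have : sSup s ≤ (sSup s).comap (HopfSemisimple.sr f) :=
      sSup_le fun Y hY z hz => le_sSup hY ((hs Y hY).sr f z hz)
    exact this hy

lemma eq_zero_of_forall_slice {V W : Type*} [AddCommGroup V] [Module k V] [AddCommGroup W]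
    [Module k W] [FiniteDimensional k W] (z : V ⊗[k] W)
    (hz : ∀ f : W →ₗ[k] k, TensorProduct.rid k V (f.lTensor V z) = 0) : z = 0 := by
  let b := Module.finBasis k W
  have h1 (z : V ⊗[k] W) :
      ∑ j, TensorProduct.rid k V ((b.coord j).lTensor V z) ⊗ₜ b j = z := by
    induction z with
    | zero => simp
    | tmul v w =>
      conv_rhs => rw [← b.sum_repr w, tmul_sum]
      simp [smul_tmul']
    | add x y hx hy =>
      conv_rhs => rw [← hx, ← hy]
      simp only [map_add, add_tmul, Finset.sum_add_distrib]
  rw [← h1 z]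
  simp [hz]

variable [FiniteDimensional k H]

lemma IsStable.comul_mem {Y : Submodule k H} (hY : IsStable Y) {y : H} (hy : y ∈ Y) :
    comul (R := k) y ∈ LinearMap.range (TensorProduct.map Y.subtype Y.subtype) := by
  obtain ⟨π, hπ⟩ := Y.subtype.exists_leftInverse_of_injective (by simp)
  have hπ' (v : H) (hv : v ∈ Y) : Y.subtype (π v) = v :=
    congrArg Subtype.val (LinearMap.congr_fun hπ ⟨v, hv⟩)
  set p : H →ₗ[k] H := Y.subtype ∘ₗ π
  have h1 : p.rTensor H (comul (R := k) y) = comul (R := k) y := by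
    rw [← sub_eq_zero]
    refine eq_zero_of_forall_slice _ fun f => ?_
    rw [map_sub, map_sub, sub_eq_zero]
    have : TensorProduct.rid k H (f.lTensor H (p.rTensor H (comul (R := k) y))) =
        p (HopfSemisimple.sr f y) := by
      rw [sr_eq_sum, comul_eq y]; simp
    rw [this]
    exact hπ' _ (hY.sr f y hy)
  have h2 : p.lTensor H (comul (R := k) y) = comul (R := k) y := by
    apply (TensorProduct.comm k H H).injective
    rw [← sub_eq_zero]
    refine eq_zero_of_forall_slice _ fun f => ?_
    rw [map_sub, map_sub, sub_eq_zero]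
    have h3 : TensorProduct.rid k H (f.lTensor H (TensorProduct.comm k H H
        (p.lTensor H (comul (R := k) y)))) = p (HopfSemisimple.sl f y) := by
      rw [sl_eq_sum, comul_eq y]; simp
    have h4 : TensorProduct.rid k H (f.lTensor H (TensorProduct.comm k H H
        (comul (R := k) y))) = HopfSemisimple.sl f y := by
      rw [sl_eq_sum, comul_eq y]; simp
    rw [h3, h4]
    exact hπ' _ (hY.sl f y hy)
  refine ⟨TensorProduct.map π π (comul (R := k) y), ?_⟩
  conv_rhs => rw [← h1, ← h2]
  rw [comul_eq y]
  simp [p]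

omit [FiniteDimensional k H] in
lemma isStable_of_comul_mem {Y : Submodule k H}
    (hY : ∀ y ∈ Y, comul (R := k) y ∈ LinearMap.range (TensorProduct.map Y.subtype Y.subtype)) :
    IsStable Y := by
  have h1 (f : H →ₗ[k] k) (z : Y ⊗[k] Y) : TensorProduct.lid k H (f.rTensor H
      (TensorProduct.map Y.subtype Y.subtype z)) ∈ Y := by
    induction z with
    | zero => simp
    | tmul a b => simpa using Y.smul_mem _ b.2
    | add a b ha hb => simpa only [map_add] using Y.add_mem ha hb
  have h2 (f : H →ₗ[k] k) (z : Y ⊗[k] Y) : TensorProduct.rid k H (f.lTensor H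
      (TensorProduct.map Y.subtype Y.subtype z)) ∈ Y := by
    induction z with
    | zero => simp
    | tmul a b => simpa using Y.smul_mem _ a.2
    | add a b ha hb => simpa only [map_add] using Y.add_mem ha hb
  refine ⟨fun f y hy => ?_, fun f y hy => ?_⟩
  · obtain ⟨z, hz⟩ := hY y hy
    rw [sl_apply, ← hz]
    exact h1 f z
  · obtain ⟨z, hz⟩ := hY y hy
    rw [sr_apply, ← hz]
    exact h2 f z

lemma IsStable.mul {X Y : Submodule k H} (hX : IsStable X) (hY : IsStable Y) :
    IsStable (X * Y) := by
  have key (F : H ⊗[k] H →ₗ[k] H) (hF : ∀ x ∈ X, ∀ x' ∈ X, ∀ y ∈ Y, ∀ y' ∈ Y,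
      F ((x * y) ⊗ₜ (x' * y')) ∈ X * Y) (u : X ⊗[k] X) (v : Y ⊗[k] Y) :
      F (TensorProduct.map X.subtype X.subtype u * TensorProduct.map Y.subtype Y.subtype v) ∈
        X * Y := by
    induction u with
    | zero => simp
    | add a b ha hb => simpa only [map_add, add_mul] using Submodule.add_mem _ ha hb
    | tmul a b =>
      induction v with
      | zero => simp
      | add c d hc hd => simpa only [map_add, mul_add] using Submodule.add_mem _ hc hd
      | tmul c d => simpa using hF _ a.2 _ b.2 _ c.2 _ d.2
  have key' (F : H ⊗[k] H →ₗ[k] H) (hF : ∀ x ∈ X, ∀ x' ∈ X, ∀ y ∈ Y, ∀ y' ∈ Y,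
      F ((x * y) ⊗ₜ (x' * y')) ∈ X * Y) (z : H) (hz : z ∈ X * Y) :
      F (comul (R := k) z) ∈ X * Y := by
    induction hz using Submodule.mul_induction_on' with
    | mem_mul_mem x hx y hy =>
      obtain ⟨u, hu⟩ := hX.comul_mem hx
      obtain ⟨v, hv⟩ := hY.comul_mem hy
      rw [Bialgebra.comul_mul, ← hu, ← hv]
      exact key F hF u v
    | add a _ b _ ha hb => simpa only [map_add] using Submodule.add_mem _ ha hb
  refine ⟨fun f y hy => ?_, fun f y hy => ?_⟩
  · refine key' ((TensorProduct.lid k H).toLinearMap ∘ₗ f.rTensor H) ?_ y hy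
    intro x _ x' hx' y _ y' hy'
    simpa using Submodule.smul_mem _ _ (Submodule.mul_mem_mul hx' hy')
  · refine key' ((TensorProduct.rid k H).toLinearMap ∘ₗ f.lTensor H) ?_ y hy
    intro x hx x' _ y hy y' _
    simpa using Submodule.smul_mem _ _ (Submodule.mul_mem_mul hx hy)

omit [FiniteDimensional k H] in
lemma IsStable.sr_eq_zero {Y : Submodule k H} (hY : IsStable Y) {f : H →ₗ[k] k}
    (hf : ∀ y ∈ Y, f y = 0) {y : H} (hy : y ∈ Y) : HopfSemisimple.sr f y = 0 := by
  refine eq_of_forall_dual (k := k) fun g => ?_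
  rw [apply_sr, map_zero, hf _ (hY.sl g y hy)]

/-- The restriction of `h ↦ ∑ f(h₂) h₁` to a stable subspace. -/
def IsStable.srOn {Y : Submodule k H} (hY : IsStable Y) (f : H →ₗ[k] k) : Module.End k Y :=
  (HopfSemisimple.sr f).restrict (hY.sr f)

omit [FiniteDimensional k H] in
lemma sr_add (f g : H →ₗ[k] k) (h : H) : sr (f + g) h = sr f h + sr g h := by
  simp [sr_eq_sum, add_smul, Finset.sum_add_distrib]

/-- The regular character of a subcoalgebra. -/
lemma IsStable.exists_char {Y : Submodule k H} (hY : IsStable Y) :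
    ∃ y ∈ Y, (∀ f : H →ₗ[k] k, f y = LinearMap.trace k Y (hY.srOn f)) ∧
      (∀ f : H →ₗ[k] k, HopfSemisimple.sl f y = HopfSemisimple.sr f y) ∧
      counit (R := k) y = Module.finrank k Y := by
  let F : (H →ₗ[k] k) →ₗ[k] k :=
    { toFun := fun f => LinearMap.trace k Y (hY.srOn f)
      map_add' := fun f g => by
        rw [← map_add]; congr 1; ext y; exact sr_add f g y
      map_smul' := fun c f => by
        rw [RingHom.id_apply, ← map_smul]; congr 1; ext y; exact sr_smul c f y }
  obtain ⟨y, hy⟩ := (Module.evalEquiv k H).surjective F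
  have hy' (f : H →ₗ[k] k) : f y = LinearMap.trace k Y (hY.srOn f) := LinearMap.congr_fun hy f
  refine ⟨y, ?_, hy', fun f => ?_, ?_⟩
  · by_contra hyY
    obtain ⟨f, hf, hfY⟩ := Submodule.exists_le_ker_of_notMem hyY
    apply hf
    rw [hy', show hY.srOn f = 0 from ?_, map_zero]
    ext z
    exact hY.sr_eq_zero (fun w hw => hfY hw) z.2
  · refine eq_of_forall_dual (k := k) fun g => ?_
    have h1 (f g : H →ₗ[k] k) : g (HopfSemisimple.sr f y) =
        LinearMap.trace k Y (hY.srOn g * hY.srOn f) := by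
      change (g ∘ₗ HopfSemisimple.sr f) y = _
      rw [hy']
      congr 1
      ext z
      exact (sr_sr g f z).symm
    rw [← apply_sr, h1, h1, LinearMap.trace_mul_comm]
  · rw [hy', show hY.srOn counit = 1 from ?_, LinearMap.trace_one]
    ext z
    exact sr_counit _

end Stable

section Form
variable {k H : Type*} [Field k] [Ring H] [HopfAlgebra k H]

lemma comul_antipode_mul_tmul_one (h : H) :
    ∑ i ∈ (ℛ k h).index, comul (R := k) (antipode k ((ℛ k h).left i)) *
      ((ℛ k h).right i ⊗ₜ[k] 1) = 1 ⊗ₜ antipode k h := by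
  have := coassoc_map ((TensorProduct.comm k H H).toLinearMap ∘ₗ TensorProduct.map (antipode k)
    (LinearMap.mul' k H ∘ₗ (antipode k).rTensor H)) h
  have h1 (t : H ⊗[k] H) (y : H) :
      ((TensorProduct.comm k H H).toLinearMap ∘ₗ TensorProduct.map (antipode k)
        (LinearMap.mul' k H ∘ₗ (antipode k).rTensor H)) (TensorProduct.assoc k H H H (t ⊗ₜ y)) =
      TensorProduct.map (antipode k) (antipode k) (TensorProduct.comm k H H t) * (y ⊗ₜ 1) := by
    induction t with
    | zero => simp
    | tmul p q => simp
    | add p q hp hq => rw [add_tmul, map_add, map_add, hp, hq, map_add, map_add, add_mul]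
  simp only [h1] at this
  simp only [comul_antipode, this]
  simp only [LinearMap.comp_apply, TensorProduct.map_tmul, mul_antipode_rTensor_comul_apply,
    LinearEquiv.coe_coe, TensorProduct.comm_tmul, Algebra.algebraMap_eq_smul_one]
  simp only [← smul_tmul', ← tmul_smul]
  rw [← tmul_sum]
  congr 1
  simp only [← map_smul]
  rw [← map_sum]
  congr 1
  exact (sr_eq_sum _ h).symm.trans (sr_counit h)

lemma sum_right_mul_antipode_left (hS : ∀ h : H, antipode k (antipode k h) = h) (h : H) :
    ∑ i ∈ (ℛ k h).index, (ℛ k h).right i * antipode k ((ℛ k h).left i) =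
      counit (R := k) h • (1 : H) := by
  have := congrArg (antipode k) (sum_mul_antipode (k := k) h)
  simpa [antipode_mul_antidistrib, hS] using this

namespace IsHaar
variable {l : H →ₗ[k] k}

lemma form_comm (hl : IsHaar l) (x h : H) :
    l (x * HopfAlgebra.antipode k h) = l (h * HopfAlgebra.antipode k x) := by
  rw [← hl.antipode (x * _), antipode_mul_antidistrib, hl.antipode_antipode]

lemma sr_fmulR_antipode (hl : IsHaar l) (h x : H) :
    HopfSemisimple.sr (fmulR l (HopfAlgebra.antipode k h)) x =
      HopfSemisimple.sl (fmulL x l ∘ₗ HopfAlgebra.antipode k) h := by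
  let G : H ⊗[k] H →ₗ[k] H := (TensorProduct.rid k H).toLinearMap ∘ₗ l.lTensor H
  have h1 (t : H ⊗[k] H) (y : H) : G (t * (y ⊗ₜ 1)) = G t * y := by
    induction t with
    | zero => simp
    | tmul p q => simp [G]
    | add p q hp hq => rw [add_mul, map_add, map_add, hp, hq, add_mul]
  have h2 (t : H ⊗[k] H) (z : H) : G (t * (1 ⊗ₜ z)) =
      ((TensorProduct.rid k H).toLinearMap ∘ₗ (fmulR l z).lTensor H) t := by
    induction t with
    | zero => simp
    | tmul p q => simp [G]
    | add p q hp hq => rw [add_mul, map_add, map_add, hp, hq]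
  have h3 := congrArg (fun t => G (comul (R := k) x * t)) (comul_antipode_mul_tmul_one (k := k) h)
  simp only [h2, Finset.mul_sum, map_sum, ← mul_assoc, h1, ← Bialgebra.comul_mul] at h3
  rw [sl_eq_sum]
  refine h3.symm.trans (Finset.sum_congr rfl fun i _ => ?_)
  change HopfSemisimple.sr l _ * _ = _
  rw [hl.sr, smul_mul_assoc, one_mul]
  rfl

lemma form_sl (hl : IsHaar l) (f : H →ₗ[k] k) (x h : H) :
    l (HopfSemisimple.sl f x * HopfAlgebra.antipode k h) =
      l (x * HopfAlgebra.antipode k (HopfSemisimple.sr f h)) := by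
  change fmulR l (HopfAlgebra.antipode k h) (HopfSemisimple.sl f x) = _
  rw [← apply_sr, hl.sr_fmulR_antipode, ← apply_sr]
  rfl

lemma form_sr (hl : IsHaar l) (f : H →ₗ[k] k) (x h : H) :
    l (HopfSemisimple.sr f x * HopfAlgebra.antipode k h) =
      l (x * HopfAlgebra.antipode k (HopfSemisimple.sl f h)) := by
  rw [hl.form_comm, ← hl.form_sl, hl.form_comm]

lemma trace_sr [FiniteDimensional k H] (hl : IsHaar l) (h : H) :
    LinearMap.trace k H (HopfSemisimple.sr (fmulR l (HopfAlgebra.antipode k h))) =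
      counit (R := k) h := by
  have h1 : HopfSemisimple.sr (fmulR l (HopfAlgebra.antipode k h)) =
      ∑ i ∈ (ℛ k h).index, (fmulR l (HopfAlgebra.antipode k ((ℛ k h).left i))).smulRight
        ((ℛ k h).right i) := by
    ext x
    rw [hl.sr_fmulR_antipode, sl_eq_sum]
    simp
  rw [h1, map_sum]
  simp only [LinearMap.trace_smulRight, fmulR_apply]
  rw [← map_sum, sum_right_mul_antipode_left hl.antipode_antipode]
  simp [hl.one]

/-- The orthogonal of a subspace for the form `l (x * S h)`. -/
def orth (_ : IsHaar l) (Y : Submodule k H) : Submodule k H where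
  carrier := {x | ∀ h ∈ Y, l (x * HopfAlgebra.antipode k h) = 0}
  add_mem' {a b} ha hb h hh := by rw [add_mul, map_add, ha h hh, hb h hh, add_zero]
  zero_mem' h _ := by simp
  smul_mem' c x hx h hh := by rw [smul_mul_assoc, map_smul, hx h hh, smul_zero]

lemma isStable_orth (hl : IsHaar l) {Y : Submodule k H} (hY : IsStable Y) :
    IsStable (hl.orth Y) where
  sl f x hx h hh := by rw [hl.form_sl]; exact hx _ (hY.sr f h hh)
  sr f x hx h hh := by rw [hl.form_sr]; exact hx _ (hY.sl f h hh)

variable [FiniteDimensional k H]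

/-- The regular character of a stable subspace represents the counit. -/
lemma exists_char (hl : IsHaar l) {Y : Submodule k H} (hY : IsStable Y) :
    ∃ y ∈ Y, (∀ f : H →ₗ[k] k, f y = LinearMap.trace k Y (hY.srOn f)) ∧
      (∀ f : H →ₗ[k] k, HopfSemisimple.sl f y = HopfSemisimple.sr f y) ∧
      counit (R := k) y = Module.finrank k Y ∧
      ∀ h ∈ Y, l (y * HopfAlgebra.antipode k h) = counit (R := k) h := by
  obtain ⟨y, hyY, htr, hcomm, hdim⟩ := hY.exists_char
  refine ⟨y, hyY, htr, hcomm, hdim, fun h hh => ?_⟩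
  have h1 := htr (fmulR l (HopfAlgebra.antipode k h))
  rw [fmulR_apply] at h1
  rw [h1, ← hl.trace_sr h]
  refine LinearMap.trace_restrict_eq_of_forall_mem _ _ (fun x => ?_) _
  rw [hl.sr_fmulR_antipode]
  exact hY.sl _ _ hh

lemma inf_orth (hl : IsHaar l) {Y : Submodule k H} (hY : IsStable Y) : Y ⊓ hl.orth Y = ⊥ := by
  have hZ := hY.inf (hl.isStable_orth hY)
  obtain ⟨z, hz, -, -, -, hz'⟩ := hl.exists_char hZ
  rw [eq_bot_iff]
  intro x hx
  rw [Submodule.mem_bot]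
  refine eq_of_forall_dual (k := k) fun f => ?_
  rw [map_zero, ← counit_sl, ← hz' _ (hZ.sl f x hx)]
  exact hz.2 _ (hZ.sl f x hx).1

lemma isCompl_orth (hl : IsHaar l) {Y : Submodule k H} (hY : IsStable Y) :
    IsCompl Y (hl.orth Y) := by
  let B : LinearMap.BilinForm k H := (LinearMap.mul k H).compr₂ l ∘ₗ LinearMap.id |>.compl₂
    (HopfAlgebra.antipode k)
  have hB (x h : H) : B x h = l (x * HopfAlgebra.antipode k h) := rfl
  have horth : B.orthogonal Y = hl.orth Y := by
    ext x
    simp only [LinearMap.BilinForm.mem_orthogonal_iff, hB]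
    exact forall₂_congr fun h _ => by rw [hl.form_comm]
  rw [← horth]
  have hrefl : B.IsRefl := fun x y h => by rw [hB] at h ⊢; rw [hl.form_comm, h]
  refine (LinearMap.BilinForm.restrict_nondegenerate_iff_isCompl_orthogonal hrefl).1 ?_
  have h0 (x : Y) (hx : ∀ h : Y, B x h = 0) : x = 0 := by
    have : (x : H) ∈ Y ⊓ hl.orth Y := ⟨x.2, fun h hh => hx ⟨h, hh⟩⟩
    rw [hl.inf_orth hY] at this
    exact Subtype.ext this
  exact ⟨h0, fun x hx => h0 x fun h => hrefl _ _ (hx h)⟩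

lemma exists_isSimple (Y : Submodule k H) (hY : IsStable Y) (h0 : Y ≠ ⊥) :
    ∃ D ≤ Y, IsStable D ∧ D ≠ ⊥ ∧ ∀ E ≤ D, IsStable E → E ≠ ⊥ → E = D := by
  obtain ⟨D, hD⟩ := exists_minimal_le_of_wellFoundedLT
    (fun D : Submodule k H => IsStable D ∧ D ≠ ⊥) Y ⟨hY, h0⟩
  exact ⟨D, hD.1, hD.2.prop.1, hD.2.prop.2, fun E hE h1 h2 => hE.antisymm (hD.2.2 ⟨h1, h2⟩ hE)⟩

/-- Cosemisimplicity. -/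
lemma le_sSup_isSimple (hl : IsHaar l) {Y : Submodule k H} (hY : IsStable Y) :
    Y ≤ sSup {D | D ≤ Y ∧ IsStable D ∧ D ≠ ⊥ ∧ ∀ E ≤ D, IsStable E → E ≠ ⊥ → E = D} := by
  set N := sSup {D | D ≤ Y ∧ IsStable D ∧ D ≠ ⊥ ∧ ∀ E ≤ D, IsStable E → E ≠ ⊥ → E = D} with hN
  have hNs : IsStable N := isStable_sSup fun D hD => hD.2.1
  have hNY : N ≤ Y := sSup_le fun D hD => hD.1
  have h0 : Y ⊓ hl.orth N = ⊥ := by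
    by_contra hne
    obtain ⟨D, hD, h1, h2, h3⟩ := exists_isSimple _ (hY.inf (hl.isStable_orth hNs)) hne
    have hDN : D ≤ N := le_sSup ⟨hD.trans inf_le_left, h1, h2, h3⟩
    refine h2 (eq_bot_iff.2 ?_)
    rw [← hl.inf_orth hNs]
    exact le_inf hDN (hD.trans inf_le_right)
  calc Y = (N ⊔ hl.orth N) ⊓ Y := by rw [(hl.isCompl_orth hNs).sup_eq_top, top_inf_eq]
    _ = N ⊔ hl.orth N ⊓ Y := sup_inf_assoc_of_le _ hNY
    _ ≤ N := by rw [inf_comm, h0, sup_bot_eq]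

end IsHaar
end Form

section Cosets
variable {k H : Type*} [Field k] [Ring H] [HopfAlgebra k H]

lemma eq_of_forall_slices [FiniteDimensional k H] {z w : H ⊗[k] H}
    (h : ∀ f g : H →ₗ[k] k, LinearMap.mul' k k (TensorProduct.map f g z) =
      LinearMap.mul' k k (TensorProduct.map f g w)) : z = w := by
  rw [← sub_eq_zero]
  refine eq_zero_of_forall_slice _ fun g => eq_of_forall_dual (k := k) fun f => ?_
  have h1 (t : H ⊗[k] H) : f (TensorProduct.rid k H (g.lTensor H t)) =
      LinearMap.mul' k k (TensorProduct.map f g t) := by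
    induction t with
    | zero => simp
    | tmul a b => simp [mul_comm]
    | add a b ha hb => simp only [map_add, ha, hb]
  rw [h1, map_sub, map_sub, h, sub_self, map_zero]

lemma eq_zero_of_idempotent_of_trace [CharZero k] {V : Type*} [AddCommGroup V] [Module k V]
    [FiniteDimensional k V] {e : Module.End k V} (he : IsIdempotentElem e)
    (ht : LinearMap.trace k V e = 0) : e = 0 :=
  (LinearMap.IsIdempotentElem.trace_eq_zero_iff (e := e) he).1 ht

variable {l : H →ₗ[k] k} [FiniteDimensional k H]

/-- A functional vanishing on a stable subspace `Y` and equal to the counit on its orthogonal. -/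
lemma IsHaar.exists_projection (hl : IsHaar l) {Y : Submodule k H} (hY : IsStable Y) :
    ∃ p : H →ₗ[k] k, (∀ y ∈ Y, p y = 0) ∧ (∀ w ∈ hl.orth Y, p w = counit (R := k) w) ∧
      (∀ x, p (HopfSemisimple.sr p x) = p x) ∧ ∀ x, HopfSemisimple.sr p x = 0 → x ∈ Y := by
  have hc := hl.isCompl_orth hY
  have hW := hl.isStable_orth hY
  let p : H →ₗ[k] k := counit ∘ₗ (hl.orth Y).projection Y hc.symm
  have hpY (y : H) (hy : y ∈ Y) : p y = 0 := by
    simp [p, Submodule.projection_apply_of_mem_right hc.symm hy]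
  have hpW (w : H) (hw : w ∈ hl.orth Y) : p w = counit (R := k) w := by
    simp [p, Submodule.projection_apply_of_mem_left hc.symm hw]
  have h1 (y : H) (hy : y ∈ Y) : HopfSemisimple.sr p y = 0 := hY.sr_eq_zero hpY hy
  have h2 (w : H) (hw : w ∈ hl.orth Y) : HopfSemisimple.sr p w = w := by
    refine eq_of_forall_dual (k := k) fun g => ?_
    rw [apply_sr, hpW _ (hW.sl g w hw), counit_sl]
  have h3 (x : H) : ∃ y ∈ Y, ∃ w ∈ hl.orth Y, y + w = x :=
    Submodule.mem_sup.1 (hc.sup_eq_top ▸ Submodule.mem_top)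
  refine ⟨p, hpY, hpW, fun x => ?_, fun x hx => ?_⟩
  · obtain ⟨y, hy, w, hw, rfl⟩ := h3 x
    rw [map_add, h1 y hy, h2 w hw, zero_add, map_add, hpY y hy, zero_add]
  · obtain ⟨y, hy, w, hw, rfl⟩ := h3 x
    rw [map_add, h1 y hy, h2 w hw, zero_add] at hx
    rwa [hx, add_zero]

/-- If the regular characters of `D` and `C` satisfy `p (d c) = 0` for the functional `p` projecting
onto the complement of `Y`, then `D C ⊆ Y`. -/
lemma mul_mem_of_char [CharZero k] {D C Y : Submodule k H} (hD : IsStable D) (hC : IsStable C)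
    {d c : H} (hd : ∀ f : H →ₗ[k] k, f d = LinearMap.trace k D (hD.srOn f))
    (hc : ∀ f : H →ₗ[k] k, f c = LinearMap.trace k C (hC.srOn f))
    {p : H →ₗ[k] k} (hp : ∀ x, p (sr p x) = p x) (hpY : ∀ x, sr p x = 0 → x ∈ Y)
    (hdc : p (d * c) = 0) : D * C ≤ Y := by
  let b := Module.finBasis k H
  let R : Module.End k (H ⊗[k] H) :=
    ∑ j, TensorProduct.map (sr (fmulR p (b j))) (sr (b.coord j))
  let Q : Module.End k (D ⊗[k] C) :=
    ∑ j, TensorProduct.map (hD.srOn (fmulR p (b j))) (hC.srOn (b.coord j))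
  let ι : D ⊗[k] C →ₗ[k] H ⊗[k] H := TensorProduct.map D.subtype C.subtype
  have hι : Function.Injective ι :=
    TensorProduct.map_injective_of_flat_flat _ _ D.injective_subtype C.injective_subtype
  have hQR (t : D ⊗[k] C) : ι (Q t) = R (ι t) := by
    induction t with
    | zero => simp
    | tmul u v => simp [ι, Q, R, IsStable.srOn]
    | add x y hx hy => simp only [map_add, hx, hy]
  have hsum (u v : H) : ∑ j, p (u * b j) * b.coord j v = p (u * v) := by
    have : p (u * v) = p (u * ∑ j, b.repr v j • b j) := by rw [b.sum_repr]
    rw [this]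
    simp [Finset.mul_sum, -Module.Basis.sum_repr, mul_comm]
  have hform (f g : H →ₗ[k] k) (t : H ⊗[k] H) :
      LinearMap.mul' k k (TensorProduct.map f g (R t)) =
        p (LinearMap.mul' k H (TensorProduct.map (sl f) (sl g) t)) := by
    induction t with
    | zero => simp
    | tmul u v =>
      simp only [R, LinearMap.sum_apply, TensorProduct.map_tmul, map_sum, LinearMap.mul'_apply,
        apply_sr, fmulR_apply, hsum]
    | add x y hx hy => simp only [map_add, hx, hy]
  have hcomm (f g : H →ₗ[k] k) (t : H ⊗[k] H) :
      TensorProduct.map (sl f) (sl g) (R t) = R (TensorProduct.map (sl f) (sl g) t) := by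
    induction t with
    | zero => simp
    | tmul u v =>
      simp only [R, LinearMap.sum_apply, TensorProduct.map_tmul, map_sum, sl_sr_comm]
    | add x y hx hy => simp only [map_add, hx, hy]
  have hmul (t : H ⊗[k] H) : LinearMap.mul' k H (R t) = sr p (LinearMap.mul' k H t) := by
    induction t with
    | zero => simp
    | tmul u v =>
      refine eq_of_forall_dual (k := k) fun f => ?_
      have h1 : sr p (u * v) = ((TensorProduct.rid k H).toLinearMap ∘ₗ p.lTensor H)
          (comul (R := k) u * comul (R := k) v) := by
        rw [sr_apply, Bialgebra.comul_mul]; rfl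
      rw [LinearMap.mul'_apply, h1, comul_eq u, comul_eq v]
      simp only [R, LinearMap.sum_apply, TensorProduct.map_tmul, map_sum, LinearMap.mul'_apply,
        sr_eq_sum, Finset.sum_mul_sum, Algebra.TensorProduct.tmul_mul_tmul, fmulR_apply]
      rw [Finset.sum_comm]
      refine Finset.sum_congr rfl fun i _ => ?_
      rw [Finset.sum_comm]
      refine Finset.sum_congr rfl fun j _ => ?_
      simp only [LinearMap.comp_apply, LinearMap.lTensor_tmul, LinearEquiv.coe_coe,
        TensorProduct.rid_tmul, map_smul, smul_mul_smul_comm, ← Finset.sum_smul, hsum]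
    | add x y hx hy => simp only [map_add, hx, hy]
  have hRR (t : H ⊗[k] H) : R (R t) = R t := by
    refine eq_of_forall_slices fun f g => ?_
    rw [hform, hform, hcomm, hmul, hp]
  have hQQ : IsIdempotentElem Q := LinearMap.ext fun t => hι (by
    rw [Module.End.mul_apply, hQR, hQR, hRR])
  have htr : LinearMap.trace k _ Q = 0 := by
    simp only [Q, map_sum, LinearMap.trace_tensorProduct']
    simp only [← hd, ← hc, fmulR_apply, hsum, hdc]
  have hQ0 : Q = 0 := 
    eq_zero_of_idempotent_of_trace (k := k) (V := D ⊗[k] C) (e := Q) hQQ htr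
  refine Submodule.mul_le.2 fun u hu v hv => hpY _ ?_
  have := hmul (ι ((⟨u, hu⟩ : D) ⊗ₜ (⟨v, hv⟩ : C)))
  rw [← hQR, hQ0] at this
  simpa [ι] using this.symm

variable {K : Subalgebra k H}

lemma IsHaar.cocomm_integral [CharZero k] (hl : IsHaar l) (hK : IsStable K.toSubmodule)
    (hS : ∀ x ∈ K, HopfAlgebra.antipode k x ∈ K) {Λ : H} (hΛ : Λ ∈ K)
    (h1 : counit (R := k) Λ = 1) (hΛl : ∀ x ∈ K, x * Λ = counit (R := k) x • Λ)
    (f : H →ₗ[k] k) : HopfSemisimple.sl f Λ = HopfSemisimple.sr f Λ := by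
  obtain ⟨y, hy, -, hcomm, hdim, hform⟩ := hl.exists_char hK
  have h2 : y * Λ = y := by
    have : y * Λ - y ∈ K.toSubmodule ⊓ hl.orth K.toSubmodule := by
      refine ⟨K.sub_mem (K.mul_mem hy hΛ) hy, fun h hh => ?_⟩
      have h3 : Λ * HopfAlgebra.antipode k h =
          HopfAlgebra.antipode k (h * HopfAlgebra.antipode k Λ) := by
        rw [antipode_mul_antidistrib, hl.antipode_antipode]
      rw [sub_mul, map_sub, mul_assoc, h3, hform _ (K.mul_mem hh (hS _ hΛ)), hform h hh]
      simp [h1]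
    rw [hl.inf_orth hK] at this
    exact sub_eq_zero.1 this
  have hn : (Module.finrank k K.toSubmodule : k) ≠ 0 := by
    rw [Nat.cast_ne_zero]
    have : Nontrivial K.toSubmodule := by
      refine ⟨⟨⟨Λ, hΛ⟩, 0, fun h => ?_⟩⟩
      have h0 : Λ = 0 := congrArg Subtype.val h
      simp [h0] at h1
    exact Module.finrank_pos.ne'
  have h3 : Λ = (Module.finrank k K.toSubmodule : k)⁻¹ • y := by
    rw [eq_inv_smul_iff₀ hn, ← hdim, ← hΛl y hy, h2]
  rw [h3, map_smul, map_smul, hcomm]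

/-- `D C ⊆ C K` as soon as the regular characters satisfy `d c Λ = ε(d) c Λ`. -/
lemma IsHaar.mul_le_coset [CharZero k] (hl : IsHaar l) (hK : IsStable K.toSubmodule)
    (hS : ∀ x ∈ K, HopfAlgebra.antipode k x ∈ K) {Λ : H} (hΛ : Λ ∈ K)
    (h1 : counit (R := k) Λ = 1) {D C : Submodule k H} (hD : IsStable D) (hC : IsStable C)
    (h : ∀ d ∈ D, (∀ f : H →ₗ[k] k, HopfSemisimple.sl f d = HopfSemisimple.sr f d) →
      ∀ c ∈ C, (∀ f : H →ₗ[k] k, HopfSemisimple.sl f c = HopfSemisimple.sr f c) →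
      d * (c * Λ) = counit (R := k) d • (c * Λ)) :
    D * C ≤ C * K.toSubmodule := by
  have hY := hC.mul hK
  obtain ⟨d, hd, htrd, hcd, -⟩ := hD.exists_char
  obtain ⟨c, hc, htrc, hcc, -⟩ := hC.exists_char
  obtain ⟨p, hpY, hpW, hpp, hp0⟩ := hl.exists_projection hY
  have hYK {y a : H} (hy : y ∈ C * K.toSubmodule) (ha : a ∈ K) : y * a ∈ C * K.toSubmodule := by
    have := Submodule.mul_mem_mul hy (show a ∈ K.toSubmodule from ha)
    rwa [mul_assoc, K.isIdempotentElem_toSubmodule] at this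
  have hWK {w a : H} (hw : w ∈ hl.orth (C * K.toSubmodule)) (ha : a ∈ K) :
      w * a ∈ hl.orth (C * K.toSubmodule) := fun y hy => by
    have h3 : a * HopfAlgebra.antipode k y =
        HopfAlgebra.antipode k (y * HopfAlgebra.antipode k a) := by
      rw [antipode_mul_antidistrib, hl.antipode_antipode]
    rw [mul_assoc, h3]
    exact hw _ (hYK hy (hS a ha))
  have hpΛ (x : H) : p (x * Λ) = p x := by
    obtain ⟨y, hy, w, hw, rfl⟩ : ∃ y ∈ C * K.toSubmodule, ∃ w ∈ hl.orth (C * K.toSubmodule),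
      y + w = x := Submodule.mem_sup.1 ((hl.isCompl_orth hY).sup_eq_top ▸ Submodule.mem_top)
    rw [add_mul, map_add, map_add, hpY y hy, hpY _ (hYK hy hΛ), hpW w hw, hpW _ (hWK hw hΛ)]
    simp [h1]
  refine mul_mem_of_char hD hC htrd htrc hpp hp0 ?_
  rw [← hpΛ, mul_assoc, h d hd hcd c hc hcc, map_smul, hpY _ (Submodule.mul_mem_mul hc hΛ),
    smul_zero]

/-- A cocommutative `K`-invariant of `C K` is proportional to the regular character. -/
lemma IsHaar.exists_eq_smul_char [IsAlgClosed k] (hl : IsHaar l) (hK : IsStable K.toSubmodule)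
    (hS : ∀ x ∈ K, HopfAlgebra.antipode k x ∈ K) {C : Submodule k H} (hC : IsStable C)
    (hC0 : C ≠ ⊥) (hCs : ∀ E ≤ C, IsStable E → E ≠ ⊥ → E = C) {y : H}
    (hy : y ∈ C * K.toSubmodule)
    (hyε : ∀ h ∈ C * K.toSubmodule, l (y * HopfAlgebra.antipode k h) = counit (R := k) h) {x : H}
    (hx : x ∈ C * K.toSubmodule)
    (hxc : ∀ f : H →ₗ[k] k, HopfSemisimple.sl f x = HopfSemisimple.sr f x)
    (hxK : ∀ a ∈ K, x * a = counit (R := k) a • x) : ∃ μ : k, x = μ • y := by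
  let z : H →ₗ[k] k := fmulL x l ∘ₗ HopfAlgebra.antipode k
  have hz (h : H) : z h = l (x * HopfAlgebra.antipode k h) := rfl
  have hzc (h : H) : HopfSemisimple.sl z h = HopfSemisimple.sr z h := by
    refine eq_of_forall_dual (k := k) fun g => ?_
    rw [← apply_sr, apply_sr g, hz, hz, ← hl.form_sl, ← hl.form_sr, hxc]
  have : Nontrivial C := Submodule.nontrivial_iff_ne_bot.2 hC0
  obtain ⟨μ, hμ⟩ := Module.End.exists_eigenvalue (hC.srOn z)
  obtain ⟨v, hv, hv0⟩ := hμ.exists_hasEigenvector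
  let E : Submodule k H := C ⊓ LinearMap.ker (HopfSemisimple.sr z - μ • LinearMap.id)
  have hE {u : H} : u ∈ E ↔ u ∈ C ∧ HopfSemisimple.sr z u = μ • u := by
    simp [E, sub_eq_zero]
  have hEs : IsStable E := by
    refine ⟨fun f u hu => ?_, fun f u hu => ?_⟩ <;> rw [hE] at hu ⊢
    · exact ⟨hC.sl f u hu.1, by rw [← sl_sr_comm, hu.2, map_smul]⟩
    · exact ⟨hC.sr f u hu.1, by rw [← hzc, sl_sr_comm, hzc, hu.2, map_smul]⟩
  have hEC : E = C := by
    refine hCs E inf_le_left hEs fun h0 => hv0 (Subtype.ext ?_)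
    have : (v : H) ∈ E :=
      hE.2 ⟨v.2, congrArg Subtype.val (Module.End.mem_eigenspace_iff.1 hv)⟩
    rw [h0] at this
    exact this
  have hzC (u : H) (hu : u ∈ C) : z u = μ * counit (R := k) u := by
    rw [← hEC] at hu
    rw [← counit_sr, (hE.1 hu).2, map_smul, smul_eq_mul]
  have hzY (h : H) (hh : h ∈ C * K.toSubmodule) : z h = μ * counit (R := k) h := by
    induction hh using Submodule.mul_induction_on' with
    | mem_mul_mem u hu a ha =>
      rw [hz, antipode_mul_antidistrib, ← mul_assoc, hxK _ (hS a ha), smul_mul_assoc, map_smul,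
        ← hz, hzC u hu]
      simp
      ring
    | add a _ b _ ha hb => rw [map_add, map_add, ha, hb, mul_add]
  refine ⟨μ, ?_⟩
  have : x - μ • y ∈ C * K.toSubmodule ⊓ hl.orth (C * K.toSubmodule) := by
    refine ⟨Submodule.sub_mem _ hx (Submodule.smul_mem _ _ hy), fun h hh => ?_⟩
    rw [sub_mul, map_sub, smul_mul_assoc, map_smul, hyε h hh, ← hz, hzY h hh, smul_eq_mul, sub_self]
  rw [hl.inf_orth (hC.mul hK)] at this
  exact sub_eq_zero.1 this

end Cosets

end

end HopfSemisimple

namespace MackeyPaper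

open HopfSemisimple

noncomputable section

variable (k : Type) [Field k] [CharZero k] [IsAlgClosed k]
variable (H : Type) [Ring H] [HopfAlgebra k H]

section Statements

variable [FiniteDimensional k H] [IsSemisimpleRing H]

variable {k H} in
omit [CharZero k] [IsAlgClosed k] [IsSemisimpleRing H] in
lemma isSubcoalgebra_iff_isStable {C : Submodule k H} :
    IsSubcoalgebra k H C ↔ IsStable C :=
  ⟨isStable_of_comul_mem, fun h _ hc => h.comul_mem hc⟩

variable {k H} in
omit [CharZero k] [IsAlgClosed k] [IsSemisimpleRing H] in
lemma isSimpleSubcoalgebra_iff {C : Submodule k H} :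
    IsSimpleSubcoalgebra k H C ↔
      IsStable C ∧ C ≠ ⊥ ∧ ∀ E ≤ C, IsStable E → E ≠ ⊥ → E = C := by
  simp only [IsSimpleSubcoalgebra, isSubcoalgebra_iff_isStable]

variable {k H} in
omit [CharZero k] [IsAlgClosed k] [IsSemisimpleRing H] in
lemma isCocomm_iff {x : H} :
    IsCocomm k H x ↔ ∀ f : H →ₗ[k] k, sl f x = sr f x := by
  have h1 (f : H →ₗ[k] k) (t : H ⊗[k] H) : TensorProduct.lid k H (f.rTensor H t) =
      TensorProduct.rid k H (f.lTensor H (TensorProduct.comm k H H t)) := by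
    induction t with
    | zero => simp
    | tmul a b => simp
    | add a b ha hb => simp only [map_add, ha, hb]
  simp only [IsCocomm, sl_apply, sr_apply, h1]
  refine ⟨fun h f => by rw [h], fun h => ?_⟩
  rw [← sub_eq_zero]
  refine eq_zero_of_forall_slice _ fun f => ?_
  rw [map_sub, map_sub, h, sub_self]

variable {k H} in
omit [CharZero k] [IsAlgClosed k] [FiniteDimensional k H] [IsSemisimpleRing H] in
lemma IsCocomm.mul {x y : H} (hx : IsCocomm k H x) (hy : IsCocomm k H y) :
    IsCocomm k H (x * y) := by
  have h (s t : H ⊗[k] H) : TensorProduct.comm k H H (s * t) =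
      TensorProduct.comm k H H s * TensorProduct.comm k H H t :=
    map_mul (Algebra.TensorProduct.comm k H H) s t
  rw [IsCocomm, Bialgebra.comul_mul, h, hx, hy]

variable {k H} in
omit [CharZero k] [IsAlgClosed k] [IsSemisimpleRing H] in
lemma one_mem_conjK (K : Subalgebra k H) (Λ : H) (C : Submodule k H) [Nontrivial H] :
    (1 : H) ∈ conjK k H K Λ C := by
  have h1 : (1 : H) ∈ k ∙ (1 : H) := Submodule.mem_span_singleton_self 1
  refine (le_sSup (a := k ∙ (1 : H)) ?_) h1
  refine ⟨isSimpleSubcoalgebra_iff.2 ⟨⟨?_, ?_⟩, ?_, fun E hE _ hE0 => ?_⟩, ?_⟩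
  · intro f y hy
    obtain ⟨a, rfl⟩ := Submodule.mem_span_singleton.1 hy
    rw [map_smul, IsDualPair.sl_one]
    exact Submodule.smul_mem _ _ (Submodule.smul_mem _ _ h1)
  · intro f y hy
    obtain ⟨a, rfl⟩ := Submodule.mem_span_singleton.1 hy
    rw [map_smul, sr_one]
    exact Submodule.smul_mem _ _ (Submodule.smul_mem _ _ h1)
  · simp
  · exact ((nonzero_span_atom (K := k) (1 : H) one_ne_zero).le_iff.1 hE).resolve_left hE0
  · intro d hd _ c _ _
    obtain ⟨a, rfl⟩ := Submodule.mem_span_singleton.1 hd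
    simp

/-- Proposition 31: `ᶜK·C·K = C·K`, and `ᶜK` is the maximal
Hopf subalgebra of `H` with this property: any Hopf subalgebra `L` of `H`
with `L·C·K = C·K` is contained in `ᶜK`. -/
theorem statement_10 (K : Subalgebra k H) (hK : IsHopfSubalgebra k H K)
    (Λ : H) (hΛ : IsIdempotentIntegral k H K Λ)
    (C : Submodule k H) (hC : IsSimpleSubcoalgebra k H C) :
    conjK k H K Λ C * C * K.toSubmodule = C * K.toSubmodule ∧
    ∀ L : Subalgebra k H, IsHopfSubalgebra k H L →
      L.toSubmodule * C * K.toSubmodule = C * K.toSubmodule →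
      L.toSubmodule ≤ conjK k H K Λ C := by
  obtain ⟨l, hl⟩ := exists_isHaar k H
  obtain ⟨hKs, hKS⟩ := hK
  obtain ⟨hΛK, hΛ1, hΛint⟩ := hΛ
  rw [isSubcoalgebra_iff_isStable] at hKs
  obtain ⟨hCs, hC0, hCmin⟩ := isSimpleSubcoalgebra_iff.1 hC
  have : Nontrivial H := ⟨⟨1, 0, fun h => by simpa [h] using hl.one⟩⟩
  refine ⟨le_antisymm ?_ ?_, fun L hL hLC => ?_⟩
  · have h1 : conjK k H K Λ C * C ≤ C * K.toSubmodule := by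
      rw [conjK, Submodule.mul_le]
      intro x hx c hc
      have : conjK k H K Λ C ≤ (C * K.toSubmodule).comap (LinearMap.mulRight k c) := by
        refine sSup_le fun D hD y hy => ?_
        refine hl.mul_le_coset hKs hKS hΛK hΛ1 (isSimpleSubcoalgebra_iff.1 hD.1).1 hCs
          (fun d hd hd' c hc hc' => ?_) (Submodule.mul_mem_mul hy hc)
        exact hD.2 d hd (isCocomm_iff.2 hd') c hc (isCocomm_iff.2 hc')
      exact this hx
    calc conjK k H K Λ C * C * K.toSubmodule ≤ C * K.toSubmodule * K.toSubmodule :=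
          mul_le_mul_left h1 _
      _ = C * K.toSubmodule := by rw [mul_assoc, K.isIdempotentElem_toSubmodule]
  · refine mul_le_mul_left (fun c hc => ?_) _
    simpa using Submodule.mul_mem_mul (one_mem_conjK K Λ C) hc
  · have hLs := isSubcoalgebra_iff_isStable.1 hL.1
    have hΛc : IsCocomm k H Λ := isCocomm_iff.2
      (hl.cocomm_integral hKs hKS hΛK hΛ1 fun x hx => (hΛint x hx).1)
    refine (hl.le_sSup_isSimple hLs).trans (sSup_le_sSup ?_)
    rintro D ⟨hDL, hDs⟩
    refine ⟨isSimpleSubcoalgebra_iff.2 hDs, fun d hd hdc c hc hcc => ?_⟩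
    obtain ⟨y, hy, -, -, hdim, hyε⟩ := hl.exists_char (hCs.mul hKs)
    have hcΛ : c * Λ ∈ C * K.toSubmodule := Submodule.mul_mem_mul hc hΛK
    have hdcΛ : d * (c * Λ) ∈ C * K.toSubmodule := by
      rw [← hLC, mul_assoc]
      exact Submodule.mul_mem_mul (hDL hd) hcΛ
    have hinv (x a : H) (ha : a ∈ K) :
        x * Λ * a = Coalgebra.counit (R := k) a • (x * Λ) := by
      rw [mul_assoc, (hΛint a ha).2, mul_smul_comm]
    obtain ⟨μ, hμ⟩ := hl.exists_eq_smul_char hKs hKS hCs hC0 hCmin hy hyε hcΛ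
      (isCocomm_iff.1 (hcc.mul hΛc)) (hinv c)
    obtain ⟨ν, hν⟩ := hl.exists_eq_smul_char hKs hKS hCs hC0 hCmin hy hyε hdcΛ
      (isCocomm_iff.1 (hdc.mul (hcc.mul hΛc))) (by rw [← mul_assoc]; exact hinv _)
    have hn : (Module.finrank k ↥(C * K.toSubmodule) : k) ≠ 0 := by
      rw [Nat.cast_ne_zero, Ne, Submodule.finrank_eq_zero]
      refine fun h0 => hC0 (eq_bot_iff.2 fun c hc => ?_)
      rw [← h0]
      simpa using Submodule.mul_mem_mul hc (show (1 : H) ∈ K.toSubmodule from K.one_mem)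
    have h1 := congrArg (Coalgebra.counit (R := k)) hμ
    have h2 := congrArg (Coalgebra.counit (R := k)) hν
    rw [map_smul, hdim, smul_eq_mul] at h1 h2
    rw [Bialgebra.counit_mul, h1, ← mul_assoc] at h2
    rw [hν, hμ, smul_smul, mul_right_cancel₀ hn h2]

end Statements

end

end MackeyPaper
end
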